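/- arXiv:math/0311303 — 3 statements merged into one kernel-verified Lean document; each statement's English description precedes it below -/
import Mathlib

section
/- The Hochschild cohomology HH^k(A^pol_{2n}; (A^pol_{2n})^*), i.e. the cohomology of the K-dual of the normalized Hochschild chain complex of A^pol_{2n}, vanishes for all k ≠ 2n, and for k = 2n it is a free K-module of rank one generated by the class of the cocycle τ_{2n}. -/
noncomputable section
open MvPolynomial MeasureTheory

/-- The ground ring `K = ℂ[ε,ε⁻¹]` of Laurent polynomials in `ε`. -/
abbrev Kc : Type := LaurentPolynomial ℂ

/-- The element `ε ∈ K`. -/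
def eps : Kc := LaurentPolynomial.T 1

/-- The underlying space of the polynomial Weyl algebra `A^pol_{2n}`:
polynomials in the variables `y_1, …, y_{2n}` (with `y_{2r-1} = p_r`, `y_{2r} = q_r`,
`0`-indexed below) over `K`. -/
abbrev Apol (n : ℕ) : Type := MvPolynomial (Fin (2*n)) Kc

/-- The `k`-fold tensor power `A^{⊗k}` of `A = A^pol_{2n}` over `K`, realized as the
polynomial ring in `k` groups of `2n` variables. -/
abbrev Tens (n k : ℕ) : Type := MvPolynomial (Fin k × Fin (2*n)) Kc

/-- index of `p_r` among the variables `y` (0-indexed). -/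
def pVar (n : ℕ) (r : Fin n) : Fin (2*n) := ⟨2*r.1, by have := r.2; omega⟩
/-- index of `q_r` among the variables `y` (0-indexed). -/
def qVar (n : ℕ) (r : Fin n) : Fin (2*n) := ⟨2*r.1+1, by have := r.2; omega⟩

/-- Partial derivative in the variable `y_v` of the `i`-th tensor factor, as a `K`-linear
endomorphism of `A^{⊗k}`. -/
def Dop (n k : ℕ) (i : Fin k) (v : Fin (2*n)) : Module.End Kc (Tens n k) :=
  (pderiv (i, v)).toLinearMap

/-- The operator `α_{ij}` on `A^{⊗k}`:
`α_{ij} = (1/2) ∑_r (∂_{p_r}⊗∂_{q_r} − ∂_{q_r}⊗∂_{p_r})` acting on factors `i` and `j`.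
By construction `α_{ji} = −α_{ij}`. -/
def alphaOp (n k : ℕ) (i j : Fin k) : Module.End Kc (Tens n k) :=
  algebraMap ℂ Kc (1/2) • ∑ r : Fin n,
    (Dop n k i (pVar n r) * Dop n k j (qVar n r) - Dop n k i (qVar n r) * Dop n k j (pVar n r))

/-- The operator `π_{2n}` on `A^{⊗(2n+1)}`:
`π_{2n}(a_0⊗⋯⊗a_{2n}) = ∑_{σ∈S_{2n}} sign(σ) a_0⊗∂_{y_{σ(1)}}a_1⊗⋯⊗∂_{y_{σ(2n)}}a_{2n}`. -/
def piOp (n : ℕ) : Module.End Kc (Tens n (2*n+1)) :=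
  ∑ σ : Equiv.Perm (Fin (2*n)),
    (Equiv.Perm.sign σ : ℤ) •
      (List.ofFn (fun m : Fin (2*n) => Dop n (2*n+1) m.succ (σ m))).prod

/-- Pairs `i < j` in `Fin m`. -/
abbrev Pairs (m : ℕ) : Type := {p : Fin m × Fin m // p.1 < p.2}

/-- The simplex `Δ_m = {0 ≤ u_1 ≤ ⋯ ≤ u_m ≤ 1}` in `ℝ^m`. -/
def simplexSet (m : ℕ) : Set (Fin m → ℝ) :=
  {u | (∀ i, 0 ≤ u i ∧ u i ≤ 1) ∧ ∀ i j : Fin m, i ≤ j → u i ≤ u j}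

/-- Extension of `u : ℝ^m` to `ℝ^{m+1}` by the convention `u_0 = 0`. -/
def cons0 (m : ℕ) (u : Fin m → ℝ) : Fin (m+1) → ℝ := Fin.cons 0 u

/-- The (commuting) product `∏_{i<j} α_{ij}^{K(i,j)}`. -/
def alphaPowProd (n k : ℕ) (K : Pairs k → ℕ) : Module.End Kc (Tens n k) :=
  (Finset.univ.toList.map (fun p : Pairs k => alphaOp n k p.1.1 p.1.2 ^ (K p))).prod

/-- The Hochschild cochain `τ_{2n} : A^{⊗(2n+1)} → K`,
`τ_{2n}(a) = μ_{2n} ∫_{Δ_{2n}} ∏_{0≤i<j≤2n} e^{ε(2u_i−2u_j+1)α_{ij}} π_{2n}(a) du`,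
with the exponentials expanded as (locally finite) Taylor series and integrated term by
term; `μ` takes the product of the constant terms of the factors. -/
def tau (n : ℕ) (a : Tens n (2*n+1)) : Kc :=
  ∑ K ∈ Fintype.piFinset (fun _ : Pairs (2*n+1) => Finset.range (a.totalDegree + 1)),
    (algebraMap ℂ Kc
        ((((∫ u in simplexSet (2*n),
            ∏ p : Pairs (2*n+1),
              (2 * cons0 (2*n) u p.1.1 - 2 * cons0 (2*n) u p.1.2 + 1) ^ (K p)) : ℝ) : ℂ)
          * (∏ p : Pairs (2*n+1), ((K p).factorial : ℂ))⁻¹)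
        * eps ^ (∑ p : Pairs (2*n+1), K p)) •
      constantCoeff (alphaPowProd n (2*n+1) K (piOp n a))

/-- The embedding of `A` as the `i`-th tensor factor of `A^{⊗k}`. -/
def embA (n k : ℕ) (i : Fin k) : Apol n →ₐ[Kc] Tens n k :=
  rename (fun v => (i, v))

/-- The elementary tensor `a_0 ⊗ ⋯ ⊗ a_{k-1} ∈ A^{⊗k}`. -/
def elemT {n k : ℕ} (a : Fin k → Apol n) : Tens n k :=
  ∏ i : Fin k, embA n k i (a i)

/-- `exp(ε f)` applied to `a`, for a locally nilpotent operator `f` that strictly decreases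
total degree (so that the series is finite on every argument). -/
def expEps {n k : ℕ} (f : Module.End Kc (Tens n k)) (a : Tens n k) : Tens n k :=
  ∑ m ∈ Finset.range (a.totalDegree + 1),
    (algebraMap ℂ Kc ((m.factorial : ℂ)⁻¹) * eps ^ m) • (f ^ m) a

/-- The Moyal star product `f ⋆ g = m(exp(εα)(f⊗g))` on `A^pol_{2n}`. -/
def moyal (n : ℕ) (f g : Apol n) : Apol n :=
  aeval (fun v : Fin 2 × Fin (2*n) => (X v.2 : Apol n))
    (expEps (alphaOp n 2 0 1) (elemT ![f, g]))

/-- The bracket `[f,g]_ε = (1/ε)(f⋆g − g⋆f)`. -/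
def brkt (n : ℕ) (f g : Apol n) : Apol n :=
  (LaurentPolynomial.T (-1) : Kc) • (moyal n f g - moyal n g f)

/-- `sp_{2n}`, identified with the space of homogeneous quadratic polynomials in the `y`'s
with complex coefficients, as a ℂ-submodule of `A^pol_{2n}`. -/
def spSub (n : ℕ) : Submodule ℂ (Apol n) :=
  Submodule.span ℂ {f : Apol n | ∃ i j : Fin (2*n), f = X i * X j}


/-- Index map merging tensor factors `j` and `j+1` of `A^{⊗(k+2)}` into factor `j`. -/
def mergeIdx (k : ℕ) (j : Fin (k+1)) (s : Fin (k+2)) : Fin (k+1) :=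
  if h : s.1 ≤ j.1 then ⟨s.1, by have := j.2; omega⟩ else ⟨s.1 - 1, by have := s.2; omega⟩

/-- Index map merging the last tensor factor of `A^{⊗(k+2)}` into factor `0`. -/
def cycIdx (k : ℕ) (s : Fin (k+2)) : Fin (k+1) :=
  if h : s.1 = k+1 then ⟨0, by omega⟩ else ⟨s.1, by have := s.2; omega⟩

/-- `a_0⊗⋯⊗a_{k+1} ↦ a_0⊗⋯⊗(a_j ⋆ a_{j+1})⊗⋯⊗a_{k+1}`: Moyal multiplication of the
adjacent tensor factors `j, j+1` (twist by `exp(εα_{j,j+1})`, then merge the variables). -/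
def mulAt (n k : ℕ) (j : Fin (k+1)) (P : Tens n (k+2)) : Tens n (k+1) :=
  aeval (fun v : Fin (k+2) × Fin (2*n) => (X (mergeIdx k j v.1, v.2) : Tens n (k+1)))
    (expEps (alphaOp n (k+2) j.castSucc j.succ) P)

/-- `a_0⊗⋯⊗a_{k+1} ↦ (a_{k+1} ⋆ a_0)⊗a_1⊗⋯⊗a_k`: Moyal multiplication of the last
factor onto the first. -/
def mulCyc (n k : ℕ) (P : Tens n (k+2)) : Tens n (k+1) :=
  aeval (fun v : Fin (k+2) × Fin (2*n) => (X (cycIdx k v.1, v.2) : Tens n (k+1)))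
    (expEps (alphaOp n (k+2) (Fin.last (k+1)) 0) P)

/-- The Hochschild boundary `d_Hoch : C_{k+1}(A) = A^{⊗(k+2)} → C_k(A) = A^{⊗(k+1)}`. -/
def dH (n k : ℕ) (P : Tens n (k+2)) : Tens n (k+1) :=
  (∑ j : Fin (k+1), ((-1:ℤ)^j.1) • mulAt n k j P) + ((-1:ℤ)^(k+1)) • mulCyc n k P

/-- Substitute `0` for all variables of the tensor factors in `S` (i.e. apply the counit
`a ↦ a(0)` on those factors). -/
def setZeroS (n k : ℕ) (S : Finset (Fin k)) : Tens n k →ₐ[Kc] Tens n k :=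
  aeval (fun v : Fin k × Fin (2*n) => if v.1 ∈ S then 0 else X v)

/-- The projection of `C_k(A) = A^{⊗(k+1)}` onto the normalized subcomplex
`A ⊗ I^{⊗k}` (`I` = augmentation ideal), along the degenerate part; it realizes the
quotient `C̄_k(A) = A⊗(A/K1)^{⊗k}`. -/
def projI (n k : ℕ) (P : Tens n (k+1)) : Tens n (k+1) :=
  ∑ S ∈ (Finset.univ : Finset (Finset (Fin (k+1)))).filter (fun S => (0 : Fin (k+1)) ∉ S),
    ((-1:ℤ)^S.card) • setZeroS n (k+1) S P

/-- `P ∈ A ⊗ I^{⊗k}`, the realization of the normalized chains `C̄_k(A) = A⊗(A/K1)^{⊗k}`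
inside `A^{⊗(k+1)}`: each factor `i ≥ 1` has vanishing constant term. -/
def IsNormT (n k : ℕ) (P : Tens n (k+1)) : Prop :=
  ∀ i : Fin (k+1), i ≠ 0 → setZeroS n (k+1) {i} P = 0


/-- The degeneracy map `A^{⊗k} → A^{⊗(k+1)}` inserting `1` at slot `i`. -/
def degMap (n k : ℕ) (i : Fin (k+1)) : Tens n k →ₐ[Kc] Tens n (k+1) :=
  rename (fun v => (i.succAbove v.1, v.2))

/-- A linear functional on `C_k(A) = A^{⊗(k+1)}` is a normalized cochain (i.e. a functional
on `C̄_k(A) = A⊗(A/K1)^{⊗k}`) if it vanishes on chains with a constant entry in some slot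
`i ≥ 1`. -/
def IsNormC (n k : ℕ) (T : Tens n (k+1) →ₗ[Kc] Kc) : Prop :=
  ∀ i : Fin (k+1), i ≠ 0 → ∀ P : Tens n k, T (degMap n k i P) = 0

/-- `f` is a Hochschild coboundary in degree `k` (of a normalized cochain). -/
def IsHochCobd (n : ℕ) : (k : ℕ) → (Tens n (k+1) → Kc) → Prop
  | 0, f => f = 0
  | (m+1), f => ∃ T : Tens n (m+1) →ₗ[Kc] Kc, IsNormC n m T ∧ ∀ P, f P = T (dH n m P)

/-!
The substitution that turns the Moyal product into the product of polynomials identifies the dual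
of the normalized Hochschild complex of the Weyl algebra with the normalized bar complex of the
polynomial ring `K[X_v]` in `2n` variables, with coefficients in `D = A^*`, on which `X_v` acts by
the transpose of the commutator with a generator. These commuting operators form a regular
sequence on `D`: adjoining the variables one at a time, the cohomology of the bar complex is
computed as for a Koszul complex, so it is concentrated in degree `2n`, where it is the
coinvariant module `D / ∑ X_v D ≅ K`.

After the substitution `τ` becomes a determinant of exponents times a simplex integral, times a
monomial in the bracket operators. It is a cocycle by Laplace expansion of the determinant and a
telescoping identity for the integrals. Pairing with the antisymmetrisation of
`1 ⊗ X_1 ⊗ ⋯ ⊗ X_{2n}` kills coboundaries and takes a unit value on `τ`, so `τ` generates.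
-/

/-! ### The bar complex of a polynomial ring -/

namespace WeylHochschild

section BarComplex

variable {K D σ : Type*} [CommRing K] [AddCommGroup D] [Module K D] {k : ℕ}

/-- Bar cochains of `K[X_v : v ∈ σ]` with values in `D`. A multilinear functional of polynomials
is encoded by its values on tuples of monomials, that is, of exponents. -/
abbrev BarCochain (σ D : Type*) (k : ℕ) : Type _ := (Fin k → σ →₀ ℕ) → D

/-- The cochain `f(X^ν, -, …, -)` obtained by fixing the first argument. -/
def fixHead (K : Type*) [CommRing K] [Module K D] (ν : σ →₀ ℕ) :
    BarCochain σ D (k + 1) →ₗ[K] BarCochain σ D k :=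
  LinearMap.funLeft K D fun g => (Fin.cons ν g : Fin (k + 1) → σ →₀ ℕ)

/-- The action of `X^ν` on cochains through multiplication on the first argument. -/
def shiftHead (K : Type*) [CommRing K] [Module K D] (ν : σ →₀ ℕ) :
    BarCochain σ D (k + 1) →ₗ[K] BarCochain σ D (k + 1) :=
  LinearMap.funLeft K D fun g => (Fin.cons (ν + g 0) (Fin.tail g) : Fin (k + 1) → σ →₀ ℕ)

/-- The bar differential
`(df)(a_0, …, a_k) = ∑_{i<k} (-1)^i f(…, a_i a_{i+1}, …) + (-1)^k a_k • f(a_0, …, a_{k-1})`,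
where polynomials act on `D` through `ρ`; it is defined by recursion on the first argument. -/
def barDiff (ρ : MvPolynomial σ K →ₐ[K] Module.End K D) :
    (k : ℕ) → (BarCochain σ D k →ₗ[K] BarCochain σ D (k + 1))
  | 0 => LinearMap.pi fun g => ρ (monomial (g 0) 1) ∘ₗ LinearMap.proj ![]
  | k + 1 => LinearMap.pi fun g =>
      LinearMap.proj (Fin.tail g) ∘ₗ (shiftHead K (g 0) - barDiff ρ k ∘ₗ fixHead K (g 0))

variable {ρ : MvPolynomial σ K →ₐ[K] Module.End K D}

lemma fixHead_apply (ν : σ →₀ ℕ) (f : BarCochain σ D (k + 1)) (g) :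
    fixHead K ν f g = f (Fin.cons ν g) := rfl

lemma shiftHead_apply (ν : σ →₀ ℕ) (f : BarCochain σ D (k + 1)) (g) :
    shiftHead K ν f g = f (Fin.cons (ν + g 0) (Fin.tail g)) := rfl

lemma fixHead_tail_apply (f : BarCochain σ D (k + 1)) (g) :
    fixHead K (g 0) f (Fin.tail g) = f g := by
  rw [fixHead_apply, Fin.cons_self_tail]

lemma barDiff_zero_apply (f : BarCochain σ D 0) (g) :
    barDiff ρ 0 f g = ρ (monomial (g 0) 1) (f ![]) := rfl

lemma barDiff_succ_apply (f : BarCochain σ D (k + 1)) (g) :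
    barDiff ρ (k + 1) f g =
      shiftHead K (g 0) f (Fin.tail g) - barDiff ρ k (fixHead K (g 0) f) (Fin.tail g) := rfl

lemma fixHead_ext {f g : BarCochain σ D (k + 1)} (h : ∀ ν, fixHead K ν f = fixHead K ν g) :
    f = g := by
  funext x
  rw [← fixHead_tail_apply (K := K) f, h, fixHead_tail_apply]

lemma fixHead_barDiff (ν : σ →₀ ℕ) (f : BarCochain σ D (k + 1)) :
    fixHead K ν (barDiff ρ (k + 1) f) = shiftHead K ν f - barDiff ρ k (fixHead K ν f) := by
  funext g
  rw [fixHead_apply, barDiff_succ_apply, Fin.cons_zero, Fin.tail_cons, Pi.sub_apply]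

lemma fixHead_barDiff_zero (ν : σ →₀ ℕ) (f : BarCochain σ D 0) (g) :
    fixHead K ν (barDiff ρ 0 f) g = ρ (monomial ν 1) (f g) := by
  rw [fixHead_apply, barDiff_zero_apply, Fin.cons_zero, Subsingleton.elim g ![]]

lemma fixHead_shiftHead (μ ν : σ →₀ ℕ) (f : BarCochain σ D (k + 1)) :
    fixHead K μ (shiftHead K ν f) = fixHead K (ν + μ) f := by
  funext g
  rw [fixHead_apply, shiftHead_apply, Fin.cons_zero, Fin.tail_cons, fixHead_apply]

lemma shiftHead_zero (f : BarCochain σ D (k + 1)) : shiftHead K 0 f = f :=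
  fixHead_ext (K := K) fun μ => by rw [fixHead_shiftHead, zero_add]

lemma shiftHead_shiftHead (μ ν : σ →₀ ℕ) (f : BarCochain σ D (k + 1)) :
    shiftHead K μ (shiftHead K ν f) = shiftHead K (ν + μ) f :=
  fixHead_ext (K := K) fun x => by simp only [fixHead_shiftHead, add_assoc]

lemma shiftHead_barDiff (ν : σ →₀ ℕ) (f : BarCochain σ D (k + 1)) :
    shiftHead K ν (barDiff ρ (k + 1) f) = barDiff ρ (k + 1) (shiftHead K ν f) :=
  fixHead_ext (K := K) fun x => by
    simp only [fixHead_shiftHead, fixHead_barDiff, shiftHead_shiftHead]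

theorem barDiff_barDiff : ∀ {k : ℕ} (f : BarCochain σ D k),
    barDiff ρ (k + 1) (barDiff ρ k f) = 0
  | 0, f => fixHead_ext (K := K) fun ν => funext fun g => by
    have hmul : (monomial (ν + g 0) 1 : MvPolynomial σ K) = monomial (g 0) 1 * monomial ν 1 := by
      rw [monomial_mul, add_comm, one_mul]
    rw [fixHead_barDiff, map_zero, Pi.sub_apply, shiftHead_apply, barDiff_zero_apply,
      barDiff_zero_apply, fixHead_barDiff_zero, Fin.cons_zero, hmul, map_mul, Module.End.mul_apply,
      sub_self, Pi.zero_apply]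
  | k + 1, f => fixHead_ext (K := K) fun ν => by
    rw [fixHead_barDiff, fixHead_barDiff, map_sub, barDiff_barDiff, shiftHead_barDiff, sub_zero,
      sub_self, map_zero]

/-- The cochains that vanish as soon as one of their arguments is `1`. -/
def IsNormalized (f : BarCochain σ D k) : Prop := ∀ i g, g i = 0 → f g = 0

lemma IsNormalized.sub {f g : BarCochain σ D k} (hf : IsNormalized f) (hg : IsNormalized g) :
    IsNormalized (f - g) := fun i x hx => by
  rw [Pi.sub_apply, hf i x hx, hg i x hx, sub_zero]

variable (K) in
lemma isNormalized_succ_iff {f : BarCochain σ D (k + 1)} :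
    IsNormalized f ↔ fixHead K 0 f = 0 ∧ ∀ ν, IsNormalized (fixHead K ν f) := by
  refine ⟨fun h => ⟨funext fun g => h 0 _ rfl, fun ν i g hg => h i.succ _ hg⟩, ?_⟩
  rintro ⟨h0, hν⟩ i g
  rw [← fixHead_tail_apply (K := K) f]
  cases i using Fin.cases with
  | zero => exact fun hg => by rw [hg, h0, Pi.zero_apply]
  | succ j => exact hν (g 0) j (Fin.tail g)

lemma isNormalized_fixHead_barDiff : ∀ {k : ℕ} {f : BarCochain σ D (k + 1)},
    (∀ ν, IsNormalized (fixHead K ν f)) →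
      ∀ ν, IsNormalized (fixHead K ν (barDiff ρ (k + 1) f))
  | 0, f, _, ν => by
    refine (isNormalized_succ_iff K).2 ⟨funext fun g => ?_, fun ν i => i.elim0⟩
    rw [fixHead_barDiff, map_sub, fixHead_shiftHead, Pi.sub_apply, fixHead_barDiff_zero, add_zero,
      ← C_apply, C_1, map_one, Module.End.one_apply, sub_self, Pi.zero_apply]
  | k + 1, f, hf, ν => by
    have hsucc := fun ν => (isNormalized_succ_iff K).1 (hf ν)
    refine (isNormalized_succ_iff K).2 ⟨?_, fun μ => ?_⟩
    · rw [fixHead_barDiff, map_sub, fixHead_shiftHead, add_zero, fixHead_barDiff, (hsucc ν).1,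
        map_zero, sub_zero, shiftHead_zero, sub_self]
    · rw [fixHead_barDiff, map_sub, fixHead_shiftHead]
      exact (hf _).sub (isNormalized_fixHead_barDiff (hsucc ν).2 μ)

/-- The normalized `k`-cochains of `K[X_σ]` with values in the coinduced module
`Hom(K[X_v : v ∉ S], D)`, encoded as bar cochains with one more argument, the first one: they are
normalized in the other arguments and vanish when the first involves a variable of `S`. These
complexes interpolate between an acyclic one (`S = ∅`) and the one with coefficients in `D`. -/
def coindCochains (K : Type*) [CommRing K] [Module K D] (S : Finset σ) (k : ℕ) :
    Submodule K (BarCochain σ D (k + 1)) where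
  carrier := {f | (∀ g, (∃ v ∈ S, g 0 v ≠ 0) → f g = 0) ∧
    ∀ i : Fin k, ∀ g, g i.succ = 0 → f g = 0}
  add_mem' {a b} ha hb := ⟨fun g hg => by rw [Pi.add_apply, ha.1 g hg, hb.1 g hg, add_zero],
    fun i g hg => by rw [Pi.add_apply, ha.2 i g hg, hb.2 i g hg, add_zero]⟩
  zero_mem' := ⟨fun _ _ => rfl, fun _ _ _ => rfl⟩
  smul_mem' c a ha := ⟨fun g hg => by rw [Pi.smul_apply, ha.1 g hg, smul_zero],
    fun i g hg => by rw [Pi.smul_apply, ha.2 i g hg, smul_zero]⟩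

section CoindCochains

variable {S : Finset σ} {f : BarCochain σ D (k + 1)} {v : σ}

lemma mem_coindCochains : f ∈ coindCochains K S k ↔
    (∀ g, (∃ v ∈ S, g 0 v ≠ 0) → f g = 0) ∧ ∀ i : Fin k, ∀ g, g i.succ = 0 → f g = 0 :=
  Iff.rfl

lemma mem_coindCochains_iff_fixHead : f ∈ coindCochains K S k ↔
    (∀ ν : σ →₀ ℕ, (∃ v ∈ S, ν v ≠ 0) → fixHead K ν f = 0) ∧
      ∀ ν, IsNormalized (fixHead K ν f) := by
  refine ⟨fun ⟨hS, hn⟩ => ⟨fun ν hν => funext fun g => hS _ hν, fun ν i g hg => hn i _ hg⟩,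
    fun ⟨hS, hn⟩ => ⟨fun g hg => ?_, fun i g hg => ?_⟩⟩
  · rw [← fixHead_tail_apply (K := K) f, hS _ hg, Pi.zero_apply]
  · rw [← fixHead_tail_apply (K := K) f, hn _ i _ hg]

lemma barDiff_mem_coindCochains (hf : f ∈ coindCochains K S k) :
    barDiff ρ (k + 1) f ∈ coindCochains K S (k + 1) := by
  rw [mem_coindCochains_iff_fixHead] at hf ⊢
  refine ⟨fun ν ⟨v, hv, hνv⟩ => ?_, isNormalized_fixHead_barDiff hf.2⟩
  rw [fixHead_barDiff, hf.1 ν ⟨v, hv, hνv⟩, map_zero, sub_zero]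
  refine fixHead_ext (K := K) fun μ => ?_
  rw [fixHead_shiftHead, map_zero, hf.1]
  exact ⟨v, hv, by rw [Finsupp.add_apply]; omega⟩

lemma shiftHead_mem_coindCochains (ν : σ →₀ ℕ) (hf : f ∈ coindCochains K S k) :
    shiftHead K ν f ∈ coindCochains K S k :=
  ⟨fun _ ⟨w, hw, h⟩ => hf.1 _ ⟨w, hw, by simp [h]⟩,
    fun i _ hg => hf.2 i _ hg⟩

/-- The section of the shift by `X_v` that is zero on first arguments not divisible by `X_v`. -/
def unshiftHead (K : Type*) [CommRing K] [Module K D] (v : σ) :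
    BarCochain σ D (k + 1) →ₗ[K] BarCochain σ D (k + 1) where
  toFun f g := if g 0 v = 0 then 0 else
    f (Fin.cons (g 0 - Finsupp.single v 1) (Fin.tail g))
  map_add' a b := by funext g; by_cases h : g 0 v = 0 <;> simp [h]
  map_smul' c a := by funext g; by_cases h : g 0 v = 0 <;> simp [h]

lemma unshiftHead_apply (v : σ) (f : BarCochain σ D (k + 1)) (g) :
    unshiftHead K v f g =
      if g 0 v = 0 then 0 else f (Fin.cons (g 0 - Finsupp.single v 1) (Fin.tail g)) := rfl

lemma shiftHead_unshiftHead (v : σ) (f : BarCochain σ D (k + 1)) :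
    shiftHead K (Finsupp.single v 1) (unshiftHead K v f) = f := by
  funext g
  simp [shiftHead_apply, unshiftHead_apply]

lemma shiftHead_unshiftHead_comm {w : σ} (h : w ≠ v) (f : BarCochain σ D (k + 1)) :
    shiftHead K (Finsupp.single w 1) (unshiftHead K v f) =
      unshiftHead K v (shiftHead K (Finsupp.single w 1) f) := by
  funext g
  have hsub (h0 : g 0 v ≠ 0) : Finsupp.single w 1 + g 0 - Finsupp.single v 1 =
      Finsupp.single w 1 + (g 0 - Finsupp.single v 1) :=
    add_tsub_assoc_of_le (Finsupp.single_le_iff.2 (Nat.one_le_iff_ne_zero.2 h0)) _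
  simp only [shiftHead_apply, unshiftHead_apply, Fin.cons_zero, Fin.tail_cons, Finsupp.add_apply,
    Finsupp.single_eq_of_ne' h, zero_add]
  split_ifs with h0
  · rfl
  · rw [hsub h0]

lemma unshiftHead_mem_coindCochains (hv : v ∉ S) (hf : f ∈ coindCochains K S k) :
    unshiftHead K v f ∈ coindCochains K S k := by
  refine ⟨fun g ⟨w, hw, h⟩ => ?_, fun i g hg => ?_⟩
  · rw [unshiftHead_apply, hf.1 _ ⟨w, hw, ?_⟩, ite_self]
    have hvw : v ≠ w := fun h => hv (h ▸ hw)
    rwa [Fin.cons_zero, Finsupp.tsub_apply, Finsupp.single_eq_of_ne' hvw, tsub_zero]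
  · rw [unshiftHead_apply, hf.2 i (Fin.cons _ (Fin.tail g)) hg, ite_self]

variable [DecidableEq σ]

/-- Together with the surjectivity of the shift by `X_v`, this is the short exact sequence
`0 → C(S ∪ {v}) → C(S) → C(S) → 0` behind the induction on `S`. -/
lemma mem_coindCochains_insert :
    f ∈ coindCochains K (insert v S) k ↔
      f ∈ coindCochains K S k ∧ shiftHead K (Finsupp.single v 1) f = 0 := by
  refine ⟨fun hf => ⟨⟨fun g ⟨w, hw, hg⟩ => hf.1 g ⟨w, Finset.mem_insert_of_mem hw, hg⟩, hf.2⟩,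
    funext fun g => hf.1 _ ⟨v, Finset.mem_insert_self _ _, by simp⟩⟩, fun ⟨hf, hv⟩ =>
    ⟨fun g ⟨w, hw, hg⟩ => ?_, hf.2⟩⟩
  rcases Finset.mem_insert.1 hw with rfl | hw
  · have hle : Finsupp.single w 1 ≤ g 0 := Finsupp.single_le_iff.2 (Nat.one_le_iff_ne_zero.2 hg)
    have hg' := congrFun hv (Fin.cons (g 0 - Finsupp.single w 1) (Fin.tail g))
    rwa [shiftHead_apply, Fin.cons_zero, Fin.tail_cons, add_tsub_cancel_of_le hle,
      Fin.cons_self_tail] at hg'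
  · exact hf.1 g ⟨w, hw, hg⟩

end CoindCochains

/-- The coboundaries of the complex `coindCochains K S`. -/
def coindCoboundaries (ρ : MvPolynomial σ K →ₐ[K] Module.End K D) (S : Finset σ) :
    (k : ℕ) → Submodule K (BarCochain σ D (k + 1))
  | 0 => ⊥
  | k + 1 => (coindCochains K S k).map (barDiff ρ (k + 1))

/-- The cocycles of the complex `coindCochains K S`. -/
def coindCocycles (ρ : MvPolynomial σ K →ₐ[K] Module.End K D) (S : Finset σ) (k : ℕ) :
    Submodule K (BarCochain σ D (k + 1)) :=
  coindCochains K S k ⊓ LinearMap.ker (barDiff ρ (k + 1))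

/-- The submodule `∑_{v ∈ S} X_v D` of `D`. -/
def varImage (ρ : MvPolynomial σ K →ₐ[K] Module.End K D) (S : Finset σ) : Submodule K D :=
  ⨆ v ∈ S, LinearMap.range (ρ (X v))

/-- The cohomology of `coindCochains K S` is concentrated in degree `k`, where `θ` induces an
isomorphism from `D ⧸ varImage ρ S` onto it. -/
structure IsFundamental (ρ : MvPolynomial σ K →ₐ[K] Module.End K D) (S : Finset σ) (k : ℕ)
    (θ : D →ₗ[K] BarCochain σ D (k + 1)) : Prop where
  mem_cocycles : ∀ d, θ d ∈ coindCocycles ρ S k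
  shift : ∀ w ∉ S, ∀ d, shiftHead K (Finsupp.single w 1) (θ d) = θ (ρ (X w) d)
  exists_sub_mem : ∀ f ∈ coindCocycles ρ S k, ∃ d, f - θ d ∈ coindCoboundaries ρ S k
  mem_coboundaries_iff : ∀ d, θ d ∈ coindCoboundaries ρ S k ↔ d ∈ varImage ρ S
  acyclic : ∀ j ≠ k, coindCocycles ρ S j ≤ coindCoboundaries ρ S j

lemma mem_coindCocycles {S : Finset σ} {f : BarCochain σ D (k + 1)} :
    f ∈ coindCocycles ρ S k ↔ f ∈ coindCochains K S k ∧ barDiff ρ (k + 1) f = 0 :=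
  Iff.rfl

section Koszul

variable {S : Finset σ} {v : σ}

lemma shiftHead_mem_coindCoboundaries (v : σ) : ∀ {k : ℕ} {f : BarCochain σ D (k + 1)},
    f ∈ coindCoboundaries ρ S k →
      shiftHead K (Finsupp.single v 1) f ∈ coindCoboundaries ρ S k
  | 0, f, hf => by rw [(Submodule.mem_bot K).1 hf, map_zero]; exact zero_mem _
  | k + 1, _, ⟨a, ha, rfl⟩ =>
    ⟨_, shiftHead_mem_coindCochains _ ha, (shiftHead_barDiff _ a).symm⟩

lemma exists_barDiff_eq_of_shiftHead_mem [DecidableEq σ] (hv : v ∉ S) :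
    ∀ {k : ℕ} {g : BarCochain σ D (k + 1)}, g ∈ coindCochains K S k →
      shiftHead K (Finsupp.single v 1) g ∈ coindCoboundaries ρ S k →
        ∃ g' ∈ coindCochains K (insert v S) k, barDiff ρ (k + 1) g' = barDiff ρ (k + 1) g
  | 0, g, hg, h => ⟨g, mem_coindCochains_insert.2 ⟨hg, (Submodule.mem_bot K).1 h⟩, rfl⟩
  | k + 1, g, hg, ⟨a, ha, h⟩ => by
    refine ⟨g - barDiff ρ (k + 1) (unshiftHead K v a), mem_coindCochains_insert.2 ⟨?_, ?_⟩, ?_⟩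
    · exact sub_mem hg (barDiff_mem_coindCochains (unshiftHead_mem_coindCochains hv ha))
    · rw [map_sub, shiftHead_barDiff, shiftHead_unshiftHead, h, sub_self]
    · rw [map_sub, barDiff_barDiff, sub_zero]

lemma eq_barDiff_fixHead_zero {f : BarCochain σ D (k + 1)} (hf : barDiff ρ (k + 1) f = 0) :
    f = barDiff ρ k (fixHead K 0 f) := by
  have h := fixHead_barDiff (ρ := ρ) 0 f
  rw [hf, map_zero, shiftHead_zero] at h
  exact sub_eq_zero.1 h.symm

lemma isFundamental_empty :
    IsFundamental ρ ∅ 0 (barDiff ρ 0 ∘ₗ LinearMap.pi fun _ => LinearMap.id) where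
  mem_cocycles d := ⟨⟨fun _ ⟨v, hv, _⟩ => absurd hv (Finset.notMem_empty v), fun i => i.elim0⟩,
    barDiff_barDiff _⟩
  shift w _ d := by
    funext g
    change ρ (monomial (Finsupp.single w 1 + g 0) 1) d = ρ (monomial (g 0) 1) (ρ (X w) d)
    rw [← Module.End.mul_apply, ← map_mul, X, monomial_mul, one_mul, add_comm]
  exists_sub_mem f hf := by
    refine ⟨fixHead K 0 f ![], (Submodule.mem_bot K).2 (sub_eq_zero.2 ?_)⟩
    conv_lhs => rw [eq_barDiff_fixHead_zero hf.2]
    rfl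
  mem_coboundaries_iff d := by
    have hθ : barDiff ρ 0 (fun _ => d) (fun _ => 0) = d := by
      rw [barDiff_zero_apply, ← C_apply, C_1, map_one, Module.End.one_apply]
    simp only [varImage, Finset.notMem_empty, not_false_eq_true, iSup_neg, iSup_bot,
      Submodule.mem_bot]
    exact ⟨fun h => hθ.symm.trans (congrFun ((Submodule.mem_bot K).1 h) fun _ => 0),
      fun h => by rw [h, map_zero]; exact zero_mem _⟩
  acyclic j hj f hf := by
    obtain ⟨j, rfl⟩ := Nat.exists_eq_succ_of_ne_zero hj
    refine ⟨fixHead K 0 f, ?_, (eq_barDiff_fixHead_zero hf.2).symm⟩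
    have hn := (mem_coindCochains_iff_fixHead.1 hf.1).2 0
    exact mem_coindCochains_iff_fixHead.2
      ⟨fun _ ⟨v, hv, _⟩ => absurd hv (Finset.notMem_empty v), ((isNormalized_succ_iff K).1 hn).2⟩

variable [DecidableEq σ]

lemma mem_varImage_insert {d : D} :
    d ∈ varImage ρ (insert v S) ↔ ∃ a, ∃ b ∈ varImage ρ S, ρ (X v) a + b = d := by
  simp only [varImage, Finset.iSup_insert, Submodule.mem_sup, LinearMap.mem_range,
    exists_exists_eq_and]

lemma mem_coindCocycles_insert {f : BarCochain σ D (k + 1)} :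
    f ∈ coindCocycles ρ (insert v S) k ↔
      f ∈ coindCocycles ρ S k ∧ shiftHead K (Finsupp.single v 1) f = 0 := by
  rw [mem_coindCocycles, mem_coindCocycles, mem_coindCochains_insert, and_right_comm]

lemma shiftHead_mem_coindCocycles_of_barDiff {g : BarCochain σ D (k + 1)}
    (hg : g ∈ coindCochains K S k)
    (h : barDiff ρ (k + 1) g ∈ coindCocycles ρ (insert v S) (k + 1)) :
    shiftHead K (Finsupp.single v 1) g ∈ coindCocycles ρ S k :=
  mem_coindCocycles.2 ⟨shiftHead_mem_coindCochains _ hg, by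
    rw [← shiftHead_barDiff, (mem_coindCocycles_insert.1 h).2]⟩

namespace IsFundamental

variable {θ : D →ₗ[K] BarCochain σ D (k + 1)}

lemma cocycles_insert_le_coboundaries (hθ : IsFundamental ρ S k θ) (hv : v ∉ S)
    (hreg : ∀ d, ρ (X v) d ∈ varImage ρ S → d ∈ varImage ρ S) {j : ℕ} (hj : j ≠ k + 1) :
    coindCocycles ρ (insert v S) j ≤ coindCoboundaries ρ S j := fun f hf => by
  obtain ⟨hf, hvf⟩ := mem_coindCocycles_insert.1 hf
  obtain rfl | hjk := eq_or_ne j k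
  · obtain ⟨d, hd⟩ := hθ.exists_sub_mem f hf
    have hshift := shiftHead_mem_coindCoboundaries v hd
    rw [map_sub, hvf, zero_sub, hθ.shift v hv, neg_mem_iff, hθ.mem_coboundaries_iff] at hshift
    rw [← sub_add_cancel f (θ d)]
    exact add_mem hd ((hθ.mem_coboundaries_iff d).2 (hreg d hshift))
  · exact hθ.acyclic j hjk hf

lemma acyclic_insert (hθ : IsFundamental ρ S k θ) (hv : v ∉ S)
    (hreg : ∀ d, ρ (X v) d ∈ varImage ρ S → d ∈ varImage ρ S) :
    ∀ j ≠ k + 1, coindCocycles ρ (insert v S) j ≤ coindCoboundaries ρ (insert v S) j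
  | 0, hj => hθ.cocycles_insert_le_coboundaries hv hreg hj
  | j + 1, hj => fun f hf => by
    obtain ⟨g, hg, rfl⟩ := hθ.cocycles_insert_le_coboundaries hv hreg hj hf
    have hshift := hθ.acyclic j (by omega) (shiftHead_mem_coindCocycles_of_barDiff hg hf)
    exact exists_barDiff_eq_of_shiftHead_mem hv hg hshift

lemma exists_sub_mem_insert (hθ : IsFundamental ρ S k θ) (hv : v ∉ S)
    {f : BarCochain σ D (k + 2)} (hf : f ∈ coindCocycles ρ (insert v S) (k + 1)) :
    ∃ d, f - barDiff ρ (k + 1) (unshiftHead K v (θ d)) ∈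
      coindCoboundaries ρ (insert v S) (k + 1) := by
  obtain ⟨g, hg, rfl⟩ := hθ.acyclic (k + 1) (by omega) (mem_coindCocycles_insert.1 hf).1
  obtain ⟨d, hd⟩ := hθ.exists_sub_mem _ (shiftHead_mem_coindCocycles_of_barDiff hg hf)
  refine ⟨d, ?_⟩
  rw [← map_sub]
  refine exists_barDiff_eq_of_shiftHead_mem hv
    (sub_mem hg (unshiftHead_mem_coindCochains hv (hθ.mem_cocycles d).1)) ?_
  rwa [map_sub, shiftHead_unshiftHead]

lemma mem_varImage_insert_of_mem_coboundaries (hθ : IsFundamental ρ S k θ) (hv : v ∉ S) {d : D}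
    (hd : barDiff ρ (k + 1) (unshiftHead K v (θ d)) ∈
      coindCoboundaries ρ (insert v S) (k + 1)) :
    d ∈ varImage ρ (insert v S) := by
  obtain ⟨g, hg, hdg⟩ := hd
  obtain ⟨hgS, hvg⟩ := mem_coindCochains_insert.1 hg
  have hcocycle : unshiftHead K v (θ d) - g ∈ coindCocycles ρ S k :=
    mem_coindCocycles.2 ⟨sub_mem (unshiftHead_mem_coindCochains hv (hθ.mem_cocycles d).1) hgS, by
      rw [map_sub, hdg, sub_self]⟩
  obtain ⟨a, ha⟩ := hθ.exists_sub_mem _ hcocycle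
  have hshift := shiftHead_mem_coindCoboundaries v ha
  rw [map_sub, map_sub, shiftHead_unshiftHead, hvg, sub_zero, hθ.shift v hv, ← map_sub,
    hθ.mem_coboundaries_iff] at hshift
  exact mem_varImage_insert.2 ⟨a, _, hshift, by abel⟩

lemma mem_coboundaries_of_mem_varImage_insert (hθ : IsFundamental ρ S k θ) (hv : v ∉ S) {d : D}
    (hd : d ∈ varImage ρ (insert v S)) :
    barDiff ρ (k + 1) (unshiftHead K v (θ d)) ∈
      coindCoboundaries ρ (insert v S) (k + 1) := by
  obtain ⟨a, b, hb, rfl⟩ := mem_varImage_insert.1 hd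
  rw [map_add, map_add, map_add]
  refine add_mem ?_ ?_
  · -- `unshift (shift (θ a)) - θ a` is a primitive, as it is killed by the shift.
    have ha := hθ.mem_cocycles a
    refine ⟨unshiftHead K v (shiftHead K (Finsupp.single v 1) (θ a)) - θ a,
      mem_coindCochains_insert.2 ⟨sub_mem (unshiftHead_mem_coindCochains hv
        (shiftHead_mem_coindCochains _ ha.1)) ha.1, ?_⟩, ?_⟩
    · rw [map_sub, shiftHead_unshiftHead, sub_self]
    · rw [map_sub, ha.2, sub_zero, hθ.shift v hv]
  · refine exists_barDiff_eq_of_shiftHead_mem hv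
      (unshiftHead_mem_coindCochains hv (hθ.mem_cocycles b).1) ?_
    rw [shiftHead_unshiftHead]
    exact (hθ.mem_coboundaries_iff b).2 hb

theorem insert (hθ : IsFundamental ρ S k θ) (hv : v ∉ S)
    (hreg : ∀ d, ρ (X v) d ∈ varImage ρ S → d ∈ varImage ρ S) :
    IsFundamental ρ (insert v S) (k + 1) (barDiff ρ (k + 1) ∘ₗ unshiftHead K v ∘ₗ θ) where
  mem_cocycles d := by
    have hd := hθ.mem_cocycles d
    refine mem_coindCocycles_insert.2 ⟨⟨barDiff_mem_coindCochains
      (unshiftHead_mem_coindCochains hv hd.1), barDiff_barDiff _⟩, ?_⟩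
    rw [LinearMap.comp_apply, LinearMap.comp_apply, shiftHead_barDiff, shiftHead_unshiftHead, hd.2]
  shift w hw d := by
    obtain ⟨hwv, hwS⟩ := not_or.1 (Finset.mem_insert.not.1 hw)
    simp only [LinearMap.comp_apply, shiftHead_barDiff, shiftHead_unshiftHead_comm hwv,
      hθ.shift w hwS]
  exists_sub_mem _ hf := hθ.exists_sub_mem_insert hv hf
  mem_coboundaries_iff _ := ⟨hθ.mem_varImage_insert_of_mem_coboundaries hv,
    hθ.mem_coboundaries_of_mem_varImage_insert hv⟩
  acyclic := hθ.acyclic_insert hv hreg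

end IsFundamental

end Koszul

theorem exists_isFundamental
    (hreg : ∀ S : Finset σ, ∀ v ∉ S, ∀ d, ρ (X v) d ∈ varImage ρ S → d ∈ varImage ρ S)
    (S : Finset σ) : ∃ θ : D →ₗ[K] BarCochain σ D (S.card + 1), IsFundamental ρ S S.card θ := by
  classical
  induction S using Finset.induction_on with
  | empty => exact ⟨_, isFundamental_empty⟩
  | insert v S hv ih =>
    obtain ⟨θ, hθ⟩ := ih
    rw [Finset.card_insert_of_notMem hv]
    exact ⟨_, hθ.insert hv (hreg S v hv)⟩

end BarComplex

section MergeAlong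

/-- The pushforward of a tuple of exponents along a map of index sets: entries with the same
image are added. -/
def mergeAlong {σ : Type*} {a b : ℕ} (s : Fin a → Fin b) (g : Fin a → σ →₀ ℕ) : Fin b → σ →₀ ℕ :=
  fun t => ∑ i, if s i = t then g i else 0

lemma mergeIdx_eq_predAbove (k : ℕ) (j : Fin (k + 1)) : mergeIdx k j = j.predAbove := by
  funext s
  ext
  simp only [mergeIdx, Fin.predAbove, Fin.lt_def, Fin.val_castSucc]
  split_ifs <;> simp <;> omega

variable {σ : Type*} {k : ℕ}

lemma mergeAlong_mergeIdx_zero (g : Fin (k + 2) → σ →₀ ℕ) :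
    mergeAlong (mergeIdx k 0) g = Fin.cons (g 0 + g 1) (Fin.tail (Fin.tail g)) := by
  funext t
  rw [mergeIdx_eq_predAbove, mergeAlong, Fin.sum_univ_succ]
  cases t using Fin.cases with
  | zero => simp
  | succ t => simp [Fin.tail, (Fin.succ_ne_zero t).symm]

lemma mergeAlong_mergeIdx_succ (j : Fin (k + 1)) (g : Fin (k + 3) → σ →₀ ℕ) :
    mergeAlong (mergeIdx (k + 1) j.succ) g =
      Fin.cons (g 0) (mergeAlong (mergeIdx k j) (Fin.tail g)) := by
  funext t
  simp only [mergeIdx_eq_predAbove, mergeAlong, Fin.sum_univ_succ (n := k + 2)]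
  cases t using Fin.cases with
  | zero => simp
  | succ t => simp [mergeAlong, Fin.tail, (Fin.succ_ne_zero t).symm]

end MergeAlong

lemma barDiff_eq_sum {K D σ : Type*} [CommRing K] [AddCommGroup D] [Module K D]
    (ρ : MvPolynomial σ K →ₐ[K] Module.End K D) (k : ℕ) (f : BarCochain σ D (k + 1))
    (g : Fin (k + 2) → σ →₀ ℕ) :
    barDiff ρ (k + 1) f g =
      (∑ j : Fin (k + 1), ((-1 : ℤ) ^ j.1) • f (mergeAlong (mergeIdx k j) g)) +
        ((-1 : ℤ) ^ (k + 1)) • ρ (monomial (g (Fin.last (k + 1))) 1) (f (Fin.init g)) := by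
  induction k with
  | zero =>
    have hinit : (Fin.cons (g 0) ![] : Fin 1 → σ →₀ ℕ) = Fin.init g := by
      funext i
      rw [Fin.eq_zero i]
      rfl
    rw [barDiff_succ_apply, barDiff_zero_apply, fixHead_apply, hinit, shiftHead_apply]
    simp [mergeAlong_mergeIdx_zero, Fin.tail, sub_eq_add_neg]
  | succ k ih =>
    have hinit : (Fin.cons (g 0) (Fin.init (Fin.tail g)) : Fin (k + 2) → σ →₀ ℕ) = Fin.init g := by
      rw [← Fin.tail_init_eq_init_tail]
      exact Fin.cons_self_tail (Fin.init g)
    rw [barDiff_succ_apply, ih, shiftHead_apply, Fin.sum_univ_succ (n := k + 1)]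
    simp only [fixHead_apply, mergeAlong_mergeIdx_zero, mergeAlong_mergeIdx_succ, hinit,
      Fin.val_zero, pow_zero, one_smul, Fin.val_succ, pow_succ (-1 : ℤ) (_ + 1),
      pow_succ (-1 : ℤ) (Fin.val _), mul_neg_one, neg_smul, Finset.sum_neg_distrib, sub_eq_add_neg,
      neg_add, ← add_assoc]
    rfl

/-! ### Constant-coefficient differential operators and their exponentials -/

section DiffOp

variable {ι R : Type*} [CommRing R]

lemma pderiv_pderiv_comm (i j : ι) (a : MvPolynomial ι R) :
    pderiv i (pderiv j a) = pderiv j (pderiv i a) := by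
  classical
  have h : ⁅(pderiv i : Derivation R (MvPolynomial ι R) (MvPolynomial ι R)),
      (pderiv j : Derivation R (MvPolynomial ι R) (MvPolynomial ι R))⁆ = 0 := by
    ext1 l
    simp [Derivation.commutator_apply, pderiv_X, Pi.single_apply, apply_ite]
  rw [← sub_eq_zero, ← Derivation.commutator_apply, h, Derivation.zero_apply]

lemma pderiv_toLinearMap_commute :
    ∀ a ∈ Set.range fun i : ι => (pderiv (R := R) i).toLinearMap,
    ∀ b ∈ Set.range fun i : ι => (pderiv (R := R) i).toLinearMap, a * b = b * a := by
  rintro _ ⟨i, rfl⟩ _ ⟨j, rfl⟩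
  exact LinearMap.ext (pderiv_pderiv_comm i j)

variable (ι R) in
open scoped IsMulCommutative in
/-- The constant-coefficient differential operator with a given symbol: `X i` acts as `∂/∂X_i`. -/
def diffOp : MvPolynomial ι R →ₐ[R] Module.End R (MvPolynomial ι R) :=
  haveI := Algebra.isMulCommutative_adjoin R (pderiv_toLinearMap_commute (ι := ι) (R := R))
  (Subalgebra.val _).comp
    (aeval (S₁ := Algebra.adjoin R (Set.range fun i : ι => (pderiv (R := R) i).toLinearMap))
      fun i => ⟨_, Algebra.subset_adjoin (Set.mem_range_self i)⟩)

open scoped IsMulCommutative in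
lemma diffOp_X (i : ι) : diffOp ι R (X i) = (pderiv i).toLinearMap := by
  have := Algebra.isMulCommutative_adjoin R (pderiv_toLinearMap_commute (ι := ι) (R := R))
  simp [diffOp]

lemma diffOp_X_apply (i : ι) (a : MvPolynomial ι R) : diffOp ι R (X i) a = pderiv i a := by
  rw [diffOp_X]
  rfl

lemma diffOp_C_apply (c : R) (a : MvPolynomial ι R) : diffOp ι R (C c) a = c • a := by
  rw [← algebraMap_eq, AlgHom.commutes]
  rfl

lemma diffOp_mul_apply (s t a : MvPolynomial ι R) :
    diffOp ι R (s * t) a = diffOp ι R s (diffOp ι R t a) := by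
  rw [map_mul]
  rfl

lemma diffOp_apply_comm (s t a : MvPolynomial ι R) :
    diffOp ι R s (diffOp ι R t a) = diffOp ι R t (diffOp ι R s a) := by
  rw [← diffOp_mul_apply, mul_comm, diffOp_mul_apply]

lemma diffOp_X_mul (s : MvPolynomial ι R) (i : ι) (a : MvPolynomial ι R) :
    diffOp ι R s (X i * a) = X i * diffOp ι R s a + diffOp ι R (pderiv i s) a := by
  classical
  induction s using MvPolynomial.induction_on generalizing a with
  | C c => simp
  | add s t hs ht =>
    simp only [map_add, LinearMap.add_apply, hs, ht]
    ring
  | mul_X s j hs =>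
    have hij : diffOp ι R s (pderiv j (X i) * a) = diffOp ι R (s * pderiv i (X j)) a := by
      rcases eq_or_ne i j with rfl | hij
      · simp
      · simp [pderiv_X_of_ne hij, pderiv_X_of_ne hij.symm]
    simp only [pderiv_mul, map_add, LinearMap.add_apply, diffOp_mul_apply, diffOp_X_apply, hs]
      at hij ⊢
    rw [hij]
    ring

/-- The polynomials of degree less than `N`. -/
def degreeLT (ι R : Type*) [CommRing R] (N : ℕ) : Submodule R (MvPolynomial ι R) :=
  restrictSupport R {m | m.degree < N}

variable {N : ℕ} {a s : MvPolynomial ι R}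

lemma mem_degreeLT : a ∈ degreeLT ι R N ↔ ∀ m ∈ a.support, m.degree < N := by
  rw [degreeLT, mem_restrictSupport_iff]
  rfl

lemma monomial_mem_degreeLT {m : ι →₀ ℕ} (h : m.degree < N) (c : R) :
    monomial m c ∈ degreeLT ι R N :=
  (monomial_mem_restrictSupport R).2 (Or.inl h)

lemma degreeLT_le_iff {W : Submodule R (MvPolynomial ι R)} :
    degreeLT ι R N ≤ W ↔ ∀ m : ι →₀ ℕ, m.degree < N → monomial m 1 ∈ W := by
  rw [degreeLT, restrictSupport_eq_span, Submodule.span_le, Set.image_subset_iff]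
  rfl

lemma degreeLT_zero : degreeLT ι R 0 = ⊥ :=
  le_bot_iff.1 (degreeLT_le_iff.2 fun _ hm => absurd hm (Nat.not_lt_zero _))

lemma degreeLT_mono : Monotone (degreeLT ι R) :=
  fun _ _ h => restrictSupport_mono R fun _ hm => lt_of_lt_of_le hm h

lemma mem_degreeLT_succ_totalDegree (a : MvPolynomial ι R) :
    a ∈ degreeLT ι R (a.totalDegree + 1) :=
  mem_degreeLT.2 fun _ hm => Nat.lt_succ_of_le (le_totalDegree hm)

lemma exists_mem_degreeLT (a b : MvPolynomial ι R) :
    ∃ N, a ∈ degreeLT ι R N ∧ b ∈ degreeLT ι R N :=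
  ⟨_, degreeLT_mono (le_max_left _ _) (mem_degreeLT_succ_totalDegree a),
    degreeLT_mono (le_max_right _ _) (mem_degreeLT_succ_totalDegree b)⟩

lemma pderiv_mem_degreeLT (i : ι) (ha : a ∈ degreeLT ι R (N + 1)) :
    pderiv i a ∈ degreeLT ι R N := by
  suffices h : degreeLT ι R (N + 1) ≤ (degreeLT ι R N).comap (pderiv i).toLinearMap from h ha
  refine degreeLT_le_iff.2 fun m hm => ?_
  change pderiv i (monomial m (1 : R)) ∈ degreeLT ι R N
  rw [pderiv_monomial]
  by_cases h : m i = 0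
  · simp [h]
  · have hle : Finsupp.single i 1 ≤ m := by
      simpa [Finsupp.single_le_iff] using Nat.one_le_iff_ne_zero.2 h
    have hdeg := congrArg Finsupp.degree (tsub_add_cancel_of_le hle)
    rw [map_add, Finsupp.degree_single] at hdeg
    exact monomial_mem_degreeLT (by omega) _

lemma diffOp_mem_degreeLT (s : MvPolynomial ι R) (ha : a ∈ degreeLT ι R N) :
    diffOp ι R s a ∈ degreeLT ι R N := by
  induction s using MvPolynomial.induction_on generalizing a with
  | C c => exact diffOp_C_apply c a ▸ Submodule.smul_mem _ _ ha
  | add s t hs ht => exact map_add (diffOp ι R) s t ▸ Submodule.add_mem _ (hs ha) (ht ha)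
  | mul_X s i hs =>
    rw [diffOp_mul_apply, diffOp_X_apply]
    exact hs (pderiv_mem_degreeLT i (degreeLT_mono N.le_succ ha))

lemma diffOp_sub_constantCoeff_smul_mem_degreeLT (s : MvPolynomial ι R)
    (ha : a ∈ degreeLT ι R (N + 1)) :
    diffOp ι R s a - constantCoeff s • a ∈ degreeLT ι R N := by
  induction s using MvPolynomial.induction_on with
  | C c => simp
  | add s t hs ht =>
    simpa only [map_add, LinearMap.add_apply, add_smul, add_sub_add_comm] using
      Submodule.add_mem _ hs ht
  | mul_X s i =>
    simpa [diffOp_mul_apply, diffOp_X_apply] using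
      diffOp_mem_degreeLT s (pderiv_mem_degreeLT i ha)

lemma diffOp_pow_mem_degreeLT (hs : constantCoeff s = 0) (m : ℕ) (ha : a ∈ degreeLT ι R (N + m)) :
    diffOp ι R (s ^ m) a ∈ degreeLT ι R N := by
  induction m generalizing a with
  | zero => simpa using ha
  | succ m ih =>
    rw [pow_succ, diffOp_mul_apply]
    exact ih (by simpa [hs] using diffOp_sub_constantCoeff_smul_mem_degreeLT s ha)

lemma diffOp_pow_eq_zero (hs : constantCoeff s = 0) {m : ℕ} (h : N ≤ m)
    (ha : a ∈ degreeLT ι R N) : diffOp ι R (s ^ m) a = 0 := by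
  rw [← Submodule.mem_bot R, ← degreeLT_zero]
  exact diffOp_pow_mem_degreeLT hs m (degreeLT_mono (by omega) ha)

lemma diffOp_restrict_pow (hs : constantCoeff s = 0) :
    ((diffOp ι R s).restrict fun _ => diffOp_mem_degreeLT (N := N) s) ^ N = 0 := by
  ext1 a
  rw [Module.End.pow_restrict, ← Subtype.coe_inj, LinearMap.coe_restrict_apply, ← map_pow,
    diffOp_pow_eq_zero hs le_rfl a.2]
  rfl

end DiffOp

section ExpOp

variable {ι R : Type*} [CommRing R] [Algebra ℚ R] {N : ℕ} {a s t : MvPolynomial ι R}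

/-- The truncated exponential series `∑_{m < N} s^m / m!`. -/
def expTrunc (N : ℕ) (s : MvPolynomial ι R) : MvPolynomial ι R :=
  ∑ m ∈ Finset.range N, (m.factorial : ℚ)⁻¹ • s ^ m

lemma diffOp_expTrunc_apply (N : ℕ) (s a : MvPolynomial ι R) :
    diffOp ι R (expTrunc N s) a =
      ∑ m ∈ Finset.range N, (m.factorial : ℚ)⁻¹ • diffOp ι R (s ^ m) a := by
  rw [expTrunc, map_sum, LinearMap.sum_apply]
  refine Finset.sum_congr rfl fun m _ => ?_
  rw [map_rat_smul, LinearMap.smul_apply]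

lemma diffOp_expTrunc_of_le (hs : constantCoeff s = 0) {M : ℕ} (ha : a ∈ degreeLT ι R M)
    (h : M ≤ N) : diffOp ι R (expTrunc N s) a = diffOp ι R (expTrunc M s) a := by
  rw [diffOp_expTrunc_apply, diffOp_expTrunc_apply]
  symm
  refine Finset.sum_subset (Finset.range_mono h) fun m _ hm => ?_
  rw [diffOp_pow_eq_zero hs (by simpa using hm) ha, smul_zero]

lemma pderiv_expTrunc_succ (i : ι) (N : ℕ) (s : MvPolynomial ι R) :
    pderiv i (expTrunc (N + 1) s) = expTrunc N s * pderiv i s := by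
  have hfac (m : ℕ) : ((m + 1).factorial : ℚ)⁻¹ * (m + 1 : ℕ) = (m.factorial : ℚ)⁻¹ := by
    rw [Nat.factorial_succ]
    push_cast
    field_simp
  rw [expTrunc, map_sum, Finset.sum_range_succ', expTrunc, Finset.sum_mul]
  simp only [map_rat_smul, pow_zero, pderiv_one, smul_zero, add_zero]
  refine Finset.sum_congr rfl fun m _ => ?_
  rw [pderiv_pow, Nat.add_sub_cancel, ← hfac m, mul_smul,
    Nat.cast_smul_eq_nsmul, smul_mul_assoc]
  simp only [nsmul_eq_mul, mul_assoc]

/-- The operator `exp(diffOp s)`. The exponential series is locally finite, and this is its sum,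
when `s` has no constant term. -/
def expOp (s : MvPolynomial ι R) : Module.End R (MvPolynomial ι R) :=
  (basisMonomials ι R).constr R fun m => diffOp ι R (expTrunc (m.degree + 1) s) (monomial m 1)

lemma expOp_apply_of_mem_degreeLT (hs : constantCoeff s = 0) (ha : a ∈ degreeLT ι R N) :
    expOp s a = diffOp ι R (expTrunc N s) a := by
  suffices degreeLT ι R N ≤ LinearMap.eqLocus (expOp s) (diffOp ι R (expTrunc N s)) from this ha
  refine degreeLT_le_iff.2 fun m hm => ?_
  have h : expOp s (monomial m 1) = diffOp ι R (expTrunc (m.degree + 1) s) (monomial m 1) := by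
    simpa only [coe_basisMonomials, expOp] using (basisMonomials ι R).constr_basis R _ m
  rw [LinearMap.mem_eqLocus, h,
    diffOp_expTrunc_of_le hs (monomial_mem_degreeLT (Nat.lt_succ_self _) 1) hm]

lemma expOp_apply_of_diffOp_eq_zero (hs : constantCoeff s = 0) (h : diffOp ι R s a = 0) :
    expOp s a = a := by
  rw [expOp_apply_of_mem_degreeLT hs (mem_degreeLT_succ_totalDegree a), diffOp_expTrunc_apply,
    Finset.sum_range_succ']
  simp [pow_succ, h]

lemma expOp_zero_apply (a : MvPolynomial ι R) : expOp 0 a = a :=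
  expOp_apply_of_diffOp_eq_zero (map_zero _) (by simp)

lemma coe_exp_diffOp_restrict (hs : constantCoeff s = 0) (a : degreeLT ι R N) :
    (IsNilpotent.exp ((diffOp ι R s).restrict fun _ => diffOp_mem_degreeLT (N := N) s) a :
      MvPolynomial ι R) = expOp s a := by
  rw [IsNilpotent.exp_eq_sum (diffOp_restrict_pow hs), expOp_apply_of_mem_degreeLT hs a.2,
    diffOp_expTrunc_apply, LinearMap.sum_apply, AddSubmonoidClass.coe_finsetSum]
  refine Finset.sum_congr rfl fun m _ => ?_
  rw [Module.End.pow_restrict, map_pow]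
  rfl

lemma expOp_add_apply (hs : constantCoeff s = 0) (ht : constantCoeff t = 0)
    (a : MvPolynomial ι R) : expOp (s + t) a = expOp s (expOp t a) := by
  obtain ⟨N, ha, -⟩ := exists_mem_degreeLT a 0
  lift a to degreeLT ι R N using ha
  have hadd : (diffOp ι R (s + t)).restrict (fun _ => diffOp_mem_degreeLT (N := N) (s + t)) =
      (diffOp ι R s).restrict (fun _ => diffOp_mem_degreeLT s) +
        (diffOp ι R t).restrict fun _ => diffOp_mem_degreeLT t := by
    ext1 a
    exact Subtype.ext (by simp)
  have hcomm : Commute ((diffOp ι R s).restrict fun _ => diffOp_mem_degreeLT (N := N) s)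
      ((diffOp ι R t).restrict fun _ => diffOp_mem_degreeLT t) :=
    LinearMap.restrict_commute (.map (.all s t) (diffOp ι R)) _ _
  rw [← coe_exp_diffOp_restrict (by simp [hs, ht]), hadd, IsNilpotent.exp_add_of_commute hcomm
    ⟨N, diffOp_restrict_pow hs⟩ ⟨N, diffOp_restrict_pow ht⟩, Module.End.mul_apply,
    coe_exp_diffOp_restrict hs, coe_exp_diffOp_restrict ht]

lemma expOp_diffOp_comm (hs : constantCoeff s = 0) (t a : MvPolynomial ι R) :
    expOp s (diffOp ι R t a) = diffOp ι R t (expOp s a) := by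
  have ha := mem_degreeLT_succ_totalDegree a
  rw [expOp_apply_of_mem_degreeLT hs ha, expOp_apply_of_mem_degreeLT hs (diffOp_mem_degreeLT t ha),
    diffOp_apply_comm]

lemma expOp_sum_apply {κ : Type*} (S : Finset κ) {s : κ → MvPolynomial ι R}
    (hs : ∀ i, constantCoeff (s i) = 0) (ha : a ∈ degreeLT ι R N) :
    expOp (∑ i ∈ S, s i) a = diffOp ι R (∏ i ∈ S, expTrunc N (s i)) a := by
  classical
  induction S using Finset.induction_on with
  | empty => simp [expOp_zero_apply]
  | insert i S hi ih =>
    rw [Finset.sum_insert hi, Finset.prod_insert hi, expOp_add_apply (hs i) (by simp [hs]), ih,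
      diffOp_mul_apply, expOp_apply_of_mem_degreeLT (hs i) (diffOp_mem_degreeLT _ ha)]

lemma expOp_sum_smul_apply {κ : Type*} [Fintype κ] [DecidableEq κ] (c : κ → R)
    {s : κ → MvPolynomial ι R}
    (hs : ∀ i, constantCoeff (s i) = 0) (ha : a ∈ degreeLT ι R N) :
    expOp (∑ i, c i • s i) a = ∑ K ∈ Fintype.piFinset fun _ : κ => Finset.range N,
      ((∏ i, ((K i).factorial : ℚ)⁻¹) • ∏ i, c i ^ K i) • diffOp ι R (∏ i, s i ^ K i) a := by
  classical
  rw [expOp_sum_apply _ (fun i => by rw [constantCoeff_smul, hs, smul_zero]) ha]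
  simp only [expTrunc]
  rw [Finset.prod_univ_sum, map_sum, LinearMap.sum_apply]
  refine Finset.sum_congr rfl fun K _ => ?_
  simp only [Algebra.smul_def, mul_pow, Finset.prod_mul_distrib, algebraMap_eq]
  simp only [← map_pow, ← map_prod, ← C_mul,
    IsScalarTower.algebraMap_apply ℚ R (MvPolynomial ι R), algebraMap_eq, ← mul_assoc]
  rw [diffOp_mul_apply, diffOp_C_apply, smul_eq_C_mul]

lemma expOp_X_mul (hs : constantCoeff s = 0) (i : ι) (a : MvPolynomial ι R) :
    expOp s (X i * a) = X i * expOp s a + diffOp ι R (pderiv i s) (expOp s a) := by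
  obtain ⟨N, ha, hXa⟩ := exists_mem_degreeLT a (X i * a)
  rw [expOp_apply_of_mem_degreeLT hs (degreeLT_mono N.le_succ hXa), diffOp_X_mul,
    pderiv_expTrunc_succ, diffOp_expTrunc_of_le hs ha N.le_succ, mul_comm (expTrunc N s),
    diffOp_mul_apply, ← expOp_apply_of_mem_degreeLT hs ha]

end ExpOp

section Rename

variable {ι κ R : Type*} [CommRing R] [Fintype ι] [DecidableEq κ]

/-- The pullback of symbols along `f : ι → κ`, dual to the chain rule for `rename f`:
`X j ↦ ∑_{f i = j} X i`. -/
def symbolPullback (R : Type*) [CommRing R] (f : ι → κ) : MvPolynomial κ R →ₐ[R] MvPolynomial ι R :=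
  aeval fun j => ∑ i with f i = j, X i

lemma symbolPullback_X (f : ι → κ) (j : κ) : symbolPullback R f (X j) = ∑ i with f i = j, X i := by
  rw [symbolPullback, aeval_X]

lemma symbolPullback_C (f : ι → κ) (c : R) : symbolPullback R f (C c) = C c := by
  rw [symbolPullback, aeval_C, algebraMap_eq]

lemma constantCoeff_symbolPullback (f : ι → κ) (s : MvPolynomial κ R) :
    constantCoeff (symbolPullback R f s) = constantCoeff s := by
  induction s using MvPolynomial.induction_on with
  | C c => rw [symbolPullback_C, constantCoeff_C, constantCoeff_C]
  | add s t hs ht => simp only [map_add, hs, ht]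
  | mul_X s j => simp [symbolPullback_X]

lemma symbolPullback_id [DecidableEq ι] (s : MvPolynomial ι R) : symbolPullback R id s = s := by
  simp [symbolPullback, Finset.filter_eq']

lemma symbolPullback_symbolPullback {μ : Type*} [Fintype κ] [DecidableEq μ] (f : ι → κ) (g : κ → μ)
    (s : MvPolynomial μ R) :
    symbolPullback R f (symbolPullback R g s) = symbolPullback R (g ∘ f) s := by
  induction s using MvPolynomial.induction_on with
  | C c => simp only [symbolPullback_C]
  | add s t hs ht => simp only [map_add, hs, ht]
  | mul_X s j hs =>
    simp only [map_mul, hs, symbolPullback_X, map_sum, Function.comp_apply]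
    rw [← Finset.sum_fiberwise_of_maps_to (g := f) (t := {i | g i = j}) (by simp)]
    refine congrArg _ (Finset.sum_congr rfl fun i hi => Finset.sum_congr ?_ fun _ _ => rfl)
    ext l
    simp only [Finset.mem_filter_univ] at hi ⊢
    grind

lemma pderiv_rename_eq_sum (f : ι → κ) (j : κ) (a : MvPolynomial ι R) :
    pderiv j (rename f a) = rename f (∑ i with f i = j, pderiv i a) := by
  classical
  induction a using MvPolynomial.induction_on with
  | C c => simp
  | add a b ha hb => simp only [map_add, ha, hb, Finset.sum_add_distrib]
  | mul_X a l ha =>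
    simp only [map_mul, pderiv_mul, rename_X, ha, Finset.sum_add_distrib, ← Finset.sum_mul,
      map_add, pderiv_X, Pi.single_apply]
    congr 1
    split_ifs <;> simp_all

lemma diffOp_rename (f : ι → κ) (s : MvPolynomial κ R) (a : MvPolynomial ι R) :
    diffOp κ R s (rename f a) = rename f (diffOp ι R (symbolPullback R f s) a) := by
  induction s using MvPolynomial.induction_on generalizing a with
  | C c => rw [diffOp_C_apply, symbolPullback_C, diffOp_C_apply, map_smul]
  | add s t hs ht => simp only [map_add, LinearMap.add_apply, hs, ht]
  | mul_X s j hs =>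
    rw [diffOp_mul_apply, diffOp_X_apply, pderiv_rename_eq_sum, hs, map_mul, diffOp_mul_apply,
      symbolPullback_X, map_sum (diffOp ι R), LinearMap.sum_apply]
    simp only [diffOp_X_apply]

lemma expOp_rename [Algebra ℚ R] (f : ι → κ) {s : MvPolynomial κ R} (hs : constantCoeff s = 0)
    (a : MvPolynomial ι R) : expOp s (rename f a) = rename f (expOp (symbolPullback R f s) a) := by
  obtain ⟨N, ha, -⟩ := exists_mem_degreeLT a 0
  obtain ⟨M, hb, -⟩ := exists_mem_degreeLT (rename f a) 0
  have hexp : symbolPullback R f (expTrunc (max M N) s) =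
      expTrunc (max M N) (symbolPullback R f s) := by
    simp only [expTrunc, map_sum, map_rat_smul, map_pow]
  rw [expOp_apply_of_mem_degreeLT hs (degreeLT_mono (le_max_left M N) hb), diffOp_rename, hexp,
    expOp_apply_of_mem_degreeLT ((constantCoeff_symbolPullback f s).trans hs)
      (degreeLT_mono (le_max_right M N) ha)]

end Rename

/-! ### The symbols of the Moyal twists -/

section ConjugateVariables

variable {n : ℕ}

/-- The variable canonically conjugate to `y_v`: it exchanges `p_r` and `q_r`. -/
def conjVar (v : Fin (2 * n)) : Fin (2 * n) :=
  ⟨if v.1 % 2 = 0 then v.1 + 1 else v.1 - 1, by split_ifs <;> omega⟩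

/-- The Poisson bracket `{y_v, y_{conjVar v}}`: it is `1` on the `p_r` and `-1` on the `q_r`. -/
def conjSign (v : Fin (2 * n)) : Kc := if v.1 % 2 = 0 then 1 else -1

lemma conjVar_involutive : Function.Involutive (conjVar (n := n)) := by
  intro v
  ext
  simp only [conjVar]
  split_ifs <;> omega

lemma conjSign_conjVar (v : Fin (2 * n)) : conjSign (conjVar v) = -conjSign v := by
  simp only [conjSign, conjVar]
  split_ifs <;> first | omega | simp

lemma conjSign_mul_self (v : Fin (2 * n)) : conjSign v * conjSign v = 1 := by
  unfold conjSign
  split_ifs <;> simp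

lemma sum_pVar_add_qVar {M : Type*} [AddCommMonoid M] (f : Fin (2 * n) → M) :
    ∑ r : Fin n, (f (pVar n r) + f (qVar n r)) = ∑ v, f v := by
  rw [← (finProdFinEquiv.trans (finCongr (mul_comm n 2))).sum_comp, Fintype.sum_prod_type]
  refine Finset.sum_congr rfl fun r _ => ?_
  rw [Fin.sum_univ_two]
  congr 2 <;> ext <;> simp [pVar, qVar, add_comm]

lemma conjVar_pVar (r : Fin n) : conjVar (pVar n r) = qVar n r := by
  ext
  simp [conjVar, pVar, qVar]

lemma conjVar_qVar (r : Fin n) : conjVar (qVar n r) = pVar n r := by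
  rw [← conjVar_pVar, conjVar_involutive]

lemma conjSign_pVar (r : Fin n) : conjSign (pVar n r) = 1 := by
  simp [conjSign, pVar]

lemma conjSign_qVar (r : Fin n) : conjSign (qVar n r) = -1 := by
  rw [← conjVar_pVar, conjSign_conjVar, conjSign_pVar]

end ConjugateVariables

section MoyalSymbol

variable {n k l : ℕ}

/-- The symbol of `ε α_{ij}`. -/
def alphaSymbol (n : ℕ) {k : ℕ} (i j : Fin k) : Tens n k :=
  C (eps * algebraMap ℂ Kc (1 / 2)) *
    ∑ v, C (conjSign v) * (X (i, v) * X (j, conjVar v))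

lemma constantCoeff_alphaSymbol (i j : Fin k) : constantCoeff (alphaSymbol n i j) = 0 := by
  simp [alphaSymbol]

lemma alphaSymbol_swap (i j : Fin k) : alphaSymbol n j i = -alphaSymbol n i j := by
  rw [alphaSymbol, alphaSymbol, ← Equiv.sum_comp conjVar_involutive.toPerm, eq_neg_iff_add_eq_zero,
    ← mul_add, ← Finset.sum_add_distrib, Finset.sum_eq_zero, mul_zero]
  intro v _
  rw [Function.Involutive.coe_toPerm, conjSign_conjVar, conjVar_involutive, C_neg]
  ring

lemma diffOp_alphaSymbol (i j : Fin k) :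
    diffOp _ Kc (alphaSymbol n i j) = eps • alphaOp n k i j := by
  have hsum : diffOp (Fin k × Fin (2 * n)) Kc
      (∑ v, C (conjSign v) * (X (i, v) * X (j, conjVar v))) =
      ∑ r, (Dop n k i (pVar n r) * Dop n k j (qVar n r) -
        Dop n k i (qVar n r) * Dop n k j (pVar n r)) := by
    rw [← sum_pVar_add_qVar, map_sum]
    refine Finset.sum_congr rfl fun r _ => LinearMap.ext fun a => ?_
    simp [conjSign_pVar, conjSign_qVar, conjVar_pVar, conjVar_qVar, diffOp_X_apply,
      Dop, sub_eq_add_neg]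
  rw [alphaSymbol, alphaOp, ← hsum, smul_smul, ← map_smul, smul_eq_C_mul]

lemma expEps_alphaOp (i j : Fin k) (a : Tens n k) :
    expEps (alphaOp n k i j) a = expOp (alphaSymbol n i j) a := by
  rw [expOp_apply_of_mem_degreeLT (constantCoeff_alphaSymbol i j)
    (mem_degreeLT_succ_totalDegree a), diffOp_expTrunc_apply, expEps]
  refine Finset.sum_congr rfl fun m _ => ?_
  have hfac : algebraMap ℂ Kc (m.factorial : ℂ)⁻¹ = algebraMap ℚ Kc (m.factorial : ℚ)⁻¹ := by
    rw [IsScalarTower.algebraMap_apply ℚ ℂ Kc]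
    simp
  rw [map_pow, diffOp_alphaSymbol, smul_pow, LinearMap.smul_apply, mul_smul, hfac,
    algebraMap_smul]

/-- The symbol of `ε ∑ c_{ij} α_{ij}`. -/
def moyalSymbol (n : ℕ) (k : ℕ) : Matrix (Fin k) (Fin k) Kc →ₗ[Kc] Tens n k :=
  ∑ i, ∑ j, (Matrix.entryLinearMap Kc Kc i j).smulRight (alphaSymbol n i j)

lemma moyalSymbol_apply (c : Matrix (Fin k) (Fin k) Kc) :
    moyalSymbol n k c = ∑ i, ∑ j, c i j • alphaSymbol n i j := by
  simp [moyalSymbol, LinearMap.sum_apply]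

lemma moyalSymbol_single (i j : Fin k) :
    moyalSymbol n k (Matrix.single i j 1) = alphaSymbol n i j := by
  simp [moyalSymbol_apply, Matrix.single_apply, ite_and]

lemma constantCoeff_moyalSymbol (c : Matrix (Fin k) (Fin k) Kc) :
    constantCoeff (moyalSymbol n k c) = 0 := by
  simp [moyalSymbol_apply, constantCoeff_alphaSymbol]

lemma moyalSymbol_transpose (c : Matrix (Fin k) (Fin k) Kc) :
    moyalSymbol n k c.transpose = -moyalSymbol n k c := by
  rw [moyalSymbol_apply, moyalSymbol_apply, Finset.sum_comm]
  simp_rw [← Finset.sum_neg_distrib, ← smul_neg]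
  exact Finset.sum_congr rfl fun i _ => Finset.sum_congr rfl fun j _ => by
    rw [alphaSymbol_swap, Matrix.transpose_apply]

lemma moyalSymbol_congr {c d : Matrix (Fin k) (Fin k) Kc}
    (h : ∀ i j, c i j - c j i = d i j - d j i) : moyalSymbol n k c = moyalSymbol n k d := by
  have hsub : c - c.transpose = d - d.transpose := Matrix.ext h
  have := congrArg (moyalSymbol n k) hsub
  rw [map_sub, map_sub, moyalSymbol_transpose, moyalSymbol_transpose, sub_neg_eq_add,
    sub_neg_eq_add, ← two_smul ℚ, ← two_smul ℚ] at this
  exact (isUnit_iff_ne_zero.2 (two_ne_zero (α := ℚ))).smul_left_cancel.1 this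

/-- The map of variables induced by a map of tensor factors. -/
def factorMap (n : ℕ) (f : Fin k → Fin l) : Fin k × Fin (2 * n) → Fin l × Fin (2 * n) :=
  Prod.map f id

lemma symbolPullback_factorMap_X (f : Fin k → Fin l) (i : Fin l) (v : Fin (2 * n)) :
    symbolPullback Kc (factorMap n f) (X (i, v)) = ∑ j with f j = i, X (j, v) := by
  rw [symbolPullback_X, Finset.sum_filter, Finset.sum_filter, Fintype.sum_prod_type]
  refine Finset.sum_congr rfl fun j _ => ?_
  simp [factorMap, ite_and]

lemma symbolPullback_factorMap_alphaSymbol (f : Fin k → Fin l) (i j : Fin l) :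
    symbolPullback Kc (factorMap n f) (alphaSymbol n i j) =
      ∑ a with f a = i, ∑ b with f b = j, alphaSymbol n a b := by
  simp only [alphaSymbol, map_mul _ (C _), map_mul _ (X _), map_sum, symbolPullback_C,
    symbolPullback_factorMap_X, ← Finset.mul_sum, Finset.sum_mul_sum]
  congr 1
  simp only [Finset.mul_sum]
  rw [Finset.sum_comm]
  exact Finset.sum_congr rfl fun a _ => Finset.sum_comm

lemma symbolPullback_factorMap_moyalSymbol (f : Fin k → Fin l) (c : Matrix (Fin l) (Fin l) Kc) :
    symbolPullback Kc (factorMap n f) (moyalSymbol n l c) =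
      moyalSymbol n k (c.submatrix f f) := by
  simp only [moyalSymbol_apply, map_sum, map_smul, symbolPullback_factorMap_alphaSymbol,
    Finset.smul_sum, Matrix.submatrix_apply]
  calc _ = ∑ i, ∑ a with f a = i, ∑ j, ∑ b with f b = j, c (f a) (f b) • alphaSymbol n a b := by
        refine Finset.sum_congr rfl fun i _ => ?_
        rw [Finset.sum_comm]
        refine Finset.sum_congr rfl fun a ha => Finset.sum_congr rfl fun j _ =>
          Finset.sum_congr rfl fun b hb => ?_
        rw [(Finset.mem_filter.1 ha).2, (Finset.mem_filter.1 hb).2]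
    _ = _ := by simp only [Finset.sum_fiberwise]

end MoyalSymbol

section MergeIndices

lemma val_mergeIdx (k : ℕ) (j : Fin (k + 1)) (s : Fin (k + 2)) :
    (mergeIdx k j s).1 = if s.1 ≤ j.1 then s.1 else s.1 - 1 := by
  rw [mergeIdx]
  split_ifs <;> rfl

lemma val_cycIdx (k : ℕ) (s : Fin (k + 2)) :
    (cycIdx k s).1 = if s.1 = k + 1 then 0 else s.1 := by
  rw [cycIdx]
  split_ifs <;> rfl

end MergeIndices

section Twist

variable {n k l : ℕ}

/-- The operator `exp (ε ∑ c_{ij} α_{ij})` on `A^{⊗k}`. -/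
def twist (n : ℕ) (c : Matrix (Fin k) (Fin k) Kc) : Module.End Kc (Tens n k) :=
  expOp (moyalSymbol n k c)

lemma twist_congr {c d : Matrix (Fin k) (Fin k) Kc} (h : ∀ i j, c i j - c j i = d i j - d j i) :
    twist n c = twist n d :=
  congrArg expOp (moyalSymbol_congr h)

lemma twist_add_apply (c d : Matrix (Fin k) (Fin k) Kc) (a : Tens n k) :
    twist n (c + d) a = twist n c (twist n d a) := by
  rw [twist, map_add]
  exact expOp_add_apply (constantCoeff_moyalSymbol c) (constantCoeff_moyalSymbol d) a

lemma twist_zero_apply (a : Tens n k) : twist n 0 a = a := by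
  rw [twist, map_zero, expOp_zero_apply]

lemma twist_rename (f : Fin k → Fin l) (c : Matrix (Fin l) (Fin l) Kc) (a : Tens n k) :
    twist n c (rename (factorMap n f) a) =
      rename (factorMap n f) (twist n (c.submatrix f f) a) := by
  rw [twist, expOp_rename _ (constantCoeff_moyalSymbol c), symbolPullback_factorMap_moyalSymbol]
  rfl

lemma twist_embA (c : Matrix (Fin k) (Fin k) Kc) (i : Fin k) (p : Apol n) :
    twist n c (embA n k i p) = embA n k i p := by
  have hfac : embA n k i p = rename (factorMap n fun _ : Fin 1 => i) (embA n 1 0 p) := by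
    simp only [embA, rename_rename]
    rfl
  have htriv : twist n (c.submatrix (fun _ : Fin 1 => i) fun _ => i) = twist n 0 :=
    twist_congr fun _ _ => by simp
  rw [hfac, twist_rename, htriv, twist_zero_apply]

lemma mulAt_eq_rename_twist (j : Fin (k + 1)) (a : Tens n (k + 2)) :
    mulAt n k j a = rename (factorMap n (mergeIdx k j))
      (twist n (Matrix.single j.castSucc j.succ 1) a) := by
  rw [mulAt, expEps_alphaOp, twist, moyalSymbol_single, rename_eq_aeval]
  rfl

lemma mulCyc_eq_rename_twist (a : Tens n (k + 2)) :
    mulCyc n k a = rename (factorMap n (cycIdx k))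
      (twist n (Matrix.single (Fin.last (k + 1)) 0 1) a) := by
  rw [mulCyc, expEps_alphaOp, twist, moyalSymbol_single, rename_eq_aeval]
  rfl

/-- The coefficients of `∑_{i < j} α_{ij}`. -/
def upperMatrix (k : ℕ) : Matrix (Fin k) (Fin k) Kc :=
  Matrix.of fun i j => if i < j then 1 else 0

/-- The coefficients of `∑_{i, j} 2 w_i α_{ij} = ∑_{i < j} 2 (w_i - w_j) α_{ij}`. -/
def rowMatrix (w : Fin k → Kc) : Matrix (Fin k) (Fin k) Kc :=
  Matrix.of fun i _ => 2 * w i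

lemma rowMatrix_apply (w : Fin k → Kc) (i j : Fin k) : rowMatrix w i j = 2 * w i :=
  rfl

lemma mulAt_twist_upperMatrix (j : Fin (k + 1)) (a : Tens n (k + 2)) :
    mulAt n k j (twist n (-upperMatrix _) a) =
      twist n (-upperMatrix _) (rename (factorMap n (mergeIdx k j)) a) := by
  have hmerge : Matrix.single j.castSucc j.succ 1 + -upperMatrix (k + 2) =
      (-upperMatrix (k + 1)).submatrix (mergeIdx k j) (mergeIdx k j) := by
    ext1 x y
    simp only [Matrix.add_apply, Matrix.neg_apply, Matrix.submatrix_apply, Matrix.single_apply,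
      upperMatrix, Matrix.of_apply, Fin.lt_def, val_mergeIdx, Fin.ext_iff, Fin.val_castSucc,
      Fin.val_succ]
    split_ifs <;> first | omega | simp
  rw [mulAt_eq_rename_twist, twist_rename, ← twist_add_apply, hmerge]

lemma mulCyc_twist_upperMatrix (a : Tens n (k + 2)) :
    mulCyc n k (twist n (-upperMatrix _) a) =
      twist n (-upperMatrix _) (rename (factorMap n (cycIdx k))
        (twist n (rowMatrix (Pi.single (Fin.last (k + 1)) 1)) a)) := by
  have hcyc : twist n (Matrix.single (Fin.last (k + 1)) 0 1 + -upperMatrix (k + 2)) =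
      twist n ((-upperMatrix (k + 1)).submatrix (cycIdx k) (cycIdx k) +
        rowMatrix (Pi.single (Fin.last (k + 1)) 1)) := by
    refine twist_congr fun x y => ?_
    simp only [Matrix.add_apply, Matrix.neg_apply, Matrix.submatrix_apply, Matrix.single_apply,
      upperMatrix, rowMatrix, Matrix.of_apply, Fin.lt_def, val_cycIdx, Fin.ext_iff, Pi.single_apply,
      Fin.val_last, Fin.val_zero]
    split_ifs <;> first | omega | norm_num
  rw [mulCyc_eq_rename_twist, twist_rename, ← twist_add_apply, ← twist_add_apply, hcyc]

end Twist

section BracketSymbol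

variable {n k l : ℕ}

/-- `f ↦ (symbol of) f([y_1, ·]_⋆, …, [y_{2n}, ·]_⋆)`, since `[y_v, ·]_⋆ = ±ε ∂/∂(conjVar v)`. -/
def bracketSymbol (n : ℕ) : Apol n →ₐ[Kc] Apol n :=
  aeval fun v => C (eps * conjSign v) * X (conjVar v)

lemma bracketSymbol_X (v : Fin (2 * n)) :
    bracketSymbol n (X v) = C (eps * conjSign v) * X (conjVar v) := by
  rw [bracketSymbol, aeval_X]

/-- The differential operators of `bracketSymbol`, acting on `A^{⊗k}` by the Leibniz rule. -/
def bracketOp (n k : ℕ) : Apol n →ₐ[Kc] Module.End Kc (Tens n k) :=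
  (diffOp _ Kc).comp ((symbolPullback Kc Prod.snd).comp (bracketSymbol n))

lemma bracketOp_rename_factorMap (f : Fin k → Fin l) (q : Apol n) (a : Tens n k) :
    bracketOp n l q (rename (factorMap n f) a) = rename (factorMap n f) (bracketOp n k q a) := by
  refine (diffOp_rename _ _ _).trans ?_
  rw [AlgHom.coe_toRingHom, AlgHom.comp_apply, symbolPullback_symbolPullback]
  rfl

lemma bracketOp_embA (q : Apol n) (i : Fin k) (p : Apol n) :
    bracketOp n k q (embA n k i p) = embA n k i (diffOp _ Kc (bracketSymbol n q) p) := by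
  refine (diffOp_rename _ _ _).trans ?_
  rw [AlgHom.coe_toRingHom, AlgHom.comp_apply, symbolPullback_symbolPullback]
  exact congrArg (fun s => embA n k i (diffOp _ Kc s p)) (symbolPullback_id _)

lemma pderiv_alphaSymbol (a b i : Fin k) (v : Fin (2 * n)) :
    pderiv (i, v) (alphaSymbol n a b) = C (algebraMap ℂ Kc (1 / 2)) * (C (eps * conjSign v) *
      ((if a = i then X (b, conjVar v) else 0) - if b = i then X (a, conjVar v) else 0)) := by
  have hterm (w : Fin (2 * n)) :
      pderiv (i, v) (C (conjSign w) * (X (a, w) * X (b, conjVar w)) : Tens n k) =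
        (if w = v then if a = i then C (conjSign v) * X (b, conjVar v) else 0 else 0) +
          if w = conjVar v then if b = i then C (-conjSign v) * X (a, conjVar v) else 0 else 0 := by
    rw [pderiv_C_mul, Derivation.leibniz, pderiv_X, pderiv_X, ← conjSign_conjVar]
    simp only [Pi.single_apply, Prod.mk.injEq, conjVar_involutive.eq_iff, smul_eq_mul,
      ite_and]
    rw [mul_add, add_comm]
    congr 1 <;> split_ifs <;> simp_all
  rw [alphaSymbol, pderiv_C_mul, map_sum, Finset.sum_congr rfl fun w _ => hterm w,
    Finset.sum_add_distrib, Finset.sum_ite_eq', Finset.sum_ite_eq', if_pos (Finset.mem_univ _),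
    if_pos (Finset.mem_univ _), C_neg, C_mul, C_mul]
  split_ifs <;> ring

lemma pderiv_moyalSymbol (c : Matrix (Fin k) (Fin k) Kc) (i : Fin k) (v : Fin (2 * n)) :
    pderiv (i, v) (moyalSymbol n k c) = C (algebraMap ℂ Kc (1 / 2)) * (C (eps * conjSign v) *
      ∑ j, (C (c i j) - C (c j i)) * X (j, conjVar v)) := by
  have hterm (a b : Fin k) : pderiv (i, v) (c a b • alphaSymbol n a b) =
      C (algebraMap ℂ Kc (1 / 2)) * (C (eps * conjSign v) *
        ((if a = i then C (c a b) * X (b, conjVar v) else 0) -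
          if b = i then C (c a b) * X (a, conjVar v) else 0)) := by
    rw [Derivation.map_smul, pderiv_alphaSymbol, smul_eq_C_mul]
    split_ifs <;> ring
  simp only [moyalSymbol_apply, map_sum, hterm, ← Finset.mul_sum, Finset.sum_sub_distrib, sub_mul]
  rw [Finset.sum_comm]
  simp only [Finset.sum_ite_eq', Finset.mem_univ, if_true]

lemma pderiv_moyalSymbol_rowMatrix_sub (w : Fin k → Kc) (i j : Fin k) (v : Fin (2 * n)) :
    pderiv (i, v) (moyalSymbol n k (rowMatrix w)) - pderiv (j, v) (moyalSymbol n k (rowMatrix w)) =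
      C (w i - w j) * symbolPullback Kc Prod.snd (bracketSymbol n (X v)) := by
  have htwo : C (algebraMap ℂ Kc (1 / 2)) * 2 = (1 : Tens n k) := by
    rw [← map_ofNat C, ← C_mul, ← map_ofNat (algebraMap ℂ Kc), ← map_mul]
    norm_num
  have hrow (m : Fin k) :
      ∑ j, (C (rowMatrix w m j) - C (rowMatrix w j m)) * X (j, conjVar v) =
        2 * ∑ j, (C (w m) - C (w j)) * (X (j, conjVar v) : Tens n k) := by
    rw [Finset.mul_sum]
    refine Finset.sum_congr rfl fun j _ => ?_
    rw [rowMatrix_apply, rowMatrix_apply, C_mul, C_mul, map_ofNat]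
    ring
  have hpull : symbolPullback Kc Prod.snd (bracketSymbol n (X v)) =
      C (eps * conjSign v) * ∑ m : Fin k, (X (m, conjVar v) : Tens n k) := by
    rw [bracketSymbol_X, map_mul (symbolPullback Kc Prod.snd), symbolPullback_C, symbolPullback_X,
      Finset.sum_filter, Fintype.sum_prod_type]
    simp
  rw [pderiv_moyalSymbol, pderiv_moyalSymbol, hrow, hrow, hpull]
  simp only [sub_mul, Finset.sum_sub_distrib, ← Finset.mul_sum, C_sub]
  linear_combination (C (w i) - C (w j)) * C (eps * conjSign v) *
    (∑ m : Fin k, (X (m, conjVar v) : Tens n k)) * htwo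

end BracketSymbol

section RelativeCoordinates

variable {n k l : ℕ}

/-- The coordinates `y_v^{(i)} - y_v^{(0)}` of the `i`-th tensor factor relative to the `0`-th
factor, assembled into a map `A → A^{⊗(k+1)}`. -/
def relHom (n : ℕ) (i : Fin (k + 1)) : Apol n →ₐ[Kc] Tens n (k + 1) :=
  aeval fun v => X (i, v) - X (0, v)

lemma relHom_X (i : Fin (k + 1)) (v : Fin (2 * n)) :
    relHom n i (X v) = X (i, v) - X (0, v) := by
  rw [relHom, aeval_X]

lemma relHom_zero_monomial {μ : Fin (2 * n) →₀ ℕ} (hμ : μ ≠ 0) :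
    relHom n (0 : Fin (k + 1)) (monomial μ 1) = 0 := by
  obtain ⟨v, hv⟩ := Finsupp.ne_iff.1 hμ
  rw [relHom, aeval_monomial, Finsupp.prod, Finset.prod_eq_zero (Finsupp.mem_support_iff.2 hv),
    mul_zero]
  rw [sub_self, zero_pow hv]

lemma rename_factorMap_relHom {f : Fin (k + 1) → Fin (l + 1)} (hf : f 0 = 0) (i : Fin (k + 1))
    (q : Apol n) : rename (factorMap n f) (relHom n i q) = relHom n (f i) q := by
  suffices h : (rename (factorMap n f)).comp (relHom n i) = relHom n (f i) from
    DFunLike.congr_fun h q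
  ext1 v
  simp [relHom_X, factorMap, hf]

lemma rename_factorMap_embA (f : Fin k → Fin l) (i : Fin k) (p : Apol n) :
    rename (factorMap n f) (embA n k i p) = embA n l (f i) p := by
  rw [embA, rename_rename]
  rfl

lemma twist_rowMatrix_relHom_X_mul (w : Fin (k + 1) → Kc) (i : Fin (k + 1)) (v : Fin (2 * n))
    (a : Tens n (k + 1)) :
    twist n (rowMatrix w) (relHom n i (X v) * a) = relHom n i (X v) * twist n (rowMatrix w) a +
      (w i - w 0) • bracketOp n (k + 1) (X v) (twist n (rowMatrix w) a) := by
  have hc := constantCoeff_moyalSymbol (n := n) (rowMatrix w)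
  have hpderiv := congrArg (fun s => diffOp _ Kc s (twist n (rowMatrix w) a))
    (pderiv_moyalSymbol_rowMatrix_sub w i 0 v)
  simp only [map_sub, LinearMap.sub_apply, diffOp_mul_apply, diffOp_C_apply] at hpderiv
  rw [relHom_X, sub_mul, map_sub, twist, expOp_X_mul hc, expOp_X_mul hc, ← twist,
    add_sub_add_comm, ← sub_mul, hpderiv, sub_smul]
  rfl

lemma twist_rowMatrix_relHom_mul {w : Fin (k + 1) → Kc} {i : Fin (k + 1)} (hi : w i = w 0)
    (q : Apol n) (a : Tens n (k + 1)) :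
    twist n (rowMatrix w) (relHom n i q * a) = relHom n i q * twist n (rowMatrix w) a := by
  induction q using MvPolynomial.induction_on generalizing a with
  | C c => rw [relHom, aeval_C, algebraMap_eq, C_mul', C_mul', map_smul]
  | add p q hp hq => simp only [map_add, add_mul, hp, hq]
  | mul_X q v hq =>
    rw [map_mul (relHom n i), mul_assoc, hq, twist_rowMatrix_relHom_X_mul, hi, sub_self, zero_smul,
      add_zero, mul_assoc]

lemma twist_rowMatrix_prod_relHom_mul {ι : Type*} (S : Finset ι) {e : ι → Fin (k + 1)}
    {w : Fin (k + 1) → Kc} (he : ∀ x, w (e x) = w 0) (q : ι → Apol n) (a : Tens n (k + 1)) :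
    twist n (rowMatrix w) ((∏ x ∈ S, relHom n (e x) (q x)) * a) =
      (∏ x ∈ S, relHom n (e x) (q x)) * twist n (rowMatrix w) a := by
  induction S using Finset.cons_induction with
  | empty => simp
  | cons x S hx ih =>
    rw [Finset.prod_cons, mul_assoc, twist_rowMatrix_relHom_mul (he x), ih, mul_assoc]

lemma rename_twist_rowMatrix_relHom_monomial_mul {f : Fin (k + 1) → Fin (l + 1)} (hf : f 0 = 0)
    {i : Fin (k + 1)} (hi : f i = 0) (w : Fin (k + 1) → Kc) (μ : Fin (2 * n) →₀ ℕ)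
    (a : Tens n (k + 1)) :
    rename (factorMap n f) (twist n (rowMatrix w) (relHom n i (monomial μ 1) * a)) =
      (w i - w 0) ^ μ.degree • bracketOp n (l + 1) (monomial μ 1)
        (rename (factorMap n f) (twist n (rowMatrix w) a)) := by
  have hX (v : Fin (2 * n)) (b : Tens n (k + 1)) :
      rename (factorMap n f) (twist n (rowMatrix w) (relHom n i (X v) * b)) =
        (w i - w 0) • bracketOp n (l + 1) (X v)
          (rename (factorMap n f) (twist n (rowMatrix w) b)) := by
    rw [twist_rowMatrix_relHom_X_mul, map_add, map_mul (rename _), rename_factorMap_relHom hf, hi,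
      relHom_X, sub_self, zero_mul, zero_add, map_smul, bracketOp_rename_factorMap]
  induction μ using Finsupp.induction_linear generalizing a with
  | zero => simp
  | add μ ν hμ hν =>
    rw [← one_mul (1 : Kc), ← monomial_mul, map_mul (relHom n i), mul_assoc, hμ, hν, map_smul,
      smul_smul, ← pow_add, map_add, map_mul (bracketOp n _), Module.End.mul_apply]
  | single v m =>
    rw [← X_pow_eq_monomial, Finsupp.degree_single]
    induction m with
    | zero => simp
    | succ m ih =>
      rw [pow_succ' (X v), map_mul (relHom n i), mul_assoc, hX, ih, map_smul, smul_smul,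
        ← pow_succ', map_mul (bracketOp n _), Module.End.mul_apply]

/-- The chains `p y^{g_0} ⊗ ⋯ ⊗ y^{g_k}`, with all coordinates relative to the `0`-th factor. -/
def relChain (g : Fin (k + 1) → Fin (2 * n) →₀ ℕ) : Apol n →ₗ[Kc] Tens n (k + 1) :=
  LinearMap.mulLeft Kc (∏ i, relHom n i (monomial (g i) 1)) ∘ₗ (embA n (k + 1) 0).toLinearMap

lemma relChain_apply (g : Fin (k + 1) → Fin (2 * n) →₀ ℕ) (p : Apol n) :
    relChain g p = (∏ i, relHom n i (monomial (g i) 1)) * embA n (k + 1) 0 p :=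
  rfl

lemma relChain_eq_zero {g : Fin (k + 1) → Fin (2 * n) →₀ ℕ} (hg : g 0 ≠ 0) :
    relChain g = 0 := by
  rw [relChain, Finset.prod_eq_zero (Finset.mem_univ 0) (relHom_zero_monomial hg),
    LinearMap.mulLeft_zero_eq_zero, LinearMap.zero_comp]

lemma rename_factorMap_relChain {f : Fin (k + 1) → Fin (l + 1)} (hf : f 0 = 0) (p : Apol n)
    (g : Fin (k + 1) → Fin (2 * n) →₀ ℕ) :
    rename (factorMap n f) (relChain g p) = relChain (mergeAlong f g) p := by
  rw [relChain_apply, map_mul, map_prod, rename_factorMap_embA, hf, relChain_apply,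
    ← Finset.prod_fiberwise Finset.univ f]
  refine congrArg (· * _) (Finset.prod_congr rfl fun j _ => ?_)
  rw [mergeAlong, ← Finset.sum_filter, monomial_sum_one, map_prod]
  refine Finset.prod_congr rfl fun i hi => ?_
  rw [rename_factorMap_relHom hf, (Finset.mem_filter.1 hi).2]

/-- The chains in terms of which the Hochschild differential becomes that of the bar complex of a
polynomial ring. -/
def barChain (g : Fin (k + 1) → Fin (2 * n) →₀ ℕ) : Apol n →ₗ[Kc] Tens n (k + 1) :=
  twist n (-upperMatrix (k + 1)) ∘ₗ relChain g

lemma barChain_apply (g : Fin (k + 1) → Fin (2 * n) →₀ ℕ) (p : Apol n) :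
    barChain g p = twist n (-upperMatrix (k + 1)) (relChain g p) :=
  rfl

lemma barChain_eq_zero {g : Fin (k + 1) → Fin (2 * n) →₀ ℕ} (hg : g 0 ≠ 0) :
    barChain g = 0 := by
  rw [barChain, relChain_eq_zero hg, LinearMap.comp_zero]

lemma mulAt_barChain (j : Fin (k + 1)) (p : Apol n) (g : Fin (k + 2) → Fin (2 * n) →₀ ℕ) :
    mulAt n k j (barChain g p) = barChain (mergeAlong (mergeIdx k j) g) p := by
  rw [barChain_apply, mulAt_twist_upperMatrix, rename_factorMap_relChain, barChain_apply]
  rfl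

lemma mulCyc_barChain (p : Apol n) (g : Fin (k + 2) → Fin (2 * n) →₀ ℕ) :
    mulCyc n k (barChain g p) =
      barChain (Fin.init g)
        (diffOp _ Kc (bracketSymbol n (monomial (g (Fin.last (k + 1))) 1)) p) := by
  set w : Fin (k + 2) → Kc := Pi.single (Fin.last (k + 1)) 1 with hw
  have hw0 : w 0 = 0 := Pi.single_eq_of_ne Fin.last_pos.ne 1
  have hwcast (i : Fin (k + 1)) : w i.castSucc = w 0 := by
    rw [hw0, hw, Pi.single_eq_of_ne (Fin.castSucc_lt_last i).ne]
  have hwlast : w (Fin.last (k + 1)) = 1 := Pi.single_eq_same _ _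
  have hcyc0 : cycIdx k 0 = 0 := Fin.ext <| by simp [val_cycIdx]
  have hcyclast : cycIdx k (Fin.last (k + 1)) = 0 := Fin.ext <| by simp [val_cycIdx]
  have hcyccast (i : Fin (k + 1)) : cycIdx k i.castSucc = i :=
    Fin.ext <| by simp [val_cycIdx, i.2.ne]
  rw [barChain_apply, mulCyc_twist_upperMatrix, ← hw, relChain_apply,
    Fin.prod_univ_castSucc, mul_assoc, twist_rowMatrix_prod_relHom_mul _ hwcast,
    map_mul (rename _), map_prod,
    rename_twist_rowMatrix_relHom_monomial_mul hcyc0 hcyclast, hw0, hwlast, sub_zero, one_pow,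
    one_smul, twist_embA, rename_factorMap_embA, hcyc0, bracketOp_embA]
  simp only [rename_factorMap_relHom hcyc0, hcyccast]
  rfl

lemma dH_barChain (p : Apol n) (g : Fin (k + 2) → Fin (2 * n) →₀ ℕ) :
    dH n k (barChain g p) =
      (∑ j : Fin (k + 1), ((-1 : ℤ) ^ j.1) • barChain (mergeAlong (mergeIdx k j) g) p) +
        ((-1 : ℤ) ^ (k + 1)) •
          barChain (Fin.init g)
            (diffOp _ Kc (bracketSymbol n (monomial (g (Fin.last (k + 1))) 1)) p) := by
  simp only [dH, mulAt_barChain, mulCyc_barChain]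

lemma degMap_barChain (i : Fin (k + 2)) (hi : i ≠ 0) (p : Apol n)
    (g : Fin (k + 1) → Fin (2 * n) →₀ ℕ) :
    degMap n (k + 1) i (barChain g p) = barChain (mergeAlong i.succAbove g) p := by
  have hupper : -upperMatrix (k + 1) =
      (-upperMatrix (k + 2)).submatrix i.succAbove i.succAbove := by
    ext1 x y
    simp [upperMatrix, Fin.succAbove_lt_succAbove_iff]
  have hzero : i.succAbove 0 = 0 := Fin.succAbove_ne_zero_zero hi
  rw [barChain_apply, barChain_apply, ← rename_factorMap_relChain hzero, twist_rename, ← hupper]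
  rfl

end RelativeCoordinates

section BarBasis

variable {n k : ℕ}

lemma monomial_eq_prod_embA (m : Fin k × Fin (2 * n) →₀ ℕ) :
    (monomial m 1 : Tens n k) = ∏ i, embA n k i (monomial (m.curry i) 1) := by
  have hemb (i : Fin k) :
      embA n k i (monomial (m.curry i) 1) = ∏ v, (X (i, v) : Tens n k) ^ m (i, v) := by
    rw [monomial_eq, C_1, one_mul, Finsupp.prod_fintype _ _ fun _ => pow_zero _, map_prod]
    exact Finset.prod_congr rfl fun v _ => by rw [map_pow, embA, rename_X, Finsupp.curry_apply]
  rw [monomial_eq, C_1, one_mul, Finsupp.prod_fintype _ _ fun _ => pow_zero _,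
    Fintype.prod_prod_type]
  exact Finset.prod_congr rfl fun i _ => (hemb i).symm

/-- The change of variables from `y^{(i)}` to `y^{(0)}, y^{(i)} - y^{(0)}`, `i ≥ 1`. -/
def shear (n k : ℕ) : Tens n (k + 1) ≃ₐ[Kc] Tens n (k + 1) :=
  AlgEquiv.ofAlgHom
    (aeval fun x => X x - if x.1 = 0 then 0 else X (0, x.2))
    (aeval fun x => X x + if x.1 = 0 then 0 else X (0, x.2))
    (by ext1 ⟨i, v⟩; by_cases hi : i = 0 <;> simp [hi])
    (by ext1 ⟨i, v⟩; by_cases hi : i = 0 <;> simp [hi])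

lemma shear_X (i : Fin (k + 1)) (v : Fin (2 * n)) :
    shear n k (X (i, v)) = X (i, v) - if i = 0 then 0 else X (0, v) :=
  aeval_X _ _

lemma shear_embA_zero (q : Apol n) :
    shear n k (embA n (k + 1) 0 q) = embA n (k + 1) 0 q := by
  suffices h : (shear n k).toAlgHom.comp (embA n (k + 1) 0) = embA n (k + 1) 0 from
    DFunLike.congr_fun h q
  ext1 v
  simp [embA, shear_X]

lemma shear_embA_succ (i : Fin k) (q : Apol n) :
    shear n k (embA n (k + 1) i.succ q) = relHom n i.succ q := by
  suffices h : (shear n k).toAlgHom.comp (embA n (k + 1) i.succ) = relHom n i.succ from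
    DFunLike.congr_fun h q
  ext1 v
  simp [embA, shear_X, relHom_X]

lemma shear_monomial (m : Fin (k + 1) × Fin (2 * n) →₀ ℕ) :
    shear n k (monomial m 1) =
      relChain (Function.update m.curry 0 0) (monomial (m.curry 0) 1) := by
  rw [monomial_eq_prod_embA, map_prod, relChain_apply, Fin.prod_univ_succ, Fin.prod_univ_succ,
    shear_embA_zero, mul_comm, Function.update_self, monomial_zero', C_1,
    map_one (relHom n 0), one_mul]
  simp only [shear_embA_succ, Function.update_of_ne (Fin.succ_ne_zero _)]

/-- The operator `exp (-ε ∑_{i < j} α_{ij})` as a linear automorphism. -/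
def twistEquiv (n k : ℕ) : Tens n k ≃ₗ[Kc] Tens n k :=
  LinearEquiv.ofLinearMap (twist n (-upperMatrix k)) (twist n (upperMatrix k))
    (by ext1; ext1; simp [← twist_add_apply, twist_zero_apply])
    (by ext1; ext1; simp [← twist_add_apply, twist_zero_apply])

/-- The basis of `A^{⊗(k+1)}` formed by the chains `barChain`. -/
def barBasis (n k : ℕ) : Module.Basis (Fin (k + 1) × Fin (2 * n) →₀ ℕ) Kc (Tens n (k + 1)) :=
  (basisMonomials _ Kc).map ((shear n k).toLinearEquiv.trans (twistEquiv n (k + 1)))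

lemma barBasis_apply (m : Fin (k + 1) × Fin (2 * n) →₀ ℕ) :
    barBasis n k m = barChain (Function.update m.curry 0 0) (monomial (m.curry 0) 1) := by
  rw [barBasis, Module.Basis.map_apply, coe_basisMonomials, barChain_apply, ← shear_monomial]
  rfl

end BarBasis

section BarTransform

variable {n k : ℕ}

/-- The action of `ℂ[ε, ε⁻¹][X_1, …, X_{2n}]` on `A^*` in which `X_v` acts by the transpose of
`[y_v, ·]_⋆`. -/
def dualAction (n : ℕ) : Apol n →ₐ[Kc] Module.End Kc (Module.Dual Kc (Apol n)) :=
  AlgHom.ofLinearMap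
    (Module.Dual.transpose ∘ₗ ((diffOp _ Kc).comp (bracketSymbol n)).toLinearMap)
    (LinearMap.ext fun φ => LinearMap.ext fun p => congrArg φ <|
      DFunLike.congr_fun (map_one ((diffOp _ Kc).comp (bracketSymbol n))) p)
    (fun q r => LinearMap.ext fun φ => LinearMap.ext fun p => congrArg φ <|
      DFunLike.congr_fun
        ((congrArg _ (mul_comm q r)).trans (map_mul ((diffOp _ Kc).comp (bracketSymbol n)) r q)) p)

lemma dualAction_apply (q : Apol n) (φ : Module.Dual Kc (Apol n)) (p : Apol n) :
    dualAction n q φ p = φ (diffOp _ Kc (bracketSymbol n q) p) :=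
  rfl

/-- The values of a functional on the chains `barChain`. -/
def barTransform (n k : ℕ) : Module.Dual Kc (Tens n (k + 1)) →ₗ[Kc]
    BarCochain (Fin (2 * n)) (Module.Dual Kc (Apol n)) (k + 1) :=
  LinearMap.pi fun g => (barChain g).dualMap

lemma barTransform_apply (T : Module.Dual Kc (Tens n (k + 1)))
    (g : Fin (k + 1) → Fin (2 * n) →₀ ℕ) (p : Apol n) :
    barTransform n k T g p = T (barChain g p) :=
  rfl

lemma barTransform_apply_eq_zero (T : Module.Dual Kc (Tens n (k + 1)))
    {g : Fin (k + 1) → Fin (2 * n) →₀ ℕ} (hg : g 0 ≠ 0) : barTransform n k T g = 0 := by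
  rw [barTransform, LinearMap.pi_apply, barChain_eq_zero hg, LinearMap.dualMap_apply',
    LinearMap.comp_zero]

lemma barTransform_injective : Function.Injective (barTransform n k) := fun T U h =>
  (barBasis n k).ext fun m => by
    rw [barBasis_apply, ← barTransform_apply, h, barTransform_apply]

lemma exists_barTransform_eq {f : BarCochain (Fin (2 * n)) (Module.Dual Kc (Apol n)) (k + 1)}
    (hf : ∀ g, g 0 ≠ 0 → f g = 0) : ∃ T, barTransform n k T = f := by
  refine ⟨(barBasis n k).constr Kc fun m =>
    f (Function.update m.curry 0 0) (monomial (m.curry 0) 1), ?_⟩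
  funext g
  by_cases hg : g 0 = 0
  · refine (basisMonomials _ Kc).ext fun μ => ?_
    obtain ⟨m, hm⟩ : ∃ m : Fin (k + 1) × Fin (2 * n) →₀ ℕ,
        (m.curry : Fin (k + 1) → Fin (2 * n) →₀ ℕ) = Function.update g 0 μ :=
      ⟨(Finsupp.equivFunOnFinite.symm (Function.update g 0 μ)).uncurry, by simp⟩
    have hbasis := barBasis_apply m
    rw [hm, Function.update_idem, Function.update_self, ← hg, Function.update_eq_self] at hbasis
    rw [coe_basisMonomials, barTransform_apply, ← hbasis, Module.Basis.constr_basis, hm,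
      Function.update_idem, Function.update_self, ← hg, Function.update_eq_self]
  · rw [hf g hg, barTransform_apply_eq_zero _ hg]

end BarTransform

section HochschildTransform

variable {n k : ℕ}

/-- `dH` as a linear map. -/
def hochschildDiff (n k : ℕ) : Tens n (k + 2) →ₗ[Kc] Tens n (k + 1) :=
  (∑ j : Fin (k + 1), ((-1 : ℤ) ^ j.1) • (rename (factorMap n (mergeIdx k j))).toLinearMap ∘ₗ
      twist n (Matrix.single j.castSucc j.succ 1)) +
    ((-1 : ℤ) ^ (k + 1)) • (rename (factorMap n (cycIdx k))).toLinearMap ∘ₗ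
      twist n (Matrix.single (Fin.last (k + 1)) 0 1)

lemma hochschildDiff_apply (a : Tens n (k + 2)) : hochschildDiff n k a = dH n k a := by
  simp [hochschildDiff, dH, mulAt_eq_rename_twist, mulCyc_eq_rename_twist]

lemma barTransform_comp_hochschildDiff (T : Module.Dual Kc (Tens n (k + 1))) :
    barTransform n (k + 1) (T ∘ₗ hochschildDiff n k) =
      barDiff (dualAction n) (k + 1) (barTransform n k T) := by
  funext g
  refine LinearMap.ext fun p => ?_
  rw [barDiff_eq_sum, barTransform_apply, LinearMap.comp_apply, hochschildDiff_apply, dH_barChain,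
    map_add, map_sum]
  simp only [map_zsmul, LinearMap.add_apply, LinearMap.sum_apply, LinearMap.smul_apply,
    dualAction_apply, barTransform_apply]

lemma mergeAlong_succAbove_self {σ : Type*} (i : Fin (k + 1)) (g : Fin k → σ →₀ ℕ) :
    mergeAlong i.succAbove g i = 0 :=
  Finset.sum_eq_zero fun j _ => if_neg (Fin.succAbove_ne i j)

lemma mergeAlong_succAbove_removeNth {σ : Type*} {i : Fin (k + 1)} {g : Fin (k + 1) → σ →₀ ℕ}
    (hg : g i = 0) : mergeAlong i.succAbove (i.removeNth g) = g := by
  funext j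
  cases j using i.succAboveCases with
  | x => rw [mergeAlong_succAbove_self, hg]
  | p j => simp [mergeAlong, Fin.removeNth]

lemma isNormC_iff_barTransform_mem (T : Module.Dual Kc (Tens n (k + 1))) :
    IsNormC n k T ↔ barTransform n k T ∈ coindCochains Kc Finset.univ k := by
  rw [mem_coindCochains]
  refine ⟨fun h => ⟨fun g ⟨v, _, hv⟩ => barTransform_apply_eq_zero T fun h0 => hv ?_,
    fun i g hg => ?_⟩, fun ⟨_, h⟩ i hi a => ?_⟩
  · rw [h0, Finsupp.zero_apply]
  · obtain _ | k := k
    · exact i.elim0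
    refine LinearMap.ext fun p => ?_
    rw [barTransform_apply, ← mergeAlong_succAbove_removeNth hg,
      ← degMap_barChain _ i.succ_ne_zero, h _ i.succ_ne_zero, LinearMap.zero_apply]
  · obtain ⟨i, rfl⟩ := Fin.exists_succ_eq.2 hi
    obtain _ | k := k
    · exact i.elim0
    suffices hzero : T ∘ₗ (degMap n (k + 1) i.succ).toLinearMap = 0 from
      DFunLike.congr_fun hzero a
    refine barTransform_injective ?_
    rw [map_zero]
    funext g
    refine LinearMap.ext fun p => ?_
    refine (congrArg T (degMap_barChain _ i.succ_ne_zero p g)).trans ?_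
    rw [← barTransform_apply, h i _ (mergeAlong_succAbove_self _ g)]
    rfl

lemma isHochCobd_iff_barTransform_mem (T : Module.Dual Kc (Tens n (k + 1))) :
    IsHochCobd n k T ↔
      barTransform n k T ∈ coindCoboundaries (dualAction n) Finset.univ k := by
  cases k with
  | zero =>
    change ⇑T = ⇑(0 : Module.Dual Kc (Tens n 1)) ↔ barTransform n 0 T ∈ (⊥ : Submodule Kc _)
    rw [Submodule.mem_bot, map_eq_zero_iff _ barTransform_injective, DFunLike.coe_fn_eq]
  | succ k =>
    change (∃ U, IsNormC n k U ∧ ∀ a, T a = U (dH n k a)) ↔ _ ∈ Submodule.map _ _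
    have hU (U : Module.Dual Kc (Tens n (k + 1))) : (∀ a, T a = U (dH n k a)) ↔
        barDiff (dualAction n) (k + 1) (barTransform n k U) = barTransform n (k + 1) T := by
      rw [← barTransform_comp_hochschildDiff, barTransform_injective.eq_iff, eq_comm,
        LinearMap.ext_iff]
      simp only [LinearMap.comp_apply, hochschildDiff_apply]
    simp only [hU, isNormC_iff_barTransform_mem, Submodule.mem_map]
    refine ⟨fun ⟨U, hmem, hdiff⟩ => ⟨_, hmem, hdiff⟩, fun ⟨f, hmem, hdiff⟩ => ?_⟩
    obtain ⟨U, rfl⟩ := exists_barTransform_eq (f := f) fun g hg =>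
      hmem.1 g ((Finsupp.ne_iff.1 hg).imp fun v hv => ⟨Finset.mem_univ v, hv⟩)
    exact ⟨U, hmem, hdiff⟩

lemma dH_cocycle_iff_barTransform (T : Module.Dual Kc (Tens n (k + 1))) :
    (∀ a, T (dH n k a) = 0) ↔ barDiff (dualAction n) (k + 1) (barTransform n k T) = 0 := by
  rw [← barTransform_comp_hochschildDiff, map_eq_zero_iff _ barTransform_injective,
    LinearMap.ext_iff]
  simp only [LinearMap.comp_apply, hochschildDiff_apply, LinearMap.zero_apply]

end HochschildTransform

/-! ### The dual of the Weyl algebra as a coefficient module -/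

section DualModule

variable {n : ℕ}

lemma isUnit_eps : IsUnit eps :=
  LaurentPolynomial.isUnit_T 1

lemma isUnit_conjSign (v : Fin (2 * n)) : IsUnit (conjSign v) :=
  .of_mul_eq_one _ (conjSign_mul_self v)

lemma isUnit_natCast {m : ℕ} (hm : m ≠ 0) : IsUnit (m : Kc) := by
  rw [← map_natCast (algebraMap ℂ Kc)]
  exact (isUnit_iff_ne_zero.2 (Nat.cast_ne_zero.2 hm)).map _

lemma dualAction_X_monomial (v : Fin (2 * n)) (φ : Module.Dual Kc (Apol n))
    (μ : Fin (2 * n) →₀ ℕ) :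
    dualAction n (X v) φ (monomial μ 1) = eps * conjSign v * μ (conjVar v) *
      φ (monomial (μ - Finsupp.single (conjVar v) 1) 1) := by
  rw [dualAction_apply, bracketSymbol_X, diffOp_mul_apply, diffOp_C_apply, diffOp_X_apply,
    pderiv_monomial, one_mul, map_smul, smul_eq_mul, mul_assoc _ (μ _ : Kc),
    ← smul_eq_mul (μ _ : Kc), ← map_smul, smul_monomial, smul_eq_mul, mul_one]

lemma dualAction_X_monomial_add_single (v : Fin (2 * n)) (φ : Module.Dual Kc (Apol n))
    (μ : Fin (2 * n) →₀ ℕ) :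
    dualAction n (X v) φ (monomial (μ + Finsupp.single (conjVar v) 1) 1) =
      eps * conjSign v * (μ (conjVar v) + 1 : ℕ) * φ (monomial μ 1) := by
  rw [dualAction_X_monomial, add_tsub_cancel_right, Finsupp.add_apply, Finsupp.single_eq_same]

lemma isUnit_eps_mul_conjSign_mul (v : Fin (2 * n)) (m : ℕ) :
    IsUnit (eps * conjSign v * (m + 1 : ℕ)) :=
  (isUnit_eps.mul (isUnit_conjSign v)).mul (isUnit_natCast m.succ_ne_zero)

lemma exists_dualAction_X_eq {v : Fin (2 * n)} {φ : Module.Dual Kc (Apol n)}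
    (h : ∀ μ : Fin (2 * n) →₀ ℕ, μ (conjVar v) = 0 → φ (monomial μ 1) = 0) :
    ∃ ψ, dualAction n (X v) ψ = φ := by
  refine ⟨(basisMonomials (Fin (2 * n)) Kc).constr Kc fun μ =>
    Ring.inverse (eps * conjSign v * (μ (conjVar v) + 1 : ℕ)) *
      φ (monomial (μ + Finsupp.single (conjVar v) 1) 1),
    (basisMonomials (Fin (2 * n)) Kc).ext fun μ => ?_⟩
  rw [coe_basisMonomials]
  by_cases hμ : μ (conjVar v) = 0
  · rw [dualAction_X_monomial, hμ, h μ hμ, Nat.cast_zero, mul_zero, zero_mul]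
  · obtain ⟨ν, rfl⟩ : ∃ ν, μ = ν + Finsupp.single (conjVar v) 1 :=
      ⟨μ - Finsupp.single (conjVar v) 1, (tsub_add_cancel_of_le <|
        Finsupp.single_le_iff.2 (Nat.one_le_iff_ne_zero.2 hμ)).symm⟩
    rw [dualAction_X_monomial_add_single, ← congrFun (coe_basisMonomials _ _) ν,
      Module.Basis.constr_basis, Ring.mul_inverse_cancel_left _ _ (isUnit_eps_mul_conjSign_mul _ _)]

lemma mem_varImage_dualAction {S : Finset (Fin (2 * n))} {φ : Module.Dual Kc (Apol n)} :
    φ ∈ varImage (dualAction n) S ↔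
      ∀ μ : Fin (2 * n) →₀ ℕ, (∀ v ∈ S, μ (conjVar v) = 0) → φ (monomial μ 1) = 0 := by
  classical
  induction S using Finset.induction_on generalizing φ with
  | empty =>
    simp only [varImage, Finset.notMem_empty, not_false_eq_true, iSup_neg, iSup_bot,
      Submodule.mem_bot, IsEmpty.forall_iff, implies_true, true_imp_iff]
    exact ⟨fun h μ => by rw [h, LinearMap.zero_apply],
      fun h => (basisMonomials (Fin (2 * n)) Kc).ext fun μ => by
        rw [coe_basisMonomials, h, LinearMap.zero_apply]⟩
  | insert v S _ ih =>
    simp only [mem_varImage_insert, ih, Finset.forall_mem_insert]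
    constructor
    · rintro ⟨ψ, χ, hχ, rfl⟩ μ ⟨hv, hS⟩
      rw [LinearMap.add_apply, hχ μ hS, dualAction_X_monomial, hv, Nat.cast_zero, mul_zero,
        zero_mul, add_zero]
    · intro h
      let χ : Module.Dual Kc (Apol n) := (basisMonomials (Fin (2 * n)) Kc).constr Kc fun μ =>
        if μ (conjVar v) = 0 then φ (monomial μ 1) else 0
      have hχ (μ) : χ (monomial μ 1) = if μ (conjVar v) = 0 then φ (monomial μ 1) else 0 :=
        (congrArg χ (congrFun (coe_basisMonomials _ _) μ).symm).trans
          (Module.Basis.constr_basis _ _ _ _)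
      obtain ⟨ψ, hψ⟩ := exists_dualAction_X_eq (v := v) (φ := φ - χ) fun μ hμ => by
        rw [LinearMap.sub_apply, hχ, if_pos hμ, sub_self]
      refine ⟨ψ, χ, fun μ hS => ?_, by rw [hψ, sub_add_cancel]⟩
      rw [hχ]
      exact ite_eq_right_iff.2 fun hv => h μ ⟨hv, hS⟩

lemma mem_varImage_dualAction_of_X_smul {S : Finset (Fin (2 * n))} {v : Fin (2 * n)} (hv : v ∉ S)
    {φ : Module.Dual Kc (Apol n)} (h : dualAction n (X v) φ ∈ varImage (dualAction n) S) :
    φ ∈ varImage (dualAction n) S := by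
  refine mem_varImage_dualAction.2 fun μ hμ => ?_
  have hshift := mem_varImage_dualAction.1 h (μ + Finsupp.single (conjVar v) 1) fun w hw => by
    rw [Finsupp.add_apply, hμ w hw, zero_add, Finsupp.single_eq_of_ne]
    exact fun heq => hv (conjVar_involutive.injective heq ▸ hw)
  rwa [dualAction_X_monomial_add_single, (isUnit_eps_mul_conjSign_mul _ _).mul_right_eq_zero]
    at hshift

/-- The augmentation `p ↦ p(0)`, whose class spans `A^* ⧸ ∑_v X_v A^*`. -/
def evalZero (n : ℕ) : Module.Dual Kc (Apol n) :=
  lcoeff Kc 0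

lemma evalZero_apply (p : Apol n) : evalZero n p = constantCoeff p :=
  rfl

lemma sub_smul_evalZero_mem_varImage (φ : Module.Dual Kc (Apol n)) :
    φ - φ 1 • evalZero n ∈ varImage (dualAction n) Finset.univ := by
  refine mem_varImage_dualAction.2 fun μ hμ => ?_
  obtain rfl : μ = 0 := Finsupp.ext fun v => by
    rw [← conjVar_involutive v, hμ _ (Finset.mem_univ _), Finsupp.zero_apply]
  rw [monomial_zero', C_1, LinearMap.sub_apply, LinearMap.smul_apply, evalZero_apply,
    map_one constantCoeff, smul_eq_mul, mul_one, sub_self]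

theorem exists_coindCocycles_generator (n : ℕ) :
    ∃ Θ, (∀ f ∈ coindCocycles (dualAction n) Finset.univ (2 * n),
        ∃ c : Kc, f - c • Θ ∈ coindCoboundaries (dualAction n) Finset.univ (2 * n)) ∧
      ∀ k ≠ 2 * n, coindCocycles (dualAction n) Finset.univ k ≤
        coindCoboundaries (dualAction n) Finset.univ k := by
  obtain ⟨θ, hθ⟩ : ∃ θ, IsFundamental (dualAction n) Finset.univ (2 * n) θ := by
    have h := exists_isFundamental (ρ := dualAction n)
      (fun _ _ hv _ => mem_varImage_dualAction_of_X_smul hv) Finset.univ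
    rwa [Finset.card_univ, Fintype.card_fin] at h
  refine ⟨θ (evalZero n), fun f hf => ?_, hθ.acyclic⟩
  obtain ⟨φ, hφ⟩ := hθ.exists_sub_mem f hf
  have hsub := add_mem hφ ((hθ.mem_coboundaries_iff _).2 (sub_smul_evalZero_mem_varImage φ))
  exact ⟨φ 1, by rwa [map_sub, map_smul, sub_add_sub_cancel] at hsub⟩

end DualModule

/-! ### The cochain `τ` as an integral -/

section Simplex

variable {m : ℕ}

/-- The simplex `{0 ≤ u_1 ≤ ⋯ ≤ u_m ≤ t}`; `Δ_m` is the case `t = 1`. -/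
def scaledSimplex (m : ℕ) (t : ℝ) : Set (Fin m → ℝ) :=
  {u | (∀ i, 0 ≤ u i ∧ u i ≤ t) ∧ ∀ i j : Fin m, i ≤ j → u i ≤ u j}

lemma isCompact_scaledSimplex (m : ℕ) (t : ℝ) : IsCompact (scaledSimplex m t) := by
  have hinter : scaledSimplex m t = Set.Icc 0 (fun _ => t) ∩ {u | Monotone u} := by
    ext u
    simp only [scaledSimplex, Set.mem_ofPred_eq, Set.mem_inter_iff, Set.mem_Icc, Pi.le_def,
      forall_and, Monotone]
    rfl
  rw [hinter]
  exact isCompact_Icc.inter_right isClosed_monotone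

lemma isCompact_simplexSet (m : ℕ) : IsCompact (simplexSet m) :=
  isCompact_scaledSimplex m 1

lemma snoc_mem_scaledSimplex {t x : ℝ} {u : Fin m → ℝ} :
    (Fin.snoc u x : Fin (m + 1) → ℝ) ∈ scaledSimplex (m + 1) t ↔
      x ∈ Set.Icc 0 t ∧ u ∈ scaledSimplex m x := by
  simp only [scaledSimplex, Set.mem_ofPred_eq, Fin.forall_fin_succ', Fin.snoc_castSucc,
    Fin.snoc_last, Fin.castSucc_le_castSucc_iff, Fin.le_last, true_imp_iff,
    (Fin.castSucc_lt_last _).not_ge, false_imp_iff, Set.mem_Icc]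
  exact ⟨fun ⟨⟨h0, hx⟩, hle, _⟩ => ⟨hx, fun i => ⟨(h0 i).1, (hle i).2⟩, fun i => (hle i).1⟩,
    fun ⟨hx, hu, hmono⟩ => ⟨⟨fun i => ⟨(hu i).1, (hu i).2.trans hx.2⟩, hx⟩,
      fun i => ⟨hmono i, (hu i).2⟩, fun _ => trivial, le_rfl⟩⟩

lemma setIntegral_scaledSimplex_succ {E : Type*} [NormedAddCommGroup E] [NormedSpace ℝ E]
    {f : (Fin (m + 1) → ℝ) → E} (hf : Continuous f) {t : ℝ} (ht : 0 ≤ t) :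
    ∫ u in scaledSimplex (m + 1) t, f u =
      ∫ x in (0)..t, ∫ u in scaledSimplex m x, f (Fin.snoc u x) := by
  classical
  let e := (MeasurableEquiv.piFinSuccAbove (fun _ : Fin (m + 1) => ℝ) (Fin.last m)).symm
  have he (x : ℝ) (u : Fin m → ℝ) : e (x, u) = Fin.snoc u x := Fin.insertNth_last' _ _
  have hpres : MeasurePreserving e :=
    (volume_preserving_piFinSuccAbove (fun _ => ℝ) (Fin.last m)).symm
  have hmeas := (isCompact_scaledSimplex (m + 1) t).measurableSet
  have hint : Integrable ((e ⁻¹' scaledSimplex (m + 1) t).indicator (f ∘ e)) (volume.prod volume) :=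
    (integrable_indicator_iff (e.measurable hmeas)).mpr <|
      (hpres.integrableOn_comp_preimage e.measurableEmbedding).mpr <|
        hf.continuousOn.integrableOn_compact (isCompact_scaledSimplex _ _)
  rw [← hpres.setIntegral_preimage_emb e.measurableEmbedding,
    ← integral_indicator (e.measurable hmeas), Measure.volume_eq_prod]
  refine (integral_prod _ hint).trans ?_
  rw [intervalIntegral.integral_of_le ht, ← integral_Icc_eq_integral_Ioc,
    ← integral_indicator measurableSet_Icc]
  refine integral_congr_ae (.of_forall fun x => ?_)
  have hmem (u : Fin m → ℝ) : (x, u) ∈ e ⁻¹' scaledSimplex (m + 1) t ↔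
      x ∈ Set.Icc 0 t ∧ u ∈ scaledSimplex m x := by
    rw [Set.mem_preimage, he, snoc_mem_scaledSimplex]
  by_cases hx : x ∈ Set.Icc 0 t
  · dsimp only
    rw [Set.indicator_of_mem hx, ← integral_indicator (isCompact_scaledSimplex m x).measurableSet]
    simp only [Set.indicator_apply, hmem, hx, true_and, Function.comp_apply, he]
  · simp only [Set.indicator_apply, hmem, hx, false_and, if_false, integral_zero]

lemma partialSum_last {M : Type*} [AddCommMonoid M] (b : Fin m → M) :
    Fin.partialSum b (Fin.last m) = ∑ i, b i := by
  simp [Fin.partialSum, List.take_of_length_le, List.sum_ofFn]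

lemma setIntegral_scaledSimplex_prod_pow (a : Fin m → ℕ) {t : ℝ} (ht : 0 ≤ t) :
    ∫ u in scaledSimplex m t, ∏ i, u i ^ a i =
      t ^ (∑ i, (a i + 1)) *
        ∏ i : Fin m, ((Fin.partialSum (fun j => a j + 1) i.succ : ℕ) : ℝ)⁻¹ := by
  induction m generalizing t with
  | zero =>
    have huniv : scaledSimplex 0 t = Set.univ := Set.eq_univ_of_forall fun _ =>
      ⟨fun i => i.elim0, fun i => i.elim0⟩
    simp [huniv, Measure.real, volume_pi]
  | succ m ih =>
    set d := ∑ i : Fin m, (a i.castSucc + 1) + a (Fin.last m) with hd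
    set c := ∏ i : Fin m,
      ((Fin.partialSum (fun j : Fin m => a j.castSucc + 1) i.succ : ℕ) : ℝ)⁻¹ with hc
    have hinner : Set.EqOn
        (fun x => ∫ u in scaledSimplex m x, ∏ i, (Fin.snoc u x : Fin (m + 1) → ℝ) i ^ a i)
        (fun x => x ^ d * c) (Set.uIcc 0 t) := fun x hx => by
      rw [Set.uIcc_of_le ht] at hx
      simp only [Fin.prod_univ_castSucc, Fin.snoc_castSucc, Fin.snoc_last]
      rw [integral_mul_const, ih _ hx.1, ← hc, hd, pow_add]
      ring
    have hsum : ∑ i, (a i + 1) = d + 1 := by rw [Fin.sum_univ_castSucc, hd, add_assoc]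
    have hinit (i : Fin m) : Fin.partialSum (fun j => a j + 1) i.castSucc.succ =
        Fin.partialSum (fun j : Fin m => a j.castSucc + 1) i.succ :=
      (Fin.partialSum_init i.succ).symm
    rw [setIntegral_scaledSimplex_succ (by fun_prop) ht, intervalIntegral.integral_congr hinner,
      intervalIntegral.integral_mul_const, integral_pow, Fin.prod_univ_castSucc, Fin.succ_last,
      partialSum_last, hsum, zero_pow d.succ_ne_zero, sub_zero]
    simp only [hinit, ← hc]
    push_cast
    ring

lemma setIntegral_simplexSet_prod_pow (a : Fin m → ℕ) :
    ∫ u in simplexSet m, ∏ i, u i ^ a i =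
      ∏ i : Fin m, ((Fin.partialSum (fun j => a j + 1) i.succ : ℕ) : ℝ)⁻¹ := by
  have h := setIntegral_scaledSimplex_prod_pow a zero_le_one
  rwa [one_pow, one_mul] at h

end Simplex

section Tau

variable {n k : ℕ}

/-- The symbol of `∏_{i<j} (ε α_{ij})^{K(i,j)}`. -/
def alphaPowSymbol (n : ℕ) (K : Pairs k → ℕ) : Tens n k :=
  ∏ p : Pairs k, alphaSymbol n p.1.1 p.1.2 ^ K p

lemma diffOp_alphaPowSymbol (K : Pairs k → ℕ) :
    diffOp _ Kc (alphaPowSymbol n K) = eps ^ (∑ p, K p) • alphaPowProd n k K := by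
  have hlist (l : List (Pairs k)) :
      diffOp _ Kc (l.map fun p => alphaSymbol n p.1.1 p.1.2 ^ K p).prod =
        eps ^ (l.map K).sum • (l.map fun p => alphaOp n k p.1.1 p.1.2 ^ K p).prod := by
    induction l with
    | nil => simp
    | cons p l ih =>
      simp only [List.map_cons, List.prod_cons, List.sum_cons, pow_add]
      rw [map_mul (diffOp _ Kc), ih, map_pow, diffOp_alphaSymbol, smul_pow, smul_mul_smul_comm]
  rw [alphaPowSymbol, ← Finset.prod_map_toList, hlist, Finset.sum_map_toList]
  rfl

lemma diffOp_alphaPowSymbol_eq_zero {N : ℕ} {K : Pairs k → ℕ} {p : Pairs k} (hp : N ≤ K p)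
    {a : Tens n k} (ha : a ∈ degreeLT _ Kc N) : diffOp _ Kc (alphaPowSymbol n K) a = 0 := by
  classical
  rw [alphaPowSymbol, ← Finset.prod_erase_mul _ _ (Finset.mem_univ p), diffOp_mul_apply,
    diffOp_pow_eq_zero (constantCoeff_alphaSymbol _ _) hp ha, map_zero]

/-- The symbol of `piOp n`. -/
def piSymbol (n : ℕ) : Tens n (2 * n + 1) :=
  ∑ σ : Equiv.Perm (Fin (2 * n)), (Equiv.Perm.sign σ : ℤ) • ∏ m : Fin (2 * n), X (m.succ, σ m)

lemma diffOp_piSymbol : diffOp _ Kc (piSymbol n) = piOp n := by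
  rw [piOp, piSymbol, map_sum]
  refine Finset.sum_congr rfl fun σ _ => ?_
  rw [map_zsmul, ← List.prod_ofFn, map_list_prod, List.map_ofFn]
  simp only [Function.comp_def, diffOp_X]
  rfl

/-- The exponent `2 u_i - 2 u_j + 1` in the definition of `τ`. -/
def tauExponent {m : ℕ} (u : Fin m → ℝ) (i j : Fin m) : ℝ :=
  2 * u i - 2 * u j + 1

/-- The coefficient of `∏ (ε α_{ij})^{K(i,j)}` in the expansion of `τ`. -/
def tauCoeff (n : ℕ) (K : Pairs (2 * n + 1) → ℕ) : ℂ :=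
  (∫ u in simplexSet (2 * n), ∏ p, tauExponent (cons0 (2 * n) u) p.1.1 p.1.2 ^ K p : ℝ) *
    (∏ p, ((K p).factorial : ℂ))⁻¹

/-- The exponential series of `τ`, cut off at exponents smaller than `N`. -/
def tauTrunc (n N : ℕ) : Tens n (2 * n + 1) →ₗ[Kc] Kc :=
  ∑ K ∈ Fintype.piFinset fun _ : Pairs (2 * n + 1) => Finset.range N,
    algebraMap ℂ Kc (tauCoeff n K) •
      (lcoeff Kc 0 ∘ₗ diffOp _ Kc (alphaPowSymbol n K) ∘ₗ piOp n)

lemma tauTrunc_apply (N : ℕ) (a : Tens n (2 * n + 1)) :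
    tauTrunc n N a = ∑ K ∈ Fintype.piFinset fun _ : Pairs (2 * n + 1) => Finset.range N,
      algebraMap ℂ Kc (tauCoeff n K) *
        constantCoeff (diffOp _ Kc (alphaPowSymbol n K) (piOp n a)) := by
  rw [tauTrunc, LinearMap.sum_apply]
  rfl

lemma tauTrunc_of_le {M N : ℕ} (h : M ≤ N) {a : Tens n (2 * n + 1)} (ha : a ∈ degreeLT _ Kc M) :
    tauTrunc n N a = tauTrunc n M a := by
  rw [tauTrunc_apply, tauTrunc_apply]
  symm
  refine Finset.sum_subset (Fintype.piFinset_subset _ _ fun _ => Finset.range_mono h)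
    fun K _ hK => ?_
  rw [Fintype.mem_piFinset] at hK
  push Not at hK
  obtain ⟨p, hp⟩ := hK
  rw [← diffOp_piSymbol, diffOp_alphaPowSymbol_eq_zero (by simpa using hp)
    (diffOp_mem_degreeLT _ ha), map_zero, mul_zero]

lemma tau_eq_tauTrunc {N : ℕ} {a : Tens n (2 * n + 1)} (ha : a ∈ degreeLT _ Kc N) :
    tau n a = tauTrunc n N a := by
  have htau : tau n a = tauTrunc n (a.totalDegree + 1) a := by
    rw [tau, tauTrunc_apply]
    refine Finset.sum_congr rfl fun K _ => ?_
    rw [diffOp_alphaPowSymbol, LinearMap.smul_apply, constantCoeff_smul, smul_eq_mul, smul_eq_mul,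
      ← mul_assoc]
    rfl
  rw [htau]
  rcases le_total N (a.totalDegree + 1) with h | h
  · exact tauTrunc_of_le h ha
  · exact (tauTrunc_of_le h (mem_degreeLT_succ_totalDegree a)).symm

/-- The cochain `tau n` as a linear functional. -/
def tauLinear (n : ℕ) : Module.Dual Kc (Tens n (2 * n + 1)) where
  toFun := tau n
  map_add' a b := by
    obtain ⟨N, ha, hb⟩ := exists_mem_degreeLT a b
    rw [tau_eq_tauTrunc ha, tau_eq_tauTrunc hb, tau_eq_tauTrunc (add_mem ha hb), map_add]
  map_smul' c a := by
    obtain ⟨N, ha, -⟩ := exists_mem_degreeLT a 0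
    rw [tau_eq_tauTrunc ha, tau_eq_tauTrunc (Submodule.smul_mem _ c ha), map_smul]
    rfl

/-- The coefficients of `∑_{i<j} (2 u_i - 2 u_j + 1) α_{ij}`. -/
def tauMatrix {m : ℕ} (u : Fin m → ℝ) : Matrix (Fin m) (Fin m) Kc :=
  Matrix.of fun i j => if i < j then algebraMap ℂ Kc (tauExponent u i j) else 0

lemma moyalSymbol_tauMatrix (u : Fin k → ℝ) : moyalSymbol n k (tauMatrix u) =
    ∑ p : Pairs k, algebraMap ℂ Kc (tauExponent u p.1.1 p.1.2) • alphaSymbol n p.1.1 p.1.2 := by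
  let f (p : Fin k × Fin k) : Tens n k :=
    algebraMap ℂ Kc (tauExponent u p.1 p.2) • alphaSymbol n p.1 p.2
  have hsub : ∑ p : Pairs k, f p = ∑ p, if p.1 < p.2 then f p else 0 := by
    rw [← Finset.sum_filter]
    exact (Finset.sum_subtype _ (by simp) f).symm
  refine Eq.trans ?_ hsub.symm
  rw [moyalSymbol_apply, Fintype.sum_prod_type]
  refine Finset.sum_congr rfl fun i _ => Finset.sum_congr rfl fun j _ => ?_
  rw [tauMatrix, Matrix.of_apply, ite_smul, zero_smul]

lemma constantCoeff_twist_tauMatrix (u : Fin k → ℝ) {N : ℕ} {a : Tens n k}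
    (ha : a ∈ degreeLT _ Kc N) : constantCoeff (twist n (tauMatrix u) a) =
      ∑ K ∈ Fintype.piFinset fun _ : Pairs k => Finset.range N,
        algebraMap ℂ Kc
            ((∏ p, tauExponent u p.1.1 p.1.2 ^ K p : ℝ) * (∏ p, ((K p).factorial : ℂ))⁻¹) *
          constantCoeff (diffOp _ Kc (alphaPowSymbol n K) a) := by
  rw [twist, moyalSymbol_tauMatrix,
    expOp_sum_smul_apply _ (fun _ => constantCoeff_alphaSymbol _ _) ha, map_sum]
  refine Finset.sum_congr rfl fun K _ => ?_
  rw [constantCoeff_smul, smul_eq_mul, alphaPowSymbol]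
  congr 1
  simp only [Algebra.smul_def, IsScalarTower.algebraMap_apply ℚ ℂ Kc, map_prod, map_mul, map_pow,
    map_inv₀, map_natCast, Complex.ofReal_prod, Complex.ofReal_pow, ← Finset.prod_inv_distrib]
  exact mul_comm _ _

lemma continuous_cons0 (m : ℕ) : Continuous (cons0 m) :=
  continuous_const.finCons continuous_id

lemma apply_tau_eq_integral (ℓ : Kc →ₗ[ℂ] ℂ) (a : Tens n (2 * n + 1)) :
    ℓ (tau n a) = ∫ u in simplexSet (2 * n),
      ℓ (constantCoeff (twist n (tauMatrix (cons0 (2 * n) u)) (piOp n a))) := by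
  have ha := mem_degreeLT_succ_totalDegree a
  have hℓ (z : ℂ) (x : Kc) : ℓ (algebraMap ℂ Kc z * x) = z * ℓ x := by
    rw [← Algebra.smul_def, map_smul, smul_eq_mul]
  have hpi : piOp n a ∈ degreeLT _ Kc (a.totalDegree + 1) :=
    diffOp_piSymbol (n := n) ▸ diffOp_mem_degreeLT _ ha
  have hcont (K : Pairs (2 * n + 1) → ℕ) : Continuous fun u : Fin (2 * n) → ℝ =>
      ∏ p, tauExponent (cons0 (2 * n) u) p.1.1 p.1.2 ^ K p := by
    have := continuous_cons0 (2 * n)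
    unfold tauExponent
    fun_prop
  rw [tau_eq_tauTrunc ha, tauTrunc_apply, map_sum]
  simp only [constantCoeff_twist_tauMatrix _ hpi, map_sum, hℓ]
  rw [integral_finsetSum]
  · refine Finset.sum_congr rfl fun K _ => ?_
    rw [integral_mul_const, integral_mul_const, tauCoeff]
    congr 2
    exact integral_ofReal.symm
  · intro K _
    exact (((Complex.continuous_ofReal.comp (hcont K)).mul continuous_const).mul
      continuous_const).continuousOn.integrableOn_compact (isCompact_simplexSet _)

end Tau

section Evaluation

variable {n k : ℕ}

lemma twist_tauMatrix_twist_upperMatrix (u : Fin k → ℝ) (a : Tens n k) :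
    twist n (tauMatrix u) (twist n (-upperMatrix k) a) =
      twist n (rowMatrix fun i => algebraMap ℂ Kc (u i)) a := by
  have hexp (i j : Fin k) : algebraMap ℂ Kc (tauExponent u i j) =
      2 * algebraMap ℂ Kc (u i) - 2 * algebraMap ℂ Kc (u j) + 1 := by
    rw [tauExponent, ← map_ofNat (algebraMap ℂ Kc), ← map_mul, ← map_mul, ← map_sub,
      ← map_one (algebraMap ℂ Kc), ← map_add]
    push_cast
    rfl
  rw [← twist_add_apply]
  refine congrArg (fun t : Module.End Kc (Tens n k) => t a) (twist_congr fun i j => ?_)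
  simp only [Matrix.add_apply, Matrix.neg_apply, tauMatrix, upperMatrix, rowMatrix, Matrix.of_apply,
    hexp]
  rcases lt_trichotomy i j with h | rfl | h
  · simp only [h, h.not_gt, if_true, if_false]
    ring
  · simp
  · simp only [h, h.not_gt, if_true, if_false]
    ring

lemma twist_tauMatrix_piOp_barChain (u : Fin (2 * n + 1) → ℝ) (p : Apol n)
    (g : Fin (2 * n + 1) → Fin (2 * n) →₀ ℕ) :
    twist n (tauMatrix u) (piOp n (barChain g p)) =
      twist n (rowMatrix fun i => algebraMap ℂ Kc (u i)) (piOp n (relChain g p)) := by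
  rw [← diffOp_piSymbol, barChain_apply, ← twist_tauMatrix_twist_upperMatrix]
  exact congrArg _ (expOp_diffOp_comm (constantCoeff_moyalSymbol _) _ _).symm

lemma pderiv_relHom {i : Fin (k + 1)} (hi : i ≠ 0) (v : Fin (2 * n)) (j : Fin (k + 1))
    (q : Apol n) :
    pderiv (i, v) (relHom n j q) = if j = i then relHom n j (pderiv v q) else 0 := by
  induction q using MvPolynomial.induction_on with
  | C c => simp [relHom]
  | add p q hp hq =>
    simp only [map_add, hp, hq]
    split_ifs <;> simp
  | mul_X q w hq =>
    have hX : pderiv (i, v) (relHom n j (X w)) =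
        if j = i then relHom n j (pderiv v (X w)) else 0 := by
      have hzero : pderiv (R := Kc) (i, v) (X (0, w)) = 0 :=
        pderiv_X_of_ne fun h => hi (congrArg Prod.fst h).symm
      rw [relHom_X, map_sub, hzero, sub_zero, pderiv_X, pderiv_X]
      simp only [Pi.single_apply, Prod.mk.injEq, ite_and]
      split_ifs <;> simp
    rw [map_mul (relHom n j), pderiv_mul, hq, hX, pderiv_mul]
    split_ifs
    · simp only [map_add, map_mul (relHom n j)]
    · simp

lemma pderiv_embA_zero {i : Fin (k + 1)} (hi : i ≠ 0) (v : Fin (2 * n)) (p : Apol n) :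
    pderiv (i, v) (embA n (k + 1) 0 p) = 0 := by
  rw [embA, pderiv_rename_eq_sum, Finset.filter_false_of_mem, Finset.sum_empty, map_zero]
  exact fun _ _ h => hi (congrArg Prod.fst h).symm

lemma pderiv_relChain {i : Fin (k + 1)} (hi : i ≠ 0) (v : Fin (2 * n)) (p : Apol n)
    (g : Fin (k + 1) → Fin (2 * n) →₀ ℕ) : pderiv (i, v) (relChain g p) =
      (g i v : Kc) • relChain (g - Pi.single i (Finsupp.single v 1)) p := by
  have hother (S : Finset (Fin (k + 1))) (hS : i ∉ S) :
      pderiv (i, v) ((∏ j ∈ S, relHom n j (monomial (g j) 1)) * embA n (k + 1) 0 p) = 0 := by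
    induction S using Finset.cons_induction with
    | empty => simp [pderiv_embA_zero hi]
    | cons j S hj ih =>
      rw [Finset.mem_cons, not_or] at hS
      rw [Finset.prod_cons, mul_assoc, pderiv_mul, ih hS.2, pderiv_relHom hi, if_neg (Ne.symm hS.1)]
      simp
  have hrest : ∏ j ∈ Finset.univ.erase i,
      relHom n j (monomial ((g - Pi.single i (Finsupp.single v 1) : Fin (k + 1) → _) j) 1) =
        ∏ j ∈ Finset.univ.erase i, relHom n j (monomial (g j) 1) :=
    Finset.prod_congr rfl fun j hj => by
      rw [Pi.sub_apply, Pi.single_eq_of_ne (Finset.ne_of_mem_erase hj), tsub_zero]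
  rw [relChain_apply, relChain_apply, ← Finset.mul_prod_erase _ _ (Finset.mem_univ i),
    ← Finset.mul_prod_erase _ _ (Finset.mem_univ i), hrest, mul_assoc, pderiv_mul,
    hother _ (Finset.notMem_erase _ _), mul_zero, add_zero, pderiv_relHom hi, if_pos rfl,
    pderiv_monomial, Pi.sub_apply, Pi.single_eq_same, mul_assoc, ← smul_mul_assoc, ← map_smul,
    smul_monomial, smul_eq_mul, mul_one, one_mul]

lemma diffOp_prod_X_relChain (σ : Fin k → Fin (2 * n)) (p : Apol n)
    (g : Fin (k + 1) → Fin (2 * n) →₀ ℕ) (S : Finset (Fin k)) :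
    diffOp _ Kc (∏ j ∈ S, X (j.succ, σ j)) (relChain g p) =
      (∏ j ∈ S, (g j.succ (σ j) : Kc)) •
        relChain (g - ∑ j ∈ S, Pi.single j.succ (Finsupp.single (σ j) 1)) p := by
  induction S using Finset.cons_induction with
  | empty => simp
  | cons j S hj ih =>
    have hlow : (g - ∑ i ∈ S, Pi.single i.succ (Finsupp.single (σ i) 1) :
        Fin (k + 1) → Fin (2 * n) →₀ ℕ) j.succ = g j.succ := by
      rw [Pi.sub_apply, Finset.sum_apply, Finset.sum_eq_zero, tsub_zero]
      refine fun i hi => Pi.single_eq_of_ne (fun h => hj ?_) _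
      rwa [Fin.succ_injective _ h]
    rw [Finset.prod_cons, diffOp_mul_apply, ih, map_smul, diffOp_X_apply,
      pderiv_relChain j.succ_ne_zero, hlow, smul_smul, Finset.prod_cons, Finset.sum_cons,
      tsub_tsub, add_comm (Pi.single _ _), mul_comm (g j.succ (σ j) : Kc)]

lemma constantCoeff_twist_rowMatrix_relChain {w : Fin (k + 1) → Kc} (hw : w 0 = 0) (p : Apol n)
    (g : Fin (k + 1) → Fin (2 * n) →₀ ℕ) :
    constantCoeff (twist n (rowMatrix w) (relChain g p)) =
      (∏ i, w i ^ (g i).degree) * dualAction n (monomial (∑ i, g i) 1) (evalZero n) p := by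
  have hprod (S : Finset (Fin (k + 1))) :
      rename (factorMap n (0 : Fin (k + 1) → Fin 1)) (twist n (rowMatrix w)
        ((∏ i ∈ S, relHom n i (monomial (g i) 1)) * embA n (k + 1) 0 p)) =
      (∏ i ∈ S, w i ^ (g i).degree) •
        bracketOp n 1 (monomial (∑ i ∈ S, g i) 1) (embA n 1 0 p) := by
    induction S using Finset.cons_induction with
    | empty =>
      rw [Finset.prod_empty, one_mul, twist_embA, rename_factorMap_embA]
      simp
    | cons i S hi ih =>
      rw [Finset.prod_cons, mul_assoc, rename_twist_rowMatrix_relHom_monomial_mul rfl rfl, ih, hw,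
        sub_zero, map_smul, smul_smul, Finset.prod_cons, Finset.sum_cons, ← Module.End.mul_apply,
        ← map_mul (bracketOp n _), monomial_mul, mul_one]
  rw [← constantCoeff_rename (factorMap n (0 : Fin (k + 1) → Fin 1)), relChain_apply, hprod,
    constantCoeff_smul, bracketOp_embA, embA, constantCoeff_rename]
  rfl

end Evaluation

/-! ### The cochain `τ` on the adapted basis -/

section Determinant

variable {n m : ℕ}

/-- The matrix whose columns are the exponents of `m` monomials in `m` variables. -/
def exponentMatrix (h : Fin m → Fin m →₀ ℕ) : Matrix (Fin m) (Fin m) Kc :=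
  .of fun v j => (h j v : Kc)

/-- The product of the inverses of the partial sums of `b`: the integral of
`∏ i, u_i ^ (b i - 1)` over the simplex. -/
def simplexWeight (b : Fin m → ℕ) : Kc :=
  algebraMap ℂ Kc (∏ i : Fin m, ((Fin.partialSum b i.succ : ℕ) : ℂ)⁻¹)

/-- The exponent of the product of all variables. -/
def allOnes (m : ℕ) : Fin m →₀ ℕ :=
  ∑ v, Finsupp.single v 1

/-- The functional `p ↦ ([y_1, ·]^{μ_1} ⋯ [y_{2n}, ·]^{μ_{2n}} p)(0)` on the Weyl algebra. -/
def bracketEval (n : ℕ) (μ : Fin (2 * n) →₀ ℕ) : Module.Dual Kc (Apol n) :=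
  dualAction n (monomial μ 1) (evalZero n)

lemma dualAction_monomial_bracketEval (μ ν : Fin (2 * n) →₀ ℕ) :
    dualAction n (monomial μ 1) (bracketEval n ν) = bracketEval n (μ + ν) := by
  rw [bracketEval, bracketEval, ← Module.End.mul_apply, ← map_mul (dualAction n), monomial_mul,
    mul_one]

lemma cons_zero_sub_sum_single (σ : Fin m → Fin m) (h : Fin m → Fin m →₀ ℕ) :
    (Fin.cons 0 h - ∑ j : Fin m, Pi.single j.succ (Finsupp.single (σ j) 1) :
      Fin (m + 1) → Fin m →₀ ℕ) = Fin.cons 0 fun j => h j - Finsupp.single (σ j) 1 := by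
  funext i
  rw [Pi.sub_apply, Finset.sum_apply]
  cases i using Fin.cases with
  | zero => rw [Fin.cons_zero, zero_tsub, Fin.cons_zero]
  | succ i =>
    rw [Fin.cons_succ, Finset.sum_eq_single i, Pi.single_eq_same, Fin.cons_succ]
    · exact fun j _ hj => Pi.single_eq_of_ne (fun h => hj (Fin.succ_injective _ h).symm) _
    · exact fun h => absurd (Finset.mem_univ i) h

lemma constantCoeff_twist_prod_X_relChain (u : Fin (2 * n) → ℝ) (σ : Fin (2 * n) → Fin (2 * n))
    (p : Apol n) (h : Fin (2 * n) → Fin (2 * n) →₀ ℕ) :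
    constantCoeff (twist n (rowMatrix fun i => algebraMap ℂ Kc (cons0 (2 * n) u i))
        (diffOp _ Kc (∏ j, X (j.succ, σ j)) (relChain (Fin.cons 0 h) p))) =
      algebraMap ℂ Kc ((∏ j, u j ^ (h j - Finsupp.single (σ j) 1).degree : ℝ) : ℂ) *
        ((∏ j, (h j (σ j) : Kc)) * bracketEval n (∑ j, (h j - Finsupp.single (σ j) 1)) p) := by
  have hw : algebraMap ℂ Kc (cons0 (2 * n) u 0) = 0 := by
    rw [cons0, Fin.cons_zero, Complex.ofReal_zero, map_zero]
  rw [diffOp_prod_X_relChain, map_smul, constantCoeff_smul, cons_zero_sub_sum_single,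
    constantCoeff_twist_rowMatrix_relChain hw, Fin.prod_univ_succ, Fin.sum_univ_succ]
  simp only [Fin.cons_zero, map_zero, pow_zero, one_mul, zero_add, cons0, Fin.cons_succ,
    Complex.ofReal_prod, Complex.ofReal_pow, map_prod, map_pow, smul_eq_mul]
  exact mul_left_comm (∏ j, (h j (σ j) : Kc)) _ _

lemma constantCoeff_twist_tauMatrix_barChain (u : Fin (2 * n) → ℝ) (p : Apol n)
    (h : Fin (2 * n) → Fin (2 * n) →₀ ℕ) :
    constantCoeff (twist n (tauMatrix (cons0 (2 * n) u)) (piOp n (barChain (Fin.cons 0 h) p))) =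
      ∑ σ : Equiv.Perm (Fin (2 * n)),
        algebraMap ℂ Kc ((∏ j, u j ^ (h j - Finsupp.single (σ j) 1).degree : ℝ) : ℂ) *
          ((Equiv.Perm.sign σ : ℤ) • ((∏ j, (h j (σ j) : Kc)) *
            bracketEval n (∑ j, (h j - Finsupp.single (σ j) 1)) p)) := by
  rw [twist_tauMatrix_piOp_barChain, ← diffOp_piSymbol, piSymbol, map_sum, LinearMap.sum_apply,
    map_sum, map_sum]
  refine Finset.sum_congr rfl fun σ _ => ?_
  rw [map_zsmul, LinearMap.smul_apply, map_zsmul, map_zsmul,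
    constantCoeff_twist_prod_X_relChain u σ p h, mul_smul_comm]

lemma ofReal_setIntegral_simplexSet_prod_pow (a : Fin m → ℕ) :
    algebraMap ℂ Kc ((∫ u in simplexSet m, ∏ j, u j ^ a j : ℝ) : ℂ) =
      simplexWeight fun j => a j + 1 := by
  rw [setIntegral_simplexSet_prod_pow, simplexWeight]
  push_cast
  rfl

lemma tau_barChain (p : Apol n) (h : Fin (2 * n) → Fin (2 * n) →₀ ℕ) :
    tau n (barChain (Fin.cons 0 h) p) = ∑ σ : Equiv.Perm (Fin (2 * n)),
      simplexWeight (fun j => (h j - Finsupp.single (σ j) 1).degree + 1) *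
        ((Equiv.Perm.sign σ : ℤ) • ((∏ j, (h j (σ j) : Kc)) *
          bracketEval n (∑ j, (h j - Finsupp.single (σ j) 1)) p)) := by
  have hsmul (ℓ : Kc →ₗ[ℂ] ℂ) (z : ℂ) (x : Kc) : ℓ (algebraMap ℂ Kc z * x) = z * ℓ x := by
    rw [← Algebra.smul_def, map_smul, smul_eq_mul]
  rw [← sub_eq_zero, ← Module.forall_dual_apply_eq_zero_iff ℂ]
  intro ℓ
  rw [map_sub, sub_eq_zero, apply_tau_eq_integral]
  simp_rw [constantCoeff_twist_tauMatrix_barChain, ← ofReal_setIntegral_simplexSet_prod_pow,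
    map_sum, hsmul]
  rw [integral_finsetSum]
  · refine Finset.sum_congr rfl fun σ _ => ?_
    rw [integral_mul_const]
    exact congrArg (· * _) integral_ofReal
  · intro σ _
    have hcont : Continuous fun u : Fin (2 * n) → ℝ =>
        ∏ j, u j ^ (h j - Finsupp.single (σ j) 1).degree := by fun_prop
    exact ((Complex.continuous_ofReal.comp hcont).mul
      continuous_const).continuousOn.integrableOn_compact (isCompact_simplexSet _)

lemma degree_sub_single_add_one {ι : Type*} {μ : ι →₀ ℕ} {v : ι} (hv : μ v ≠ 0) :
    (μ - Finsupp.single v 1).degree + 1 = μ.degree := by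
  have h := congrArg Finsupp.degree (Finsupp.sub_add_single_one_cancel hv)
  rwa [map_add, Finsupp.degree_single] at h

lemma sum_single_perm (σ : Equiv.Perm (Fin m)) :
    ∑ j, Finsupp.single (σ j) 1 = allOnes m :=
  Equiv.sum_comp σ fun v => Finsupp.single v 1

lemma sum_sub_single_perm (σ : Equiv.Perm (Fin m)) {h : Fin m → Fin m →₀ ℕ}
    (hσ : ∀ j, h j (σ j) ≠ 0) :
    ∑ j, (h j - Finsupp.single (σ j) 1) = ∑ j, h j - allOnes m := by
  apply eq_tsub_of_add_eq
  rw [← sum_single_perm σ, ← Finset.sum_add_distrib]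
  exact Finset.sum_congr rfl fun j _ => Finsupp.sub_add_single_one_cancel (hσ j)

theorem barTransform_tauLinear_cons (h : Fin (2 * n) → Fin (2 * n) →₀ ℕ) :
    barTransform n (2 * n) (tauLinear n) (Fin.cons 0 h) =
      ((exponentMatrix h).det * simplexWeight fun j => (h j).degree) •
        bracketEval n (∑ j, h j - allOnes (2 * n)) := by
  refine LinearMap.ext fun p => ?_
  rw [LinearMap.smul_apply, smul_eq_mul, Matrix.det_apply', Finset.sum_mul, Finset.sum_mul]
  refine (tau_barChain p h).trans (Finset.sum_congr rfl fun σ _ => ?_)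
  have hcol : ∏ j, exponentMatrix h (σ j) j = ∏ j, (h j (σ j) : Kc) := rfl
  rw [hcol]
  by_cases hσ : ∀ j, h j (σ j) ≠ 0
  · simp only [degree_sub_single_add_one (hσ _), sum_sub_single_perm σ hσ, zsmul_eq_mul]
    ring
  · obtain ⟨j, hj⟩ := not_forall_not.mp hσ
    have hprod : ∏ j, (h j (σ j) : Kc) = 0 :=
      Finset.prod_eq_zero (Finset.mem_univ j) (by rw [hj, Nat.cast_zero])
    rw [hprod, zero_mul, smul_zero, mul_zero, mul_zero, zero_mul, zero_mul]

end Determinant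

/-! ### `τ` is a cocycle -/

section Contraction

variable {m : ℕ}

lemma mergeAlong_mergeIdx {σ : Type*} (j : Fin (m + 1)) (g : Fin (m + 2) → σ →₀ ℕ) :
    mergeAlong (mergeIdx m j) g = Fin.contractNth j.castSucc (· + ·) g := by
  funext t
  rw [mergeAlong, Fin.sum_univ_succAbove _ j.castSucc, mergeIdx_eq_predAbove]
  simp only [Fin.predAbove_castSucc_self, Fin.predAbove_succAbove, Finset.sum_ite_eq',
    Finset.mem_univ, if_true]
  by_cases hjt : j = t
  · subst hjt
    rw [if_pos rfl, Fin.contractNth_apply_of_eq _ _ _ _ rfl, Fin.succAbove_castSucc_self]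
  · rw [if_neg hjt, zero_add, Fin.contractNth_apply_of_ne]
    exact fun h => hjt (Fin.ext h)

lemma contractNth_succ_cons {α : Type*} (j : Fin (m + 1)) (op : α → α → α) (a : α)
    (g : Fin (m + 1) → α) :
    Fin.contractNth j.succ op (Fin.cons a g : Fin (m + 2) → α) =
      Fin.cons a (Fin.contractNth j op g) := by
  funext t
  cases t using Fin.cases with
  | zero => simp [Fin.contractNth]
  | succ t => simp [Fin.contractNth]

lemma contractNth_last {α : Type*} (op : α → α → α) (g : Fin (m + 1) → α) :
    Fin.contractNth (Fin.last m) op g = Fin.init g :=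
  funext fun t => Fin.contractNth_apply_of_lt _ _ _ _ t.isLt

lemma contractNth_castSucc_eq_update {α : Type*} (i : Fin m) (op : α → α → α)
    (g : Fin (m + 1) → α) :
    Fin.contractNth i.castSucc op g =
      Function.update (g ∘ i.castSucc.succAbove) i (op (g i.castSucc) (g i.succ)) := by
  funext t
  by_cases hit : t = i
  · subst hit
    rw [Fin.contractNth_apply_of_eq _ _ _ _ rfl, Function.update_self]
  · rw [Fin.contractNth_apply_of_ne _ _ _ _ fun h => hit (Fin.ext h).symm,
      Function.update_of_ne hit, Function.comp_apply]

lemma update_comp_castSucc_succAbove {α : Type*} (g : Fin (m + 1) → α) (i : Fin m) :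
    Function.update (g ∘ i.castSucc.succAbove) i (g i.castSucc) = g ∘ i.succ.succAbove := by
  funext t
  rcases lt_trichotomy t i with hti | rfl | hti
  · rw [Function.update_of_ne hti.ne, Function.comp_apply, Function.comp_apply,
      Fin.succAbove_castSucc_of_lt _ _ hti, Fin.succAbove_succ_of_le _ _ hti.le]
  · rw [Function.update_self, Function.comp_apply, Fin.succAbove_succ_self]
  · rw [Function.update_of_ne hti.ne', Function.comp_apply, Function.comp_apply,
      Fin.succAbove_castSucc_of_le _ _ hti.le, Fin.succAbove_succ_of_lt _ _ hti]

lemma sum_contractNth_castSucc {M : Type*} [AddCommMonoid M] (i : Fin m) (g : Fin (m + 1) → M) :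
    ∑ t, Fin.contractNth i.castSucc (· + ·) g t = ∑ t, g t := by
  rw [← partialSum_last, ← partialSum_last, Fin.partialSum_contractNth, Function.comp_apply,
    Fin.succ_castSucc, Fin.succAbove_castSucc_of_le _ _ (Fin.le_last _), Fin.succ_last]

lemma barDiff_cons {K D σ : Type*} [CommRing K] [AddCommGroup D] [Module K D]
    (ρ : MvPolynomial σ K →ₐ[K] Module.End K D) (f : BarCochain σ D (m + 1)) (a : σ →₀ ℕ)
    (g : Fin (m + 1) → σ →₀ ℕ) :
    barDiff ρ (m + 1) f (Fin.cons a g) = f (Fin.cons (a + g 0) (Fin.tail g)) -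
      (∑ i : Fin m, (-1 : ℤ) ^ i.1 • f (Fin.cons a (Fin.contractNth i.castSucc (· + ·) g)) +
        (-1 : ℤ) ^ m • ρ (monomial (g (Fin.last m)) 1) (f (Fin.cons a (Fin.init g)))) := by
  have hinit : Fin.init (Fin.cons a g : Fin (m + 2) → σ →₀ ℕ) = Fin.cons a (Fin.init g) := by
    rw [← Fin.cons_self_tail (Fin.init _), Fin.tail_init_eq_init_tail, Fin.tail_cons]
    rfl
  rw [barDiff_eq_sum, Fin.sum_univ_succ, mergeAlong_mergeIdx_zero, hinit, ← Fin.succ_last]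
  simp only [mergeAlong_mergeIdx, ← Fin.succ_castSucc, contractNth_succ_cons, Fin.cons_zero,
    Fin.cons_succ, Fin.cons_one, Fin.tail_cons, Fin.val_zero, pow_zero, one_smul, Fin.val_succ,
    pow_succ, mul_neg_one, neg_smul, Finset.sum_neg_distrib]
  abel

end Contraction

section Telescoping

variable {m : ℕ}

lemma simplexWeight_contractNth (i : Fin (m + 1)) {b : Fin (m + 1) → ℕ}
    (hb : Fin.partialSum b i.succ ≠ 0) :
    simplexWeight (Fin.contractNth i (· + ·) b) =
      ((Fin.partialSum b i.succ : ℕ) : Kc) * simplexWeight b := by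
  have hps (t : Fin m) : Fin.partialSum (Fin.contractNth i (· + ·) b) t.succ =
      Fin.partialSum b (i.succAbove t).succ := by
    rw [Fin.partialSum_contractNth, Function.comp_apply, Fin.succ_succAbove_succ]
  have hne : ((Fin.partialSum b i.succ : ℕ) : ℂ) ≠ 0 := Nat.cast_ne_zero.mpr hb
  rw [simplexWeight, simplexWeight, Fin.prod_univ_succAbove _ i,
    ← map_natCast (algebraMap ℂ Kc), ← RingHom.map_mul, mul_inv_cancel_left₀ hne]
  simp only [hps]

/-- The maximal minor of `exponentMatrix` omitting the column `k`, for `m + 1` monomials. -/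
def exponentMinor (μ : Fin (m + 1) → Fin m →₀ ℕ) (k : Fin (m + 1)) : Kc :=
  (exponentMatrix (μ ∘ k.succAbove)).det

lemma sum_degree_mul_exponentMinor (μ : Fin (m + 1) → Fin m →₀ ℕ) :
    ∑ k : Fin (m + 1), (-1) ^ k.1 * (((μ k).degree : Kc) * exponentMinor μ k) = 0 := by
  have hrow (v : Fin m) :
      ∑ k : Fin (m + 1), (-1) ^ k.1 * ((μ k v : Kc) * exponentMinor μ k) = 0 := by
    let A : Matrix (Fin (m + 1)) (Fin (m + 1)) Kc :=
      .of fun r k => (Fin.cons (μ k v : Kc) fun w => (μ k w : Kc) : Fin (m + 1) → Kc) r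
    have hA : A.det = 0 := Matrix.det_zero_of_row_eq (Fin.succ_ne_zero v).symm rfl
    rw [← hA, Matrix.det_succ_row_zero]
    exact Finset.sum_congr rfl fun k _ => (mul_assoc _ _ _).symm
  simp only [Finsupp.degree_eq_sum, Nat.cast_sum, Finset.sum_mul, Finset.mul_sum]
  rw [Finset.sum_comm]
  exact Finset.sum_eq_zero fun v _ => hrow v

lemma exponentMatrix_update (h : Fin m → Fin m →₀ ℕ) (i : Fin m) (μ : Fin m →₀ ℕ) :
    exponentMatrix (Function.update h i μ) =
      (exponentMatrix h).updateCol i fun v => (μ v : Kc) := by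
  ext1 v j
  rw [Matrix.updateCol_apply, exponentMatrix, Matrix.of_apply, Function.update_apply]
  split_ifs <;> rfl

lemma det_exponentMatrix_contractNth (i : Fin m) (μ : Fin (m + 1) → Fin m →₀ ℕ) :
    (exponentMatrix (Fin.contractNth i.castSucc (· + ·) μ)).det =
      exponentMinor μ i.castSucc + exponentMinor μ i.succ := by
  have hsucc : Function.update (μ ∘ i.castSucc.succAbove) i (μ i.succ) =
      μ ∘ i.castSucc.succAbove := by
    rw [← Fin.succAbove_castSucc_self i]
    exact Function.update_eq_self i (μ ∘ i.castSucc.succAbove)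
  have hadd : (fun v => ((μ i.castSucc + μ i.succ) v : Kc)) =
      (fun v => (μ i.castSucc v : Kc)) + fun v => (μ i.succ v : Kc) :=
    funext fun v => Nat.cast_add _ _
  rw [contractNth_castSucc_eq_update, exponentMatrix_update, hadd, Matrix.det_updateCol_add,
    ← exponentMatrix_update, ← exponentMatrix_update, hsucc, update_comp_castSucc_succAbove]
  exact add_comm _ (exponentMinor μ i.castSucc)

lemma sum_alternating_mul_add {R : Type*} [CommRing R] (d e s : Fin (m + 1) → R) (h0 : s 0 = e 0)
    (hs : ∀ i : Fin m, s i.succ = s i.castSucc + e i.succ) :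
    ∑ i : Fin m, (-1) ^ i.1 * (s i.castSucc * (d i.castSucc + d i.succ)) +
        (-1) ^ m * (s (Fin.last m) * d (Fin.last m)) =
      ∑ k : Fin (m + 1), (-1) ^ k.1 * (e k * d k) := by
  induction m with
  | zero => simp [h0]
  | succ m ih =>
    have hinit := ih (d ∘ Fin.castSucc) (e ∘ Fin.castSucc) (s ∘ Fin.castSucc) h0
      fun i => hs i.castSucc
    simp only [Function.comp_apply] at hinit
    rw [Fin.sum_univ_castSucc (n := m + 1), Fin.sum_univ_castSucc, ← Fin.succ_last, hs]
    simp only [Fin.val_castSucc, Fin.val_succ, Fin.val_last]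
    rw [← hinit]
    simp only [Fin.succ_castSucc, Fin.succ_last]
    ring

lemma det_exponentMatrix_eq_zero {h : Fin m → Fin m →₀ ℕ} {j : Fin m} (hj : h j = 0) :
    (exponentMatrix h).det = 0 :=
  Matrix.det_eq_zero_of_column_eq_zero j fun v => by simp [exponentMatrix, hj]

lemma allOnes_le_sum {h : Fin m → Fin m →₀ ℕ} (hdet : (exponentMatrix h).det ≠ 0) :
    allOnes m ≤ ∑ j, h j := by
  intro v
  have hone : allOnes m v = 1 := by simp [allOnes, Finsupp.finsetSum_apply, Finsupp.single_apply]
  rw [hone, Finsupp.finsetSum_apply, Nat.one_le_iff_ne_zero]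
  intro hrow
  refine hdet (Matrix.det_eq_zero_of_row_eq_zero v fun j => ?_)
  rw [exponentMatrix, Matrix.of_apply, (Finset.sum_eq_zero_iff.mp hrow) j (Finset.mem_univ j),
    Nat.cast_zero]

end Telescoping

section Cocycle

variable {n : ℕ}

lemma barTransform_tauLinear_mem_coindCochains :
    barTransform n (2 * n) (tauLinear n) ∈ coindCochains Kc Finset.univ (2 * n) := by
  refine ⟨fun g ⟨v, _, hv⟩ => barTransform_apply_eq_zero _ fun h => hv (by rw [h]; rfl),
    fun j g hj => ?_⟩
  by_cases h0 : g 0 = 0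
  · rw [← Fin.cons_self_tail g, h0, barTransform_tauLinear_cons, det_exponentMatrix_eq_zero hj,
      zero_mul, zero_smul]
  · exact barTransform_apply_eq_zero _ h0

variable {μ : Fin (2 * n + 1) → Fin (2 * n) →₀ ℕ}

lemma partialSum_degree_ne_zero (hμ : μ 0 ≠ 0) (i : Fin (2 * n + 1)) :
    Fin.partialSum (fun k => (μ k).degree) i.succ ≠ 0 := by
  rw [Fin.partialSum_succ']
  have hdeg : (μ 0).degree ≠ 0 := mt (Finsupp.degree_eq_zero_iff _).mp hμ
  omega

lemma simplexWeight_degree_contractNth (hμ : μ 0 ≠ 0) (i : Fin (2 * n + 1)) :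
    simplexWeight (fun j => (Fin.contractNth i (· + ·) μ j).degree) =
      ((Fin.partialSum (fun k => (μ k).degree) i.succ : ℕ) : Kc) *
        simplexWeight fun k => (μ k).degree := by
  rw [← simplexWeight_contractNth i (partialSum_degree_ne_zero hμ i)]
  exact congrArg simplexWeight
    (Fin.comp_contractNth (f := Finsupp.degree) _ _ (fun a b => map_add Finsupp.degree a b) i μ)

lemma barTransform_tauLinear_contractNth (hμ : μ 0 ≠ 0) (i : Fin (2 * n)) :
    barTransform n (2 * n) (tauLinear n) (Fin.cons 0 (Fin.contractNth i.castSucc (· + ·) μ)) =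
      (((Fin.partialSum (fun k => (μ k).degree) i.castSucc.succ : ℕ) : Kc) *
        (exponentMinor μ i.castSucc + exponentMinor μ i.succ) *
          simplexWeight fun k => (μ k).degree) • bracketEval n (∑ k, μ k - allOnes (2 * n)) := by
  rw [barTransform_tauLinear_cons, det_exponentMatrix_contractNth,
    simplexWeight_degree_contractNth hμ, sum_contractNth_castSucc, mul_left_comm, mul_assoc]

lemma dualAction_barTransform_tauLinear_init (hμ : μ 0 ≠ 0) :
    dualAction n (monomial (μ (Fin.last (2 * n))) 1)
        (barTransform n (2 * n) (tauLinear n) (Fin.cons 0 (Fin.init μ))) =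
      (((Fin.partialSum (fun k => (μ k).degree) (Fin.last (2 * n)).succ : ℕ) : Kc) *
        exponentMinor μ (Fin.last (2 * n)) * simplexWeight fun k => (μ k).degree) •
          bracketEval n (∑ k, μ k - allOnes (2 * n)) := by
  have hminor : (exponentMatrix (Fin.init μ)).det = exponentMinor μ (Fin.last (2 * n)) := by
    rw [exponentMinor, Fin.succAbove_last]
    rfl
  have hweight := simplexWeight_degree_contractNth hμ (Fin.last (2 * n))
  rw [contractNth_last] at hweight
  rw [barTransform_tauLinear_cons, LinearMap.map_smul, dualAction_monomial_bracketEval, hminor,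
    hweight]
  by_cases hzero : exponentMinor μ (Fin.last (2 * n)) = 0
  · rw [hzero, zero_mul, mul_zero, zero_mul, zero_smul, zero_smul]
  · have hsum : μ (Fin.last (2 * n)) + (∑ j, Fin.init μ j - allOnes (2 * n)) =
        ∑ k, μ k - allOnes (2 * n) := by
      rw [← add_tsub_assoc_of_le (allOnes_le_sum (hminor.trans_ne hzero)),
        Fin.sum_univ_castSucc μ, add_comm]
      rfl
    rw [hsum, mul_left_comm, mul_assoc]

lemma barDiff_barTransform_tauLinear_cons_zero (hμ : μ 0 ≠ 0) :
    barDiff (dualAction n) (2 * n + 1) (barTransform n (2 * n) (tauLinear n)) (Fin.cons 0 μ) =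
      0 := by
  have htel := sum_alternating_mul_add (exponentMinor μ) (fun k => ((μ k).degree : Kc))
    (fun k => ((Fin.partialSum (fun k => (μ k).degree) k.succ : ℕ) : Kc))
    (by rw [Fin.partialSum_succ, Fin.castSucc_zero, Fin.partialSum_zero, zero_add])
    fun i => by rw [Fin.partialSum_succ, Fin.succ_castSucc, Nat.cast_add]
  rw [sum_degree_mul_exponentMinor] at htel
  have hfirst : barTransform n (2 * n) (tauLinear n) (Fin.cons (0 + μ 0) (Fin.tail μ)) = 0 :=
    barTransform_apply_eq_zero _ (by rwa [Fin.cons_zero, zero_add])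
  rw [barDiff_cons, hfirst, dualAction_barTransform_tauLinear_init hμ]
  simp only [barTransform_tauLinear_contractNth hμ, ← Int.cast_smul_eq_zsmul Kc, smul_smul]
  rw [← Finset.sum_smul, ← add_smul, zero_sub, neg_eq_zero]
  convert zero_smul Kc _ using 2
  rw [← zero_mul (simplexWeight fun k => (μ k).degree), ← htel, add_mul, Finset.sum_mul]
  push_cast
  simp only [mul_assoc]

theorem barTransform_tauLinear_mem_coindCocycles :
    barTransform n (2 * n) (tauLinear n) ∈ coindCocycles (dualAction n) Finset.univ (2 * n) := by
  have hmem := barTransform_tauLinear_mem_coindCochains (n := n)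
  refine mem_coindCocycles.mpr ⟨hmem, funext fun g => ?_⟩
  obtain ⟨hfirst, hnorm⟩ := barDiff_mem_coindCochains (ρ := dualAction n) hmem
  by_cases h0 : g 0 = 0
  · by_cases h1 : g 1 = 0
    · exact hnorm 0 g h1
    · rw [← Fin.cons_self_tail g, h0]
      exact barDiff_barTransform_tauLinear_cons_zero h1
  · obtain ⟨v, hv⟩ := Finsupp.ne_iff.mp h0
    exact hfirst g ⟨v, Finset.mem_univ v, hv⟩

end Cocycle

/-! ### Pairing with the antisymmetrised cycle -/

section Pairing

variable {K D σ : Type*} [CommRing K] [AddCommGroup D] [Module K D] {m : ℕ}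

/-- The tuple of monomials `(1, X_{w 0}, …, X_{w (m - 1)})`. -/
def varTuple (w : Fin m → σ) : Fin (m + 1) → σ →₀ ℕ :=
  Fin.cons 0 fun j => Finsupp.single (w j) 1

/-- The pairing of bar cochains with the antisymmetrisation of the chain
`1 ⊗ X_{w 0} ⊗ ⋯ ⊗ X_{w (m - 1)}`, where the coefficients `D` are mapped to `K` by `ℓ`. -/
def antisymPairing (ℓ : D →ₗ[K] K) (w : Fin m → σ) : BarCochain σ D (m + 1) →ₗ[K] K :=
  ∑ s : Equiv.Perm (Fin m), (Equiv.Perm.sign s : ℤ) • ℓ ∘ₗ LinearMap.proj (varTuple (w ∘ s))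

lemma antisymPairing_apply (ℓ : D →ₗ[K] K) (w : Fin m → σ) (f : BarCochain σ D (m + 1)) :
    antisymPairing ℓ w f =
      ∑ s : Equiv.Perm (Fin m), (Equiv.Perm.sign s : ℤ) • ℓ (f (varTuple (w ∘ s))) := by
  simp [antisymPairing]

lemma contractNth_comp_swap {M : Type*} [AddCommMonoid M] (i : Fin m) (g : Fin (m + 1) → M) :
    Fin.contractNth i.castSucc (· + ·) (g ∘ Equiv.swap i.castSucc i.succ) =
      Fin.contractNth i.castSucc (· + ·) g := by
  funext t
  by_cases hit : i = t
  · subst hit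
    rw [Fin.contractNth_apply_of_eq _ _ _ _ rfl, Fin.contractNth_apply_of_eq _ _ _ _ rfl,
      Function.comp_apply, Function.comp_apply, Equiv.swap_apply_left, Equiv.swap_apply_right,
      add_comm]
  · have hval : (i.castSucc : ℕ) ≠ t := fun h => hit (Fin.ext h)
    have hsucc : i.castSucc.succAbove t ≠ i.succ := by
      rw [← Fin.succAbove_castSucc_self i]
      exact fun h => hit (Fin.succAbove_right_injective h).symm
    rw [Fin.contractNth_apply_of_ne _ _ _ _ hval, Fin.contractNth_apply_of_ne _ _ _ _ hval,
      Function.comp_apply, Equiv.swap_apply_of_ne_of_ne (Fin.succAbove_ne _ _) hsucc]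

lemma sum_sign_smul_contractNth {A : Type*} [AddCommGroup A] (F : (Fin m → σ →₀ ℕ) → A)
    (w : Fin (m + 1) → σ) (i : Fin m) :
    ∑ s : Equiv.Perm (Fin (m + 1)), (Equiv.Perm.sign s : ℤ) •
      F (Fin.contractNth i.castSucc (· + ·) fun j => Finsupp.single (w (s j)) 1) = 0 := by
  have hne : i.castSucc ≠ i.succ := Fin.castSucc_lt_succ.ne
  refine Finset.sum_involution (fun s _ => s * Equiv.swap i.castSucc i.succ) (fun s _ => ?_)
    (fun s _ _ h => hne (Equiv.swap_eq_one_iff.mp (mul_eq_left.mp h)))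
    (fun s _ => Finset.mem_univ _) fun s _ => by rw [mul_assoc, Equiv.swap_mul_self, mul_one]
  have hswap := contractNth_comp_swap i fun j => Finsupp.single (w (s j)) 1
  rw [Equiv.Perm.sign_mul, Equiv.Perm.sign_swap hne, ← hswap]
  simp [Function.comp_def]

lemma antisymPairing_eq_zero {ρ : MvPolynomial σ K →ₐ[K] Module.End K D} {S : Finset σ}
    {ℓ : D →ₗ[K] K} (hℓ : ∀ v d, ℓ (ρ (X v) d) = 0) {w : Fin m → σ} (hw : ∀ j, w j ∈ S)
    {f : BarCochain σ D (m + 1)} (hf : f ∈ coindCoboundaries ρ S m) :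
    antisymPairing ℓ w f = 0 := by
  cases m with
  | zero => rw [(Submodule.mem_bot K).mp hf, map_zero]
  | succ k =>
    obtain ⟨f, hf, rfl⟩ := hf
    have hdiff (s : Equiv.Perm (Fin (k + 1))) : ℓ (barDiff ρ (k + 1) f (varTuple (w ∘ s))) =
        -∑ i : Fin k, (-1 : ℤ) ^ i.1 • ℓ (f (Fin.cons 0 (Fin.contractNth i.castSucc (· + ·)
          fun j => Finsupp.single (w (s j)) 1))) := by
      have hfirst : f (Fin.cons (0 + Finsupp.single (w (s 0)) 1)
          (Fin.tail fun j => Finsupp.single (w (s j)) 1)) = 0 :=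
        hf.1 _ ⟨w (s 0), hw _, by simp⟩
      have hlast (d : D) : ℓ (ρ (monomial (Finsupp.single (w (s (Fin.last k))) 1) 1) d) = 0 :=
        hℓ _ d
      refine (congrArg ℓ (barDiff_cons ρ f 0 fun j => Finsupp.single (w (s j)) 1)).trans ?_
      rw [hfirst, zero_sub, map_neg, map_add, map_zsmul, hlast, smul_zero, add_zero, map_sum]
      simp only [map_zsmul]
    simp only [antisymPairing_apply, hdiff, smul_neg, Finset.smul_sum, Finset.sum_neg_distrib]
    rw [Finset.sum_comm, neg_eq_zero]
    refine Finset.sum_eq_zero fun i _ => ?_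
    simp only [smul_comm (_ : ℤ) ((-1 : ℤ) ^ i.1)]
    rw [← Finset.smul_sum, sum_sign_smul_contractNth (fun g => ℓ (f (Fin.cons 0 g))), smul_zero]

end Pairing

section Generator

variable {n m : ℕ}

lemma barTransform_mem_coindCocycles (T : Module.Dual Kc (Tens n (m + 1))) (hnorm : IsNormC n m T)
    (hcocycle : ∀ P, T (dH n m P) = 0) :
    barTransform n m T ∈ coindCocycles (dualAction n) Finset.univ m :=
  ⟨(isNormC_iff_barTransform_mem T).mp hnorm, (dH_cocycle_iff_barTransform T).mp hcocycle⟩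

lemma dualAction_X_one (v : Fin (2 * n)) (φ : Module.Dual Kc (Apol n)) :
    dualAction n (X v) φ 1 = 0 := by
  have h := dualAction_X_monomial v φ 0
  rwa [Finsupp.zero_apply, Nat.cast_zero, mul_zero, zero_mul] at h

lemma bracketEval_zero_one : bracketEval n 0 1 = 1 := by
  rw [bracketEval, ← C_apply, C_1, map_one (dualAction n), Module.End.one_apply, evalZero_apply]
  exact map_one constantCoeff

lemma det_exponentMatrix_perm (s : Equiv.Perm (Fin m)) :
    (exponentMatrix fun j => Finsupp.single (s j) 1).det = (Equiv.Perm.sign s : ℤ) := by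
  have hperm : (exponentMatrix fun j => Finsupp.single (s j) 1) =
      (s.permMatrix Kc).transpose := by
    ext1 v j
    simp [exponentMatrix, Finsupp.single_apply, Equiv.Perm.permMatrix, PEquiv.toMatrix_apply]
  rw [hperm, Matrix.det_transpose, Matrix.det_permutation]

lemma isUnit_simplexWeight {b : Fin m → ℕ} (hb : ∀ i : Fin m, Fin.partialSum b i.succ ≠ 0) :
    IsUnit (simplexWeight b) :=
  (isUnit_iff_ne_zero.mpr (Finset.prod_ne_zero_iff.mpr fun i _ =>
    inv_ne_zero (Nat.cast_ne_zero.mpr (hb i)))).map (algebraMap ℂ Kc)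

lemma sign_smul_barTransform_tauLinear_varTuple (s : Equiv.Perm (Fin (2 * n))) :
    (Equiv.Perm.sign s : ℤ) • barTransform n (2 * n) (tauLinear n) (varTuple s) 1 =
      simplexWeight fun _ : Fin (2 * n) => 1 := by
  rw [varTuple, barTransform_tauLinear_cons, det_exponentMatrix_perm, sum_single_perm, tsub_self,
    LinearMap.smul_apply, bracketEval_zero_one, smul_eq_mul, mul_one, zsmul_eq_mul, ← mul_assoc,
    ← Int.cast_mul, ← Units.val_mul, Int.units_mul_self, Units.val_one, Int.cast_one, one_mul]
  simp only [Finsupp.degree_single]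

/-- The antisymmetrised pairing in top degree, with coefficients evaluated at `1`. -/
def topPairing (n : ℕ) :
    BarCochain (Fin (2 * n)) (Module.Dual Kc (Apol n)) (2 * n + 1) →ₗ[Kc] Kc :=
  antisymPairing (Module.Dual.eval Kc (Apol n) 1) id

lemma topPairing_eq_zero {f} (hf : f ∈ coindCoboundaries (dualAction n) Finset.univ (2 * n)) :
    topPairing n f = 0 :=
  antisymPairing_eq_zero dualAction_X_one (fun j => Finset.mem_univ j) hf

lemma isUnit_topPairing_tauLinear :
    IsUnit (topPairing n (barTransform n (2 * n) (tauLinear n))) := by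
  have hsum : topPairing n (barTransform n (2 * n) (tauLinear n)) =
      ∑ _s : Equiv.Perm (Fin (2 * n)), simplexWeight fun _ : Fin (2 * n) => 1 :=
    (antisymPairing_apply _ _ _).trans
      (Finset.sum_congr rfl fun s _ => sign_smul_barTransform_tauLinear_varTuple s)
  rw [hsum, Finset.sum_const, nsmul_eq_mul]
  refine (isUnit_natCast (Finset.card_ne_zero_of_mem (Finset.mem_univ 1))).mul
    (isUnit_simplexWeight fun i => ?_)
  rw [Fin.partialSum_succ]
  omega

end Generator

lemma existsUnique_sub_smul_mem {R M : Type*} [CommRing R] [AddCommGroup M] [Module R M]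
    {B : Submodule R M} {ℓ : M →ₗ[R] R} (hℓ : ∀ x ∈ B, ℓ x = 0) {Θ τ f : M} (hτ : IsUnit (ℓ τ))
    (hτΘ : ∃ a : R, τ - a • Θ ∈ B) (hfΘ : ∃ b : R, f - b • Θ ∈ B) :
    ∃! c : R, f - c • τ ∈ B := by
  have hval {x y : M} {c : R} (h : x - c • y ∈ B) : ℓ x = c * ℓ y := by
    rw [← sub_eq_zero, ← smul_eq_mul, ← map_smul, ← map_sub, hℓ _ h]
  obtain ⟨a, ha⟩ := hτΘ
  obtain ⟨b, hb⟩ := hfΘ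
  obtain ⟨a, rfl⟩ := isUnit_of_mul_isUnit_left (hval ha ▸ hτ)
  refine ⟨b * ↑a⁻¹, ?_, fun c hc => ?_⟩
  · convert sub_mem hb (B.smul_mem (b * ↑a⁻¹) ha) using 1
    rw [smul_sub, smul_smul, Units.inv_mul_cancel_right]
    abel
  · rw [← hτ.mul_left_inj, ← hval hc, hval hb, hval ha, mul_assoc, Units.inv_mul_cancel_left]

end WeylHochschild

open WeylHochschild

/-- the Hochschild cohomology `HH^k(A^pol_{2n}; (A^pol_{2n})^*)` (cohomology of
the `K`-dual of the normalized Hochschild chain complex) vanishes for `k ≠ 2n`, and in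
degree `2n` it is a free `K`-module of rank one generated by the class of `τ_{2n}`. -/
theorem hochschild_cohomology_weyl (n : ℕ) :
    -- τ_{2n} is a normalized cocycle:
    (∀ i : Fin (2*n+1), i ≠ 0 → ∀ P : Tens n (2*n), tau n (degMap n (2*n) i P) = 0) ∧
    (∀ P : Tens n (2*n+2), tau n (dH n (2*n) P) = 0) ∧
    -- vanishing in degrees k ≠ 2n:
    (∀ k : ℕ, k ≠ 2*n → ∀ T : Tens n (k+1) →ₗ[Kc] Kc, IsNormC n k T →
      (∀ P : Tens n (k+2), T (dH n k P) = 0) → IsHochCobd n k (fun P => T P)) ∧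
    -- degree 2n: free of rank one, generated by the class of τ_{2n}:
    (∀ T : Tens n (2*n+1) →ₗ[Kc] Kc, IsNormC n (2*n) T →
      (∀ P : Tens n (2*n+2), T (dH n (2*n) P) = 0) →
      ∃! c : Kc, IsHochCobd n (2*n) (fun P => T P - c • tau n P)) := by
  obtain ⟨Θ, hΘ, hvanish⟩ := exists_coindCocycles_generator n
  have hτ := barTransform_tauLinear_mem_coindCocycles (n := n)
  refine ⟨(isNormC_iff_barTransform_mem (tauLinear n)).mpr hτ.1,
    (dH_cocycle_iff_barTransform (tauLinear n)).mpr hτ.2, fun k hk T hnorm hcocycle => ?_,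
    fun T hnorm hcocycle => ?_⟩
  · exact (isHochCobd_iff_barTransform_mem T).mpr <|
      hvanish k hk (barTransform_mem_coindCocycles T hnorm hcocycle)
  · have hcobd (c : Kc) : IsHochCobd n (2*n) (fun P => T P - c • tau n P) ↔
        barTransform n (2*n) T - c • barTransform n (2*n) (tauLinear n) ∈
          coindCoboundaries (dualAction n) Finset.univ (2*n) := by
      rw [← map_smul, ← map_sub]
      exact isHochCobd_iff_barTransform_mem (T - c • tauLinear n)
    simp only [hcobd]
    exact existsUnique_sub_smul_mem (fun _ => topPairing_eq_zero) isUnit_topPairing_tauLinear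
      (hΘ _ hτ) (hΘ _ (barTransform_mem_coindCocycles T hnorm hcocycle))

end
end

section
/- For 1 ≤ i ≤ 2n+1 let π^i_{2n} ∈ End(A^{⊗(2n+2)}) be π^i_{2n} = ∑_{σ∈S_{2n}} sign(σ) Id⊗∂_{y_{σ(1)}}⊗⋯⊗∂_{y_{σ(i−1)}}⊗Id⊗∂_{y_{σ(i)}}⊗⋯⊗∂_{y_{σ(2n)}} (identity on the tensor factors in positions 0 and i, partial derivatives on the remaining 2n factors). Then for all a_0,…,a_{2n+1} ∈ A^pol_{2n}: ∑_{i=1}^{2n+1} (−1)^i ∑_{l=0, l≠i}^{2n+1} μ_{2n+1}( α_{li} π^i_{2n}(a_0⊗⋯⊗a_{2n+1}) ) = 0. (This is the statement that the form η appearing in the Stokes-theorem proof of the cocycle property of τ_{2n} is closed.) -/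
/-!
Differential operators with constant coefficients commute, so each of them is the image of its
symbol, a polynomial in the entries `X (i, v)` of the generic `(2n+2) × 2n` matrix, under the
algebra homomorphism sending `X (i, v)` to `∂_{y_v}` in the `i`-th factor. The symbol of `α_{li}` is
half the symplectic form of rows `l` and `i`, and the symbol of `π^i` is the maximal minor of the
rows `1, …, 2n+1` omitting row `i`. The maximal minors of a `(2n+1) × 2n` matrix, taken with
alternating signs, form a linear relation between its rows; applying to this relation the
symplectic form with the fixed row `l` gives `∑ᵢ (-1)^i α_{li} π^i = 0` for each `l` separately.
The terms with `l = i` may be included since `α_{ii} = 0`.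
-/

noncomputable section
open MvPolynomial MeasureTheory

/-- The operator `π^i_{2n}` on `A^{⊗(2n+2)}` (`i = 1,…,2n+1`, encoded as `i : Fin (2n+1)`
representing position `i+1`): identity on the factors `0` and `i`, and the alternating sum
of the products of derivatives `∂_{y_{σ(1)}},…,∂_{y_{σ(2n)}}` on the remaining factors
(in increasing order of position). -/
def piI (n : ℕ) (i : Fin (2*n+1)) : Module.End Kc (Tens n (2*n+2)) :=
  ∑ σ : Equiv.Perm (Fin (2*n)),
    (Equiv.Perm.sign σ : ℤ) •
      (List.ofFn (fun m : Fin (2*n) => Dop n (2*n+2) ((i.succAbove m).succ) (σ m))).prod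

section SignedMaximalMinors

open Matrix

variable {R N : Type*} [CommRing R] [AddCommMonoid N] [Module R N] {m : ℕ}

/-- The maximal minors of an `(m + 1) × m` matrix with alternating signs, indexed by the omitted
row. They are the coefficients of a linear relation between the rows. -/
def signedMaximalMinors (M : Matrix (Fin (m + 1)) (Fin m) R) (i : Fin (m + 1)) : R :=
  (-1) ^ (i : ℕ) * (M.submatrix i.succAbove id).det

lemma signedMaximalMinors_vecMul (M : Matrix (Fin (m + 1)) (Fin m) R) :
    signedMaximalMinors M ᵥ* M = 0 := by
  ext v
  -- Repeat column `v` in front of `M` and expand the vanishing determinant along it.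
  let A : Matrix (Fin (m + 1)) (Fin (m + 1)) R := of fun i => vecCons (M i v) (M i)
  have hA : A.det = 0 := det_zero_of_column_eq (Fin.succ_ne_zero v).symm fun i => by simp [A]
  have hminor (i : Fin (m + 1)) :
      A.submatrix i.succAbove Fin.succ = M.submatrix i.succAbove id := by
    ext
    simp [A]
  calc (signedMaximalMinors M ᵥ* M) v
      = ∑ i : Fin (m + 1), (-1) ^ (i : ℕ) * A i 0 * (A.submatrix i.succAbove Fin.succ).det := by
        simp [vecMul, dotProduct, signedMaximalMinors, hminor, A, mul_right_comm]
    _ = 0 := by rw [← det_succ_column_zero, hA]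

lemma sum_signedMaximalMinors_smul_map (M : Matrix (Fin (m + 1)) (Fin m) R)
    (f : (Fin m → R) →ₗ[R] N) : ∑ i, signedMaximalMinors M i • f (M i) = 0 :=
  calc ∑ i, signedMaximalMinors M i • f (M i)
      = f (signedMaximalMinors M ᵥ* M) := by simp only [vecMul_eq_sum, map_sum, map_smul]
    _ = 0 := by rw [signedMaximalMinors_vecMul, map_zero]

end SignedMaximalMinors

section ConstantCoefficientOperators

variable {σ R A : Type*} [CommSemiring R] [Semiring A] [Algebra R A]

open scoped IsMulCommutative in
/-- Evaluation of polynomials at a family of commuting elements of a possibly noncommutative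
algebra. It is built through the subalgebra they generate, as `aeval` needs a commutative target. -/
def aevalOfCommute (f : σ → A) (hf : ∀ i j, Commute (f i) (f j)) : MvPolynomial σ R →ₐ[R] A :=
  haveI : IsMulCommutative (Algebra.adjoin R (Set.range f)) :=
    Algebra.isMulCommutative_adjoin R <| by
      rintro _ ⟨i, rfl⟩ _ ⟨j, rfl⟩
      exact hf i j
  (Algebra.adjoin R (Set.range f)).val.comp
    (aeval fun i => ⟨f i, Algebra.subset_adjoin (Set.mem_range_self i)⟩)

lemma aevalOfCommute_X (f : σ → A) (hf : ∀ i j, Commute (f i) (f j)) (i : σ) :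
    aevalOfCommute (R := R) f hf (X i) = f i := by
  simp [aevalOfCommute]

lemma pderiv_comm (i j : σ) (p : MvPolynomial σ R) :
    pderiv i (pderiv j p) = pderiv j (pderiv i p) := by
  classical
  ext m
  obtain rfl | hij := eq_or_ne i j
  · rfl
  · simp [coeff_pderiv, hij, hij.symm, add_right_comm, mul_right_comm]

variable (R) in
/-- The differential operator with constant coefficients and symbol a given polynomial: the variable
`X i` acts as `∂ / ∂ X i`. Being an algebra homomorphism, it turns identities between polynomials
into identities between operators. -/
def diffOp : MvPolynomial σ R →ₐ[R] Module.End R (MvPolynomial σ R) :=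
  aevalOfCommute (fun i => (pderiv i).toLinearMap) fun i j => LinearMap.ext (pderiv_comm i j)

lemma diffOp_X (i : σ) : diffOp R (X i) = (pderiv i).toLinearMap :=
  aevalOfCommute_X _ _ i

end ConstantCoefficientOperators

section SymplecticForm

variable (R : Type*) [CommRing R] (n : ℕ)

/-- The standard symplectic form `∑ r, (x_{p_r} y_{q_r} - x_{q_r} y_{p_r})` on `R^{2n}`, in the
coordinates `p_r`, `q_r`. Up to the factor `1/2` it gives the symbol of `alphaOp`. -/
def symplecticForm : LinearMap.BilinForm R (Fin (2 * n) → R) :=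
  ∑ r : Fin n,
    ((LinearMap.mul R R).compl₁₂ (LinearMap.proj (pVar n r)) (LinearMap.proj (qVar n r)) -
      (LinearMap.mul R R).compl₁₂ (LinearMap.proj (qVar n r)) (LinearMap.proj (pVar n r)))

variable {R n}

lemma symplecticForm_apply (x y : Fin (2 * n) → R) :
    symplecticForm R n x y =
      ∑ r : Fin n, (x (pVar n r) * y (qVar n r) - x (qVar n r) * y (pVar n r)) := by
  simp [symplecticForm]

lemma symplecticForm_self (x : Fin (2 * n) → R) : symplecticForm R n x x = 0 := by
  simp [symplecticForm_apply, mul_comm]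

end SymplecticForm

section Symbols

/-- The generic `k × 2n` matrix, with entry `X (i, v)` the symbol of `∂_{y_v}` in the `i`-th tensor
factor. -/
abbrev symbolMatrix (n k : ℕ) : Matrix (Fin k) (Fin (2 * n)) (Tens n k) :=
  Matrix.mvPolynomialX (Fin k) (Fin (2 * n)) Kc

lemma Dop_eq_diffOp (n k : ℕ) (i : Fin k) (v : Fin (2 * n)) :
    Dop n k i v = diffOp Kc (symbolMatrix n k i v) :=
  (diffOp_X (i, v)).symm

lemma alphaOp_eq_diffOp (n k : ℕ) (i j : Fin k) :
    alphaOp n k i j = algebraMap ℂ Kc (1 / 2) •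
      diffOp Kc (symplecticForm (Tens n k) n (symbolMatrix n k i) (symbolMatrix n k j)) := by
  simp only [alphaOp, Dop_eq_diffOp, symplecticForm_apply, map_sum, map_sub, map_mul]

lemma alphaOp_self (n k : ℕ) (i : Fin k) : alphaOp n k i i = 0 := by
  rw [alphaOp_eq_diffOp, symplecticForm_self, map_zero, smul_zero]

lemma piI_eq_diffOp (n : ℕ) (i : Fin (2 * n + 1)) :
    piI n i = diffOp Kc
      (((symbolMatrix n (2 * n + 2)).submatrix Fin.succ id).submatrix i.succAbove id).det := by
  rw [← Matrix.det_transpose, Matrix.det_apply, map_sum]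
  refine Finset.sum_congr rfl fun σ _ => ?_
  rw [Units.smul_def, map_zsmul, ← List.prod_ofFn, map_list_prod, List.map_ofFn]
  simp only [Dop_eq_diffOp]
  rfl

lemma neg_one_pow_smul_piI (n : ℕ) (i : Fin (2 * n + 1)) :
    (-1 : Kc) ^ (i : ℕ) • piI n i = diffOp Kc
      (signedMaximalMinors ((symbolMatrix n (2 * n + 2)).submatrix Fin.succ id) i) := by
  rw [piI_eq_diffOp, ← map_smul, smul_eq_C_mul, map_pow, map_neg, map_one]
  rfl

lemma sum_neg_one_pow_smul_alphaOp_mul_piI (n : ℕ) (l : Fin (2 * n + 2)) :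
    ∑ i : Fin (2 * n + 1),
      (-1 : Kc) ^ (i : ℕ) • (alphaOp n (2 * n + 2) l i.succ * piI n i) = 0 := by
  let M := (symbolMatrix n (2 * n + 2)).submatrix Fin.succ id
  let ω := symplecticForm (Tens n (2 * n + 2)) n (symbolMatrix n (2 * n + 2) l)
  have hterm (i : Fin (2 * n + 1)) :
      (-1 : Kc) ^ (i : ℕ) • (alphaOp n (2 * n + 2) l i.succ * piI n i) =
        algebraMap ℂ Kc (1 / 2) • diffOp Kc (signedMaximalMinors M i • ω (M i)) :=
    calc (-1 : Kc) ^ (i : ℕ) • (alphaOp n (2 * n + 2) l i.succ * piI n i)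
        = alphaOp n (2 * n + 2) l i.succ * (-1 : Kc) ^ (i : ℕ) • piI n i :=
          (mul_smul_comm _ _ _).symm
      _ = (algebraMap ℂ Kc (1 / 2) • diffOp Kc (ω (M i))) *
            diffOp Kc (signedMaximalMinors M i) := by
          rw [alphaOp_eq_diffOp, neg_one_pow_smul_piI]
          rfl
      _ = algebraMap ℂ Kc (1 / 2) • diffOp Kc (signedMaximalMinors M i • ω (M i)) := by
          rw [smul_mul_assoc, ← map_mul, smul_eq_mul, mul_comm (ω (M i))]
  simp_rw [hterm, ← Finset.smul_sum, ← map_sum, sum_signedMaximalMinors_smul_map, map_zero,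
    smul_zero]

end Symbols

/-- `∑_{i=1}^{2n+1} (−1)^i ∑_{l≠i} μ_{2n+1}(α_{li} π^i_{2n}(a)) = 0`
for every `a ∈ A^{⊗(2n+2)}` — the form `η` in the Stokes-theorem proof of the cocycle
property of `τ_{2n}` is closed. -/
theorem eta_closed (n : ℕ) (a : Tens n (2*n+2)) :
    ∑ i : Fin (2*n+1), (-1:Kc)^(i.1+1) •
      ∑ l : Fin (2*n+2),
        (if l ≠ i.succ then constantCoeff (alphaOp n (2*n+2) l i.succ (piI n i a)) else 0)
    = 0 := by
  have drop_ne (i : Fin (2 * n + 1)) (l : Fin (2 * n + 2)) :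
      (if l ≠ i.succ then constantCoeff (alphaOp n (2 * n + 2) l i.succ (piI n i a)) else 0) =
        constantCoeff (alphaOp n (2 * n + 2) l i.succ (piI n i a)) := by
    rw [ite_eq_left_iff, not_not]
    rintro rfl
    rw [alphaOp_self, LinearMap.zero_apply, map_zero]
  simp_rw [drop_ne, Finset.smul_sum]
  rw [Finset.sum_comm]
  refine Finset.sum_eq_zero fun l _ => ?_
  have hsum := congrArg (fun T => -constantCoeff (T a))
    (sum_neg_one_pow_smul_alphaOp_mul_piI n l)
  simpa [pow_succ, LinearMap.sum_apply, constantCoeff_smul] using hsum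

end
end

section
/- Let ψ: ℝ → [−1,1] be the 1-periodic function with ψ(u) = 2u+1 for −1 ≤ u < 0. For j ≥ 2 set I_j = ∫_{[0,1]^j} ψ(u_1−u_2)ψ(u_2−u_3)⋯ψ(u_{j−1}−u_j)ψ(u_j−u_1) du_1⋯du_j. Then I_j = 0 if j is odd, and I_j = 2(πi)^{−j} ∑_{k=1}^∞ k^{−j} = 2(−1)^{j/2} ζ(j)/π^j if j is even. -/
noncomputable section
open MeasureTheory

/-- The `1`-periodic function `ψ : ℝ → [−1,1]` with `ψ(u) = 2u+1` for `−1 ≤ u < 0`. -/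
def psi (u : ℝ) : ℝ := 2 * Int.fract u - 1

/-- `I_j = ∫_{[0,1]^j} ψ(u_1−u_2)ψ(u_2−u_3)⋯ψ(u_j−u_1) du_1⋯du_j`. -/
def Ij (j : ℕ) : ℝ :=
  ∫ u in {u : Fin j → ℝ | ∀ i, 0 ≤ u i ∧ u i ≤ 1}, ∏ i : Fin j, psi (u i - u (finRotate j i))

/-!
The integral `I_j` is the trace of the `j`-th power of the integral operator on `[0, 1]` with kernel
`ψ(x - y)`. Integrating by parts over the period on which `ψ(x - t)` is affine shows that
convolution with `ψ` inverts differentiation, up to the factor `-2`, on periodic functions of mean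
zero. Since `ψ` is twice the first periodized Bernoulli function, the iterated kernels are multiples
of the higher ones, and the trace is a multiple of the Bernoulli number `B_j`. This vanishes for odd
`j ≥ 3`, and Euler's formula expresses it by `ζ(j)` for even `j`.
-/

open Set Topology

section CyclicIntegral

variable {α 𝕜 E : Type*} [MeasurableSpace α] [RCLike 𝕜] [NormedAddCommGroup E] [NormedSpace ℝ E]
  {μ : Measure α}

/-- The kernel of the composition of the integral operators with kernels `K` and `L`. -/
def kernelComp (μ : Measure α) (K L : α → α → 𝕜) (x y : α) : 𝕜 := ∫ t, K x t * L t y ∂μ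

theorem measurable_kernelComp [SFinite μ] {K L : α → α → 𝕜}
    (hK : Measurable (Function.uncurry K)) (hL : Measurable (Function.uncurry L)) :
    Measurable (Function.uncurry (kernelComp μ K L)) := by
  have hKL : Measurable fun q : (α × α) × α ↦ K q.1.1 q.2 * L q.2 q.1.2 := by
    fun_prop
  exact hKL.stronglyMeasurable.integral_prod_right'.measurable

theorem norm_kernelComp_le [IsFiniteMeasure μ] {K L : α → α → 𝕜} {C D : ℝ}
    (hK : ∀ x y, ‖K x y‖ ≤ C) (hL : ∀ x y, ‖L x y‖ ≤ D) (x y : α) :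
    ‖kernelComp μ K L x y‖ ≤ C * D * μ.real univ := by
  refine norm_integral_le_of_norm_le_const (.of_forall fun t ↦ ?_)
  rw [norm_mul]
  exact mul_le_mul (hK x t) (hL t y) (norm_nonneg _) ((norm_nonneg _).trans (hK x t))

theorem integral_pi_eq_integral_integral_snoc [SigmaFinite μ] {n : ℕ} {f : (Fin (n + 1) → α) → E}
    (hf : Integrable f (Measure.pi fun _ ↦ μ)) :
    ∫ u, f u ∂(Measure.pi fun _ ↦ μ) =
      ∫ v : Fin n → α, ∫ x, f (Fin.snoc v x) ∂μ ∂(Measure.pi fun _ ↦ μ) := by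
  have hmp := (measurePreserving_piFinSuccAbove (fun _ : Fin (n + 1) ↦ μ) (Fin.last n)).symm
  have hsnoc (x : α) (v : Fin n → α) :
      (MeasurableEquiv.piFinSuccAbove (fun _ ↦ α) (Fin.last n)).symm (x, v) = Fin.snoc v x :=
    Fin.insertNth_last' x v
  have hint := (hmp.integrable_comp_emb (MeasurableEquiv.measurableEmbedding _)).2 hf
  simp only [← hmp.integral_comp', ← hsnoc]
  exact integral_prod_symm _ hint

theorem integrable_chain_mul [IsFiniteMeasure μ] {K L : α → α → 𝕜} {C D : ℝ}
    (hK : Measurable (Function.uncurry K)) (hKC : ∀ x y, ‖K x y‖ ≤ C)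
    (hL : Measurable (Function.uncurry L)) (hLD : ∀ x y, ‖L x y‖ ≤ D) (n : ℕ) :
    Integrable (fun u : Fin (n + 1) → α ↦
      (∏ i : Fin n, K (u i.castSucc) (u i.succ)) * L (u (Fin.last n)) (u 0))
      (Measure.pi fun _ ↦ μ) := by
  have hmeas : Measurable fun u : Fin (n + 1) → α ↦
      (∏ i : Fin n, K (u i.castSucc) (u i.succ)) * L (u (Fin.last n)) (u 0) := by
    fun_prop
  refine .of_bound hmeas.aestronglyMeasurable (C ^ n * D) (.of_forall fun u ↦ ?_)
  have hprod : ‖∏ i : Fin n, K (u i.castSucc) (u i.succ)‖ ≤ C ^ n := by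
    rw [norm_prod, ← Fin.prod_const]
    exact Finset.prod_le_prod (fun _ _ ↦ norm_nonneg _) fun _ _ ↦ hKC _ _
  rw [norm_mul]
  exact mul_le_mul hprod (hLD _ _) (norm_nonneg _) ((norm_nonneg _).trans hprod)

theorem integral_chain_mul [IsFiniteMeasure μ] {K L : α → α → 𝕜} {C D : ℝ}
    (hK : Measurable (Function.uncurry K)) (hKC : ∀ x y, ‖K x y‖ ≤ C)
    (hL : Measurable (Function.uncurry L)) (hLD : ∀ x y, ‖L x y‖ ≤ D) (n : ℕ) :
    ∫ u : Fin (n + 1) → α, (∏ i : Fin n, K (u i.castSucc) (u i.succ)) * L (u (Fin.last n)) (u 0)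
      ∂(Measure.pi fun _ ↦ μ) = ∫ t, (kernelComp μ K)^[n] L t t ∂μ := by
  induction n generalizing L D with
  | zero =>
    simpa using! (measurePreserving_funUnique μ (Fin 1)).integral_comp' (fun t ↦ L t t)
  | succ n ih =>
    rw [integral_pi_eq_integral_integral_snoc (integrable_chain_mul hK hKC hL hLD (n + 1)),
      Function.iterate_succ_apply,
      ← ih (measurable_kernelComp hK hL) (norm_kernelComp_le hKC hLD)]
    congr with v
    have hzero (x : α) : (Fin.snoc v x : Fin (n + 2) → α) 0 = v 0 :=
      Fin.snoc_castSucc (α := fun _ ↦ α) x v 0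
    simp only [Fin.prod_univ_castSucc, ← Fin.castSucc_succ, Fin.snoc_castSucc, Fin.succ_last,
      Fin.snoc_last, hzero, mul_assoc, integral_const_mul, kernelComp]

theorem integral_prod_finRotate [IsFiniteMeasure μ] {K : α → α → 𝕜} {C : ℝ}
    (hK : Measurable (Function.uncurry K)) (hKC : ∀ x y, ‖K x y‖ ≤ C) (n : ℕ) :
    ∫ u : Fin (n + 1) → α, ∏ i, K (u i) (u (finRotate (n + 1) i)) ∂(Measure.pi fun _ ↦ μ) =
      ∫ t, (kernelComp μ K)^[n] K t t ∂μ := by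
  rw [← integral_chain_mul hK hKC hK hKC n]
  simp only [Fin.prod_univ_castSucc, finRotate_apply, Fin.coeSucc_eq_succ, Fin.last_add_one]

end CyclicIntegral

section PeriodizedBernoulli

theorem periodizedBernoulli_coe (m : ℕ) (x : ℝ) :
    periodizedBernoulli m x = bernoulliFun m (Int.fract x) := by
  simp [periodizedBernoulli, AddCircle.liftIco, AddCircle.coe_equivIco_mk_apply]

theorem periodic_periodizedBernoulli_coe (m : ℕ) :
    Function.Periodic (fun x : ℝ ↦ periodizedBernoulli m x) 1 := fun x ↦ by
  simp

theorem periodizedBernoulli_zero (m : ℕ) : periodizedBernoulli m 0 = bernoulli m := by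
  simpa [bernoulliFun_eval_zero] using periodizedBernoulli_coe m 0

theorem eqOn_periodizedBernoulli_bernoulliFun (m : ℕ) :
    EqOn (fun x : ℝ ↦ periodizedBernoulli m x) (bernoulliFun m) (uIoo 0 1) := fun x hx ↦ by
  rw [uIoo_of_le zero_le_one] at hx
  simp only [periodizedBernoulli_coe, Int.fract_eq_self.2 ⟨hx.1.le, hx.2⟩]

theorem intervalIntegrable_periodizedBernoulli (m : ℕ) (a b : ℝ) :
    IntervalIntegrable (fun x : ℝ ↦ periodizedBernoulli m x) volume a b :=
  (periodic_periodizedBernoulli_coe m).intervalIntegrable₀ one_ne_zero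
    ((intervalIntegrable_bernoulliFun m 0 1).congr_uIoo
      (eqOn_periodizedBernoulli_bernoulliFun m).symm) a b

theorem integral_periodizedBernoulli_of_ne_zero {m : ℕ} (hm : m ≠ 0) (a : ℝ) :
    ∫ x in a..a + 1, periodizedBernoulli m (x : UnitAddCircle) = 0 := by
  rw [(periodic_periodizedBernoulli_coe m).intervalIntegral_add_eq a 0, zero_add]
  exact (intervalIntegral.integral_congr_uIoo (eqOn_periodizedBernoulli_bernoulliFun m)).trans
    (integral_bernoulliFun_eq_zero hm)

theorem hasDerivWithinAt_fract_Ioi (x : ℝ) : HasDerivWithinAt Int.fract 1 (Ioi x) x := by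
  have hfloor : ∀ᶠ t in 𝓝[>] x, ⌊x⌋ = ⌊t⌋ :=
    (tendsto_floor_right_pure_floor x).eventually (Filter.eventually_pure.2 rfl) |>.filter_mono
      (nhdsWithin_mono x Ioi_subset_Ici_self)
  refine ((hasDerivAt_id x).sub_const (⌊x⌋ : ℝ)).hasDerivWithinAt.congr_of_eventuallyEq ?_ rfl
  filter_upwards [hfloor] with t ht
  simp only [id, Int.fract, ht]

theorem hasDerivWithinAt_periodizedBernoulli_Ioi (m : ℕ) (x : ℝ) :
    HasDerivWithinAt (fun x : ℝ ↦ periodizedBernoulli m x)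
      (m * periodizedBernoulli (m - 1) x) (Ioi x) x := by
  simpa [periodizedBernoulli_coe, Function.comp_def] using
    (hasDerivAt_bernoulliFun m (Int.fract x)).comp_hasDerivWithinAt x (hasDerivWithinAt_fract_Ioi x)

end PeriodizedBernoulli

section Psi

theorem measurable_psi : Measurable psi := by
  unfold psi
  fun_prop

theorem norm_psi_le_one (x : ℝ) : ‖psi x‖ ≤ 1 := by
  rw [Real.norm_eq_abs, abs_le, psi]
  constructor <;> linarith [Int.fract_nonneg x, Int.fract_lt_one x]

theorem periodic_psi : Function.Periodic psi 1 := fun x ↦ by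
  simp only [psi, Int.fract_add_one]

theorem psi_eq_two_mul_periodizedBernoulli (x : ℝ) : psi x = 2 * periodizedBernoulli 1 x := by
  rw [periodizedBernoulli_coe, bernoulliFun_one, psi]
  ring

theorem integral_psi_sub_mul_deriv {f f' : ℝ → ℝ} {a : ℝ} (hf : ContinuousOn f (Icc a (a + 1)))
    (hff' : ∀ t ∈ Ioo a (a + 1), HasDerivWithinAt f (f' t) (Ioi t) t)
    (hf' : IntervalIntegrable f' volume a (a + 1)) :
    ∫ t in a..a + 1, psi (a - t) * f' t = 2 * (∫ t in a..a + 1, f t) - (f a + f (a + 1)) := by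
  have ha : a ≤ a + 1 := by linarith
  have hpsi : EqOn (fun t ↦ psi (a - t) * f' t) (fun t ↦ (2 * (a - t) + 1) * f' t)
      (uIoo a (a + 1)) := fun t ht ↦ by
    rw [uIoo_of_le ha] at ht
    have hfract : Int.fract (a - t) = a - t + 1 := by
      rw [← Int.fract_add_one, Int.fract_eq_self]
      constructor <;> linarith [ht.1, ht.2]
    simp only [psi, hfract]
    ring
  have haffine (t : ℝ) : HasDerivAt (fun t ↦ 2 * (a - t) + 1) (-2) t := by
    simpa using (((hasDerivAt_id t).const_sub a).const_mul 2).add_const 1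
  rw [intervalIntegral.integral_congr_uIoo hpsi,
    intervalIntegral.integral_mul_deriv_eq_deriv_mul_of_hasDeriv_right (u' := fun _ ↦ -2)
      (by fun_prop) (by rwa [uIcc_of_le ha]) (fun t _ ↦ (haffine t).hasDerivWithinAt)
      (by rwa [min_eq_left ha, max_eq_right ha]) intervalIntegrable_const hf',
    intervalIntegral.integral_const_mul]
  ring

theorem integral_psi_sub_mul_periodizedBernoulli {m : ℕ} (hm : m ≠ 0) (x : ℝ) :
    ∫ t in x..x + 1, psi (x - t) * periodizedBernoulli m (t : UnitAddCircle) =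
      -2 / (m + 1) * periodizedBernoulli (m + 1) (x : UnitAddCircle) := by
  have hcont : Continuous fun t : ℝ ↦ periodizedBernoulli (m + 1) (t : UnitAddCircle) :=
    (periodizedBernoulli.continuous (by simpa)).comp (AddCircle.continuous_mk' 1)
  have hparts := integral_psi_sub_mul_deriv hcont.continuousOn
    (fun t _ ↦ hasDerivWithinAt_periodizedBernoulli_Ioi (m + 1) t)
    ((intervalIntegrable_periodizedBernoulli m x (x + 1)).const_mul _)
  rw [integral_periodizedBernoulli_of_ne_zero m.succ_ne_zero] at hparts
  simp only [periodic_periodizedBernoulli_coe (m + 1) x, Nat.add_sub_cancel, mul_left_comm (psi _),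
    intervalIntegral.integral_const_mul] at hparts
  have hm' : (m : ℝ) + 1 ≠ 0 := by positivity
  push_cast at hparts
  field_simp
  linarith

theorem kernelComp_psi_periodizedBernoulli {m : ℕ} (hm : m ≠ 0) (x y : ℝ) :
    kernelComp (volume.restrict (Icc 0 1)) (fun s t ↦ psi (s - t))
      (fun s t ↦ periodizedBernoulli m ((s - t : ℝ) : UnitAddCircle)) x y =
      -2 / (m + 1) * periodizedBernoulli (m + 1) ((x - y : ℝ) : UnitAddCircle) := by
  set F : ℝ → ℝ := fun t ↦ psi (x - y - t) * periodizedBernoulli m (t : UnitAddCircle)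
  have hF : Function.Periodic F 1 :=
    (periodic_psi.const_sub (x - y)).mul (periodic_periodizedBernoulli_coe m)
  have hshift (t : ℝ) :
      psi (x - t) * periodizedBernoulli m ((t - y : ℝ) : UnitAddCircle) = F (t - y) := by
    simp only [F, sub_sub_sub_cancel_right]
  calc
    _ = ∫ t in (0 : ℝ)..1, F (t - y) := by
      rw [kernelComp, integral_Icc_eq_integral_Ioc, ← intervalIntegral.integral_of_le zero_le_one]
      simp only [hshift]
    _ = ∫ t in -y..-y + 1, F t := by
      rw [intervalIntegral.integral_comp_sub_right, zero_sub, sub_eq_neg_add]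
    _ = ∫ t in x - y..x - y + 1, F t := hF.intervalIntegral_add_eq _ _
    _ = _ := integral_psi_sub_mul_periodizedBernoulli hm (x - y)

theorem iterate_kernelComp_psi (n : ℕ) (x y : ℝ) :
    (kernelComp (volume.restrict (Icc 0 1)) fun s t ↦ psi (s - t))^[n] (fun s t ↦ psi (s - t)) x y =
      -(-2) ^ (n + 1) / (n + 1).factorial *
        periodizedBernoulli (n + 1) ((x - y : ℝ) : UnitAddCircle) := by
  induction n generalizing x y with
  | zero => simp [psi_eq_two_mul_periodizedBernoulli]
  | succ n ih =>
    have hcomp := kernelComp_psi_periodizedBernoulli n.succ_ne_zero x y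
    rw [kernelComp] at hcomp
    rw [Function.iterate_succ_apply', kernelComp]
    simp only [ih, mul_left_comm (psi _), integral_const_mul, hcomp,
      Nat.factorial_succ (n + 1)]
    push_cast
    field_simp
    ring

theorem Ij_eq_integral_iterate_kernelComp (n : ℕ) :
    Ij (n + 1) = ∫ t in Icc 0 1,
      (kernelComp (volume.restrict (Icc 0 1)) fun s t ↦ psi (s - t))^[n]
        (fun s t ↦ psi (s - t)) t t := by
  have hcube : {u : Fin (n + 1) → ℝ | ∀ i, 0 ≤ u i ∧ u i ≤ 1} = univ.pi fun _ ↦ Icc 0 1 := by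
    ext u
    simp only [mem_ofPred_eq, mem_univ_pi, mem_Icc]
  rw [Ij, hcube, volume_pi, Measure.restrict_pi_pi]
  exact integral_prod_finRotate (K := fun s t ↦ psi (s - t))
    (measurable_psi.comp (measurable_fst.sub measurable_snd)) (fun s t ↦ norm_psi_le_one (s - t)) n

theorem Ij_eq_bernoulli {j : ℕ} (hj : j ≠ 0) :
    Ij j = -(-2) ^ j / j.factorial * bernoulli j := by
  obtain ⟨n, rfl⟩ := Nat.exists_eq_succ_of_ne_zero hj
  rw [Ij_eq_integral_iterate_kernelComp]
  simp [iterate_kernelComp_psi, periodizedBernoulli_zero]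

end Psi

theorem two_pow_mul_bernoulli_div_factorial (k : ℕ) :
    (2 : ℂ) ^ (2 * k) / (2 * k).factorial * bernoulli (2 * k) =
      -(2 * (-1) ^ k * riemannZeta (2 * k) / (Real.pi : ℂ) ^ (2 * k)) := by
  have hpi : (Real.pi : ℂ) ≠ 0 := mod_cast Real.pi_ne_zero
  have hfact : ((2 * k).factorial : ℂ) ≠ 0 := mod_cast (2 * k).factorial_ne_zero
  have hpow : (2 : ℂ) ^ (2 * k - 1 : ℤ) = 2 ^ (2 * k) / 2 := by
    rw [zpow_sub_one₀ two_ne_zero, div_eq_mul_inv]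
    norm_cast
  have hsign : (-1 : ℂ) ^ k * (-1) ^ k = 1 := by rw [← mul_pow]; simp
  rw [riemannZeta_two_mul_nat', hpow, pow_succ (-1 : ℂ)]
  field_simp
  linear_combination -(bernoulli (2 * k) : ℂ) * hsign

theorem pi_mul_I_zpow_neg_two_mul (k : ℕ) :
    ((Real.pi : ℂ) * Complex.I) ^ (-((2 * k : ℕ) : ℤ)) = (-1) ^ k / (Real.pi : ℂ) ^ (2 * k) := by
  rw [zpow_neg, zpow_natCast, mul_pow, pow_mul Complex.I, Complex.I_sq, mul_inv, ← inv_pow (-1 : ℂ),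
    inv_neg_one, div_eq_inv_mul]

/-- `I_j = 0` for odd `j`, and
`I_j = 2(πi)^{−j} ∑_{k≥1} k^{−j} = 2(−1)^{j/2} ζ(j)/π^j` for even `j`. -/
theorem Ij_value (j : ℕ) (hj : 2 ≤ j) :
    (Odd j → Ij j = 0) ∧
    (Even j →
      ((Ij j : ℂ) = 2 * ((Real.pi : ℂ) * Complex.I)^(-(j:ℤ)) * riemannZeta j ∧
       (Ij j : ℂ) = 2 * (-1)^(j/2) * riemannZeta j / (Real.pi : ℂ)^j)) := by
  have hI : Ij j = -(-2) ^ j / j.factorial * bernoulli j := Ij_eq_bernoulli (by lia)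
  refine ⟨fun hodd ↦ by rw [hI, bernoulli_eq_zero_of_odd hodd hj, Rat.cast_zero, mul_zero],
    fun heven ↦ ?_⟩
  obtain ⟨k, rfl⟩ := even_iff_exists_two_mul.1 heven
  have hzeta : (Ij (2 * k) : ℂ) =
      2 * (-1) ^ k * riemannZeta (2 * k : ℕ) / (Real.pi : ℂ) ^ (2 * k) := by
    have hB := two_pow_mul_bernoulli_div_factorial k
    rw [hI]
    push_cast
    rw [heven.neg_pow, neg_div, neg_mul, hB, neg_neg]
  rw [Nat.mul_div_cancel_left k two_pos]
  refine ⟨?_, hzeta⟩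
  rw [hzeta, pi_mul_I_zpow_neg_two_mul]
  ring

end
end
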